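/- Let d ≥ 1, κ > 0, and let v : ℤ^d → ℝ be pointwise nonnegative, of positive type, and in ℓ¹(ℤ^d). If ‖v‖_{ℓ¹(ℤ^d)} is sufficiently small depending on κ, then: (a) for every ν ∈ (0, 1/κ] the infinite-volume limit g^{ν,κ,ν²,∞} := lim_{L→∞} g^{ν,κ,ν²,L} of the specific relative Gibbs potential exists; (b) the infinite-volume limit lim_{L→∞} g^{cl,L} of the classical specific relative Gibbs potential exists; and (c) these limits satisfy lim_{ν→0⁺} g^{ν,κ,ν²,∞} = lim_{L→∞} g^{cl,L}, i.e., lim_{ν→0⁺} lim_{L→∞} g^{ν,κ,ν²,L} = lim_{L→∞} g^{cl,L}. -/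

import Mathlib

/-!
The proof is soft: it uses operator inequalities for the grand canonical ensemble, and no
expansion; any bound on `‖v‖_{ℓ¹}` serves as the smallness threshold.

**Setting.** Over an arbitrary finite set of sites, a Hermitian one-particle matrix `h` and a pair
interaction `w` define the many-body Hamiltonian `Hm h w` and the partition function `Xi h w`. The
torus is the case `h = hT d L κ ν = -(ν/2)Δ + κν`, `w = wT d L λ v = λ v^L(x - y)`, for which
`Xi = XiT`.

**Existence of the quantum limit** (`exists_pressure`). Fill the torus of side `L` with disjoint
boxes of side `M`, each made into a torus of side `M`; the remaining sites keep only their mass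
term. The partition function of this decoupled system is a product (`Xi_decouple`, `Xi_copies`).
The Peierls–Bogoliubov inequality (`peierls`), in the Gibbs state of the torus of side `L`, bounds
the cost of the replacement by expectations of the wrap-around hopping terms of the boxes and of
`v^M(t - t') - v(t - t')` in each box. Translation invariance and the a priori bounds `moments` on
the occupation numbers give `log_XiT_le`: the pressure at side `L` is at most the pressure
at side `M` plus an error that vanishes as `L → ∞` and then `M → ∞`. Hence the pressure converges.
Positive type enters only through `v 0 = 0 → v = 0` (`posType_eq_zero`), so that `v 0 > 0`
controls the mean square occupation of a site.

**Comparison with the classical field.** The Gaussian moments of product states turn the two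
Berezin–Lieb inequalities into bounds on `Xi h w` by integrals over classical fields
(`Xi_upper`, `Xi_lower`). For `λ = ν²`, the substitution `φ ↦ ν^{-1/2} φ` turns these integrals
into the classical partition function, and the ordering errors change the mass by a relative
amount of order `ν`. Hence the quantum and the classical specific potentials differ by at most
`mfErr`, which tends to `0` with `ν` and does not depend on `L` (`abs_gQ_sub_gC`).

**Conclusion.** The uniform bound makes the classical sequence Cauchy and allows the limits `L → ∞`
and `ν → 0⁺` to be exchanged (`exchange_limits`).
-/

open scoped BigOperators ComplexConjugate Classical Real Topology
open MeasureTheory Filter Matrix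

noncomputable section

/-- The discrete torus `Λ = (ℤ/Lℤ)^d`. -/
abbrev Tor (d L : ℕ) := Fin d → ZMod L

/-- Configuration space `Λⁿ`. -/
abbrev Cfg (d L n : ℕ) := Fin n → Tor d L

/-- The unit vector `e j` in the torus. -/
def unitVec (d L : ℕ) (j : Fin d) : Tor d L := fun i => if i = j then 1 else 0

/-- The discrete Laplacian on the torus, as a matrix:
`Δ f (x) = ∑_{j} (f (x + e_j) - f x) + (f (x - e_j) - f x)`. -/
def lap (d L : ℕ) [NeZero L] : Matrix (Tor d L) (Tor d L) ℂ :=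
  fun x y =>
    (∑ j : Fin d,
      ((if y = x + unitVec d L j then (1 : ℂ) else 0)
        + (if y = x - unitVec d L j then (1 : ℂ) else 0)))
      - (if y = x then (2 * d : ℂ) else 0)

/-- Matrix exponential, defined entrywise via the exponential power series. -/
def matExp {m : Type*} [Fintype m] [DecidableEq m] (A : Matrix m m ℂ) : Matrix m m ℂ :=
  Matrix.of fun x y => ∑' (n : ℕ), ((((Nat.factorial n : ℕ) : ℂ)⁻¹) • A ^ n) x y

/-- The Laplacian `Δ_i` acting in the `i`-th variable, summed over `i`, as a matrix on `ℓ²(Λⁿ)`. -/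
def kin (d L n : ℕ) [NeZero L] : Matrix (Cfg d L n) (Cfg d L n) ℂ :=
  fun X Y => ∑ i : Fin n,
    (if ∀ j : Fin n, j ≠ i → X j = Y j then lap d L (X i) (Y i) else 0)

/-- The `n`-particle Hamiltonian
`H_n^{ν,λ} = -(ν/2) ∑_i Δ_i + (λ/2) ∑_{i,j} v(x_i - x_j)` on `ℓ²(Λⁿ)`. -/
def ham (d L : ℕ) [NeZero L] (v : Tor d L → ℝ) (ν lam : ℝ) (n : ℕ) :
    Matrix (Cfg d L n) (Cfg d L n) ℂ :=
  ((-(ν / 2) : ℝ) : ℂ) • kin d L n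
    + Matrix.diagonal (fun X : Cfg d L n =>
        (((lam / 2) * ∑ i : Fin n, ∑ j : Fin n, v (X i - X j) : ℝ) : ℂ))

/-- The symmetrization projection `P_n⁺` as a matrix on `ℓ²(Λⁿ)`. -/
def symProj (d L n : ℕ) [NeZero L] : Matrix (Cfg d L n) (Cfg d L n) ℂ :=
  fun X Y => ((Nat.factorial n : ℕ) : ℂ)⁻¹ * ∑ g : Equiv.Perm (Fin n), (if Y = X ∘ g then (1 : ℂ) else 0)

/-- The grand canonical partition function
`Ξ^{ν,κ,λ} = ∑_{n ≥ 0} Tr(e^{-(H_n^{ν,λ} + κνn)} P_n⁺)`. -/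
def grandXi (d L : ℕ) [NeZero L] (v : Tor d L → ℝ) (ν κ lam : ℝ) : ℂ :=
  ∑' (n : ℕ),
    (matExp (-(ham d L v ν lam n
        + ((κ * ν * n : ℝ) : ℂ) • (1 : Matrix (Cfg d L n) (Cfg d L n) ℂ)))
      * symProj d L n).trace

/-- The relative grand canonical partition function `𝒵^{ν,κ,λ} = Ξ^{ν,κ,λ}/Ξ^{ν,κ,0}`. -/
def relZ (d L : ℕ) [NeZero L] (v : Tor d L → ℝ) (ν κ lam : ℝ) : ℂ :=
  grandXi d L v ν κ lam / grandXi d L v ν κ 0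

/-- The density of the complex Gaussian measure `μ_{(-Δ/2+κ)^{-1}}` with respect to
Lebesgue measure on `ℂ^Λ`. -/
def gaussWeight (d L : ℕ) [NeZero L] (κ : ℝ) (φ : Tor d L → ℂ) : ℂ :=
  (((Real.pi : ℂ) ^ Fintype.card (Tor d L))
      * ((-(1 / 2 : ℂ)) • lap d L + (κ : ℂ) • 1)⁻¹.det)⁻¹
    * Complex.exp (∑ x : Tor d L,
        (starRingEnd ℂ) (φ x) * (((1 / 2 : ℂ) • lap d L - (κ : ℂ) • 1).mulVec φ x))

/-- The interaction weight `e^{-(1/2) ∑_{x,y} |φ(x)|² v(x-y) |φ(y)|²}`. -/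
def intWeight (d L : ℕ) [NeZero L] (v : Tor d L → ℝ) (φ : Tor d L → ℂ) : ℂ :=
  Complex.exp (-(1 / 2 : ℂ) * ∑ x : Tor d L, ∑ y : Tor d L,
    (Complex.normSq (φ x) : ℂ) * ((v (x - y) : ℝ) : ℂ) * (Complex.normSq (φ y) : ℂ))

/-- The relative classical partition function `𝒵^{cl}`. -/
def Zcl (d L : ℕ) [NeZero L] (v : Tor d L → ℝ) (κ : ℝ) : ℂ :=
  ∫ φ : Tor d L → ℂ, gaussWeight d L κ φ * intWeight d L v φ

/-- The discrete Fourier transform of `v` on the torus. -/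
def dft (d L : ℕ) [NeZero L] (v : Tor d L → ℝ) (ξ : Tor d L) : ℂ :=
  ∑ x : Tor d L, ((v x : ℝ) : ℂ) *
    Complex.exp (2 * (Real.pi : ℂ) * Complex.I *
      (∑ j : Fin d, (((ξ j).val : ℕ) : ℂ) * (((x j).val : ℕ) : ℂ)) / (L : ℂ))

/-- `v` is of positive type: its discrete Fourier transform is pointwise a nonnegative real. -/
def IsPosType (d L : ℕ) [NeZero L] (v : Tor d L → ℝ) : Prop :=
  ∀ ξ : Tor d L, (dft d L v ξ).im = 0 ∧ 0 ≤ (dft d L v ξ).re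

/-- The periodized potential `v^L(x) = ∑_{k∈(Lℤ)^d} v(x+k)` on the torus. -/
def perPot (d L : ℕ) [NeZero L] (v : (Fin d → ℤ) → ℝ) (x : Tor d L) : ℝ :=
  ∑' (k : Fin d → ℤ), v (fun j => ((x j).val : ℤ) + (L : ℤ) * k j)

/-- `v : ℤ^d → ℝ` is of positive type: `∑_{x,y} f(x) v(x−y) f(y) ≥ 0` for every
finitely supported `f : ℤ^d → ℝ`. -/
def IsPosTypeZ (d : ℕ) (v : (Fin d → ℤ) → ℝ) : Prop :=
  ∀ f : (Fin d → ℤ) →₀ ℝ,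
    0 ≤ ∑ x ∈ f.support, ∑ y ∈ f.support, f x * v (x - y) * f y

/-- The specific relative Gibbs potential `g^{ν,κ,λ,L} = |Λ_L|⁻¹ log 𝒵^{ν,κ,λ,L}`,
as a function of `L ∈ ℕ` (set to `0` at the junk value `L = 0`). -/
def gibbsPotSeq (d : ℕ) (v : (Fin d → ℤ) → ℝ) (ν κ lam : ℝ) : ℕ → ℂ :=
  fun L =>
    if h : L = 0 then 0
    else
      haveI : NeZero L := ⟨h⟩
      ((L ^ d : ℕ) : ℂ)⁻¹ * Complex.log (relZ d L (perPot d L v) ν κ lam)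

/-- The classical specific relative Gibbs potential `g^{cl,L} = |Λ_L|⁻¹ log 𝒵^{cl,L}`,
as a function of `L ∈ ℕ` (set to `0` at the junk value `L = 0`). -/
def gibbsPotClSeq (d : ℕ) (v : (Fin d → ℤ) → ℝ) (κ : ℝ) : ℕ → ℂ :=
  fun L =>
    if h : L = 0 then 0
    else
      haveI : NeZero L := ⟨h⟩
      ((L ^ d : ℕ) : ℂ)⁻¹ * Complex.log (Zcl d L (perPot d L v) κ)

set_option linter.unusedSectionVars false

namespace BoseGas
open scoped ComplexOrder

/-! ### Matrix exponentials and trace inequalities -/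

section MatrixExp
variable {m n : Type*} [Fintype m] [DecidableEq m] [Fintype n] [DecidableEq n]

theorem hasSum_exp (A : Matrix m m ℂ) :
    HasSum (fun k : ℕ => ((Nat.factorial k : ℂ)⁻¹) • A ^ k) (NormedSpace.exp A) := by
  let _ : NormedRing (Matrix m m ℂ) := Matrix.linftyOpNormedRing
  let _ : NormedAlgebra ℂ (Matrix m m ℂ) := Matrix.linftyOpNormedAlgebra
  exact NormedSpace.exp_series_hasSum_exp' A

theorem hasSum_exp_apply (A : Matrix m m ℂ) (x y : m) :
    HasSum (fun k : ℕ => (((Nat.factorial k : ℂ)⁻¹) • A ^ k) x y) (NormedSpace.exp A x y) := by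
  have h := hasSum_exp A
  have h1 := (Pi.hasSum.mp h) x
  exact (Pi.hasSum.mp h1) y

theorem matExp_eq (A : Matrix m m ℂ) : matExp A = NormedSpace.exp A := by
  ext x y
  exact (hasSum_exp_apply A x y).tsum_eq

/-- If `J` intertwines `H` and `K`, then it intertwines their exponentials. -/
theorem exp_intertwine (H : Matrix m m ℂ) (K : Matrix n n ℂ) (J : Matrix m n ℂ)
    (h : H * J = J * K) : NormedSpace.exp H * J = J * NormedSpace.exp K := by
  have hpow : ∀ k : ℕ, H ^ k * J = J * K ^ k := by
    intro k
    induction k with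
    | zero => simp
    | succ k ih => rw [pow_succ, Matrix.mul_assoc, h, ← Matrix.mul_assoc, ih, Matrix.mul_assoc,
        ← pow_succ]
  ext x y
  have h1 : HasSum (fun k : ℕ => ∑ z, (((Nat.factorial k : ℂ)⁻¹) • H ^ k) x z * J z y)
      ((NormedSpace.exp H * J) x y) :=
    hasSum_sum fun z _ => (hasSum_exp_apply H x z).mul_right _
  have h2 : HasSum (fun k : ℕ => ∑ z, J x z * (((Nat.factorial k : ℂ)⁻¹) • K ^ k) z y)
      ((J * NormedSpace.exp K) x y) :=
    hasSum_sum fun z _ => (hasSum_exp_apply K z y).mul_left _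
  refine h1.unique ?_
  convert h2 using 2 with k
  have := congrArg (fun M => ((Nat.factorial k : ℂ)⁻¹) * M x y) (hpow k)
  simp only [Matrix.mul_apply, Finset.mul_sum] at this
  simp only [Matrix.smul_apply, smul_eq_mul]
  calc _ = ∑ z, (↑k.factorial : ℂ)⁻¹ * ((H ^ k) x z * J z y) :=
        Finset.sum_congr rfl fun z _ => by ring
    _ = _ := this
    _ = _ := Finset.sum_congr rfl fun z _ => by ring

/-- Simultaneous unitary diagonalization of a Hermitian matrix and its exponential. -/
theorem herm_diag {A : Matrix m m ℂ} (hA : A.IsHermitian) :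
    ∃ (U : Matrix m m ℂ) (a : m → ℝ), U * Uᴴ = 1 ∧ Uᴴ * U = 1 ∧
      A = U * diagonal (fun i => (a i : ℂ)) * Uᴴ ∧
      NormedSpace.exp A = U * diagonal (fun i => ((Real.exp (a i) : ℝ) : ℂ)) * Uᴴ := by
  obtain ⟨U, a, h1, h2, h3⟩ : ∃ (U : Matrix m m ℂ) (a : m → ℝ), U * Uᴴ = 1 ∧ Uᴴ * U = 1 ∧
      A = U * diagonal (fun i => (a i : ℂ)) * Uᴴ :=
    ⟨hA.eigenvectorUnitary, hA.eigenvalues, Unitary.coe_mul_star_self _,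
      Unitary.coe_star_mul_self _, hA.spectral_theorem⟩
  refine ⟨U, a, h1, h2, h3, ?_⟩
  have h4 : A * U = U * diagonal (fun i => (a i : ℂ)) := by
    rw [h3, Matrix.mul_assoc, h2, Matrix.mul_one]
  have h5 := exp_intertwine _ _ _ h4
  rw [Matrix.exp_diagonal] at h5
  have h6 : NormedSpace.exp (fun i => (a i : ℂ)) =
      fun i => ((Real.exp (a i) : ℝ) : ℂ) := by
    ext i
    rw [Pi.coe_exp, ← Complex.exp_eq_exp_ℂ]
    simp
  rw [h6] at h5
  rw [← h5, Matrix.mul_assoc, h1, Matrix.mul_one]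

theorem diag_posSemidef {f : m → ℝ} (hf : ∀ i, 0 ≤ f i) :
    (diagonal (fun i => ((f i : ℝ) : ℂ))).PosSemidef := by
  refine Matrix.PosSemidef.diagonal ?_
  intro i
  exact Complex.zero_le_real.mpr (hf i)

theorem posSemidef_conj {U : Matrix m m ℂ} {f : m → ℝ} (hf : ∀ i, 0 ≤ f i) :
    (U * diagonal (fun i => ((f i : ℝ) : ℂ)) * Uᴴ).PosSemidef :=
  (diag_posSemidef hf).mul_mul_conjTranspose_same U

theorem exp_posSemidef {A : Matrix m m ℂ} (hA : A.IsHermitian) :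
    (NormedSpace.exp A).PosSemidef := by
  obtain ⟨U, a, -, -, -, h⟩ := herm_diag hA
  rw [h]
  exact posSemidef_conj fun i => (Real.exp_pos _).le

/-- Tangent line inequality `e^A ≥ e^c (1 + A - c)`. -/
theorem exp_tangent {A : Matrix m m ℂ} (hA : A.IsHermitian) (c : ℝ) :
    (NormedSpace.exp A - (Real.exp c : ℂ) • ((1 - c : ℂ) • (1 : Matrix m m ℂ) + A)).PosSemidef := by
  obtain ⟨U, a, h1, -, h2, h⟩ := herm_diag hA
  have : NormedSpace.exp A - (Real.exp c : ℂ) • ((1 - c : ℂ) • (1 : Matrix m m ℂ) + A)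
      = U * diagonal (fun i => ((Real.exp (a i) - Real.exp c * (1 - c + a i) : ℝ) : ℂ)) * Uᴴ := by
    have e : diagonal (fun i => ((Real.exp (a i) - Real.exp c * (1 - c + a i) : ℝ) : ℂ))
        = diagonal (fun i => ((Real.exp (a i) : ℝ) : ℂ)) - (Real.exp c : ℂ) •
          ((1 - c : ℂ) • (1 : Matrix m m ℂ) + diagonal (fun i => (a i : ℂ))) := by
      ext i j
      by_cases hij : i = j
      · subst hij; simp
        ring
      · simp [hij]
    rw [e, h, Matrix.mul_sub, Matrix.sub_mul, Matrix.mul_smul, Matrix.smul_mul, Matrix.mul_add,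
      Matrix.add_mul, Matrix.mul_smul, Matrix.smul_mul, Matrix.mul_one, h1, ← h2]
  rw [this]
  refine posSemidef_conj fun i => ?_
  have h5 := Real.add_one_le_exp (a i - c)
  have h6 : Real.exp (a i) = Real.exp c * Real.exp (a i - c) := by rw [← Real.exp_add]; congr 1; ring
  rw [h6, ← mul_sub]
  exact mul_nonneg (Real.exp_pos _).le (by linarith)

/-- Tangent line inequality `e^α ≥ e^B (1 + α - B)`. -/
theorem exp_tangent' {B : Matrix m m ℂ} (hB : B.IsHermitian) (α : ℝ) :
    ((Real.exp α : ℂ) • (1 : Matrix m m ℂ) -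
      NormedSpace.exp B * ((1 + α : ℂ) • (1 : Matrix m m ℂ) - B)).PosSemidef := by
  obtain ⟨U, b, h1, h0, h2, h⟩ := herm_diag hB
  have : (Real.exp α : ℂ) • (1 : Matrix m m ℂ) -
      NormedSpace.exp B * ((1 + α : ℂ) • (1 : Matrix m m ℂ) - B)
      = U * diagonal (fun i => ((Real.exp α - Real.exp (b i) * (1 + α - b i) : ℝ) : ℂ)) * Uᴴ := by
    have e : diagonal (fun i => ((Real.exp α - Real.exp (b i) * (1 + α - b i) : ℝ) : ℂ))
        = (Real.exp α : ℂ) • (1 : Matrix m m ℂ) - diagonal (fun i => ((Real.exp (b i) : ℝ) : ℂ)) *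
          ((1 + α : ℂ) • (1 : Matrix m m ℂ) - diagonal (fun i => (b i : ℂ))) := by
      ext i j
      by_cases hij : i = j
      · subst hij; simp [Matrix.diagonal_mul]
      · simp [hij, Matrix.diagonal_mul]
    have e2 : (1 + α : ℂ) • (1 : Matrix m m ℂ) - B =
        U * ((1 + α : ℂ) • (1 : Matrix m m ℂ) - diagonal (fun i => (b i : ℂ))) * Uᴴ := by
      rw [Matrix.mul_sub, Matrix.sub_mul, Matrix.mul_smul, Matrix.smul_mul, Matrix.mul_one, h1, ← h2]
    have e3 : ∀ D₁ D₂ : Matrix m m ℂ, (U * D₁ * Uᴴ) * (U * D₂ * Uᴴ) = U * (D₁ * D₂) * Uᴴ := by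
      intro D₁ D₂
      calc (U * D₁ * Uᴴ) * (U * D₂ * Uᴴ) = U * D₁ * (Uᴴ * U) * D₂ * Uᴴ := by
            simp only [Matrix.mul_assoc]
        _ = _ := by rw [h0]; simp only [Matrix.mul_assoc, Matrix.one_mul]
    rw [e2, h, e, e3, Matrix.mul_sub U, Matrix.sub_mul (U * _), Matrix.mul_smul, Matrix.smul_mul,
      Matrix.mul_one, h1]
  rw [this]
  refine posSemidef_conj fun i => ?_
  have h5 := Real.add_one_le_exp (α - b i)
  have h6 : Real.exp α = Real.exp (b i) * Real.exp (α - b i) := by rw [← Real.exp_add]; congr 1; ring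
  rw [h6, ← mul_sub]
  exact mul_nonneg (Real.exp_pos _).le (by linarith)

/-- Klein's inequality for the exponential. -/
theorem klein {A B : Matrix m m ℂ} (hA : A.IsHermitian) (hB : B.IsHermitian) :
    (NormedSpace.exp B * (1 + A - B)).trace.re ≤ (NormedSpace.exp A).trace.re := by
  obtain ⟨V, b, h1, h0, h2, h⟩ := herm_diag hB
  have key : ∀ j, ((Real.exp (b j) : ℂ) * ((1 - b j : ℂ) + (Vᴴ * A * V) j j)).re ≤
      ((Vᴴ * NormedSpace.exp A * V) j j).re := by
    intro j
    have := ((exp_tangent hA (b j)).conjTranspose_mul_mul_same V).diag_nonneg (i := j)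
    rw [Matrix.mul_sub, Matrix.sub_mul, Matrix.mul_smul, Matrix.smul_mul, Matrix.mul_add,
      Matrix.add_mul, Matrix.mul_smul, Matrix.smul_mul, Matrix.mul_one, h0] at this
    have h3 := (Complex.nonneg_iff.mp this).1
    simp only [Matrix.sub_apply, Matrix.smul_apply, Matrix.add_apply, Matrix.one_apply_eq,
      smul_eq_mul, mul_one, Complex.sub_re] at h3
    linarith
  have e1 : (NormedSpace.exp A).trace = ∑ j, (Vᴴ * NormedSpace.exp A * V) j j := by
    change _ = (Vᴴ * NormedSpace.exp A * V).trace
    rw [Matrix.trace_mul_comm, ← Matrix.mul_assoc, h1, Matrix.one_mul]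
  have e2 : (NormedSpace.exp B * (1 + A - B)).trace =
      ∑ j, ((Real.exp (b j) : ℂ) * ((1 - b j : ℂ) + (Vᴴ * A * V) j j)) := by
    have e3 : Vᴴ * (1 + A - B) * V = 1 + Vᴴ * A * V - diagonal (fun i => (b i : ℂ)) := by
      have e4 : Vᴴ * B * V = diagonal (fun i => (b i : ℂ)) := by
        rw [h2]
        calc Vᴴ * (V * diagonal (fun i => (b i : ℂ)) * Vᴴ) * V
            = (Vᴴ * V) * diagonal (fun i => (b i : ℂ)) * (Vᴴ * V) := by
              simp only [Matrix.mul_assoc]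
          _ = _ := by rw [h0]; simp
      rw [Matrix.mul_sub, Matrix.sub_mul, Matrix.mul_add, Matrix.add_mul, Matrix.mul_one, h0, e4]
    rw [h, Matrix.mul_assoc, Matrix.mul_assoc, Matrix.trace_mul_comm, Matrix.mul_assoc, e3]
    simp only [Matrix.trace, Matrix.diag_apply, Matrix.diagonal_mul]
    refine Finset.sum_congr rfl fun j _ => ?_
    simp only [Matrix.sub_apply, Matrix.add_apply, Matrix.one_apply_eq, Matrix.diagonal_apply_eq]
    ring
  rw [e1, e2, Complex.re_sum, Complex.re_sum]
  exact Finset.sum_le_sum fun j _ => key j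

theorem exp_proj_mul {A P : Matrix m m ℂ} (hP : P * P = P) (hc : P * A = A * P) :
    NormedSpace.exp (P * A) = P * NormedSpace.exp A + (1 - P) := by
  have h1 : NormedSpace.exp (P * A) * P = P * NormedSpace.exp A := by
    apply exp_intertwine
    rw [Matrix.mul_assoc, ← hc, ← Matrix.mul_assoc, hP]
  have h2 : NormedSpace.exp (P * A) * (1 - P) = (1 - P) * NormedSpace.exp (0 : Matrix m m ℂ) := by
    apply exp_intertwine
    rw [Matrix.mul_sub, Matrix.mul_assoc, Matrix.mul_assoc, ← hc, ← Matrix.mul_assoc P P A, hP]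
    simp
  rw [NormedSpace.exp_zero, Matrix.mul_one] at h2
  calc NormedSpace.exp (P * A) = NormedSpace.exp (P * A) * P + NormedSpace.exp (P * A) * (1 - P) := by
        rw [← Matrix.mul_add]; simp
    _ = _ := by rw [h1, h2]

/-- Klein's inequality on the range of an orthogonal projection commuting with both matrices. -/
theorem klein_proj {A B P : Matrix m m ℂ} (hA : A.IsHermitian) (hB : B.IsHermitian)
    (hPh : P.IsHermitian) (hP : P * P = P) (hcA : P * A = A * P) (hcB : P * B = B * P) :
    ((1 + A - B) * (NormedSpace.exp B * P)).trace.re ≤ (NormedSpace.exp A * P).trace.re := by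
  have hPA : (P * A).IsHermitian := by
    rw [Matrix.IsHermitian, Matrix.conjTranspose_mul, hPh, hA, hcA]
  have hPB : (P * B).IsHermitian := by
    rw [Matrix.IsHermitian, Matrix.conjTranspose_mul, hPh, hB, hcB]
  have h := klein hPA hPB
  have hz : (1 - P) * P = 0 := by rw [Matrix.sub_mul, hP]; simp
  rw [exp_proj_mul hP hcA, exp_proj_mul hP hcB, Matrix.add_mul, Matrix.trace_add,
    Matrix.trace_add, Complex.add_re, Complex.add_re] at h
  have e1 : (1 - P) * (1 + P * A - P * B) = 1 - P := by
    rw [Matrix.mul_sub, Matrix.mul_add, ← Matrix.mul_assoc, ← Matrix.mul_assoc, hz]; simp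
  have e2 : P * NormedSpace.exp B * (1 + P * A - P * B) = P * (NormedSpace.exp B * (1 + A - B)) := by
    have hce : P * NormedSpace.exp B = NormedSpace.exp B * P := (exp_intertwine B B P hcB.symm).symm
    have : P * (1 + P * A - P * B) = P * (1 + A - B) := by
      simp only [Matrix.mul_sub, Matrix.mul_add, ← Matrix.mul_assoc, hP]
    rw [hce, Matrix.mul_assoc, this, ← Matrix.mul_assoc, ← hce, Matrix.mul_assoc]
  rw [e1, e2] at h
  have hce : P * NormedSpace.exp B = NormedSpace.exp B * P := (exp_intertwine B B P hcB.symm).symm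
  rw [Matrix.trace_mul_comm (NormedSpace.exp A) P, Matrix.trace_mul_comm (1 + A - B), ← hce,
    Matrix.mul_assoc]
  linarith

theorem posSemidef_diag {A : Matrix m m ℂ} (hA : A.PosSemidef) :
    ∃ (U : Matrix m m ℂ) (a : m → ℝ), U * Uᴴ = 1 ∧ Uᴴ * U = 1 ∧ (∀ i, 0 ≤ a i) ∧
      A = U * diagonal (fun i => (a i : ℂ)) * Uᴴ := by
  obtain ⟨U, a, h1, h0, h2, -⟩ := herm_diag hA.1
  refine ⟨U, a, h1, h0, ?_, h2⟩
  intro i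
  have h3 := (hA.conjTranspose_mul_mul_same U).diag_nonneg (i := i)
  have h4 : Uᴴ * A * U = diagonal (fun i => (a i : ℂ)) := by
    rw [h2]
    simp only [Matrix.mul_assoc, h0, Matrix.mul_one]
    rw [← Matrix.mul_assoc, h0, Matrix.one_mul]
  rw [h4] at h3
  simpa using h3

/-- The trace of a product of two positive semidefinite matrices is nonnegative. -/
theorem trace_mul_nonneg {A B : Matrix m m ℂ} (hA : A.PosSemidef) (hB : B.PosSemidef) :
    0 ≤ (A * B).trace.re := by
  obtain ⟨U, a, h1, h0, ha, h2⟩ := posSemidef_diag hA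
  have h5 : (A * B).trace = ∑ i, (a i : ℂ) * (Uᴴ * B * U) i i := by
    rw [h2, Matrix.mul_assoc, Matrix.mul_assoc, Matrix.trace_mul_comm, Matrix.mul_assoc]
    simp [Matrix.trace, Matrix.diagonal_mul, Matrix.mul_assoc]
  rw [h5, Complex.re_sum]
  refine Finset.sum_nonneg fun i _ => ?_
  have h6 := Complex.nonneg_iff.mp ((hB.conjTranspose_mul_mul_same U).diag_nonneg (i := i))
  rw [Complex.re_ofReal_mul]
  exact mul_nonneg (ha i) h6.1

end MatrixExp
end BoseGas

namespace BoseGas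
open scoped ComplexOrder

/-! ### Many-body matrices over a finite set of sites -/

section ManyBody
variable {Λ ι : Type} [Fintype Λ] [DecidableEq Λ] [Fintype ι] [DecidableEq ι]

/-- The one-particle matrix `A` acting on the `i`-th particle. -/
def emb (i : ι) (A : Matrix Λ Λ ℂ) : Matrix (ι → Λ) (ι → Λ) ℂ :=
  fun X Y => if ∀ j, j ≠ i → X j = Y j then A (X i) (Y i) else 0

/-- Second quantization `∑ᵢ Aᵢ` of a one-particle matrix. -/
def dG (A : Matrix Λ Λ ℂ) : Matrix (ι → Λ) (ι → Λ) ℂ := ∑ i, emb i A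

/-- The pair interaction energy `½ ∑_{i,j} w(X_i, X_j)`. -/
def pairE (w : Λ → Λ → ℝ) (X : ι → Λ) : ℝ := (1 / 2) * ∑ i, ∑ j, w (X i) (X j)

/-- The many-body Hamiltonian with one-particle part `h` and pair interaction `w`. -/
def Hm (h : Matrix Λ Λ ℂ) (w : Λ → Λ → ℝ) : Matrix (ι → Λ) (ι → Λ) ℂ :=
  dG h + diagonal (fun X => (pairE w X : ℂ))

/-- The unnormalized symmetrization matrix `∑_g 1[Y = X ∘ g]`. -/
def Wm (Λ ι : Type) [Fintype ι] [DecidableEq ι] [DecidableEq Λ] : Matrix (ι → Λ) (ι → Λ) ℂ :=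
  fun X Y => ∑ g : Equiv.Perm ι, if Y = X ∘ g then 1 else 0

/-- The projection onto symmetric wave functions. -/
def Pm (Λ ι : Type) [Fintype ι] [DecidableEq ι] [DecidableEq Λ] : Matrix (ι → Λ) (ι → Λ) ℂ :=
  ((Fintype.card ι).factorial : ℂ)⁻¹ • Wm Λ ι

/-- Number of particles at the site `x`. -/
def occ (X : ι → Λ) (x : Λ) : ℕ := (Finset.univ.filter fun i => X i = x).card

theorem sum_emb (i : ι) (A : Matrix Λ Λ ℂ) (X : ι → Λ) (f : (ι → Λ) → ℂ) :
    ∑ Z, emb i A X Z * f Z = ∑ z, A (X i) z * f (Function.update X i z) := by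
  symm
  refine Fintype.sum_of_injective (Function.update X i) (Function.update_injective X i) _ _ ?_ ?_
  · intro Z hZ
    rw [emb, if_neg, zero_mul]
    intro h
    apply hZ
    refine ⟨Z i, ?_⟩
    ext j
    by_cases hj : j = i
    · subst hj; simp
    · simp [hj, h j hj]
  · intro z
    rw [emb, if_pos]
    · simp
    · intro j hj
      simp [hj]

theorem emb_mul (i : ι) (A B : Matrix Λ Λ ℂ) : emb i (A * B) = emb i A * emb i B := by
  ext X Y
  rw [Matrix.mul_apply, sum_emb]
  have h : ∀ z, (∀ j, j ≠ i → Function.update X i z j = Y j) ↔ (∀ j, j ≠ i → X j = Y j) := by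
    intro z
    refine forall_congr' fun j => ?_
    refine imp_congr_right fun hj => ?_
    rw [Function.update_of_ne hj]
  simp only [emb, h, Function.update_self]
  split_ifs
  · rw [Matrix.mul_apply]
  · simp

theorem emb_conjTranspose (i : ι) (A : Matrix Λ Λ ℂ) : emb i Aᴴ = (emb (ι := ι) i A)ᴴ := by
  ext X Y
  rw [Matrix.conjTranspose_apply]
  simp only [emb]
  have h : (∀ j, j ≠ i → X j = Y j) ↔ (∀ j, j ≠ i → Y j = X j) :=
    forall_congr' fun j => imp_congr_right fun _ => eq_comm
  simp only [h]
  split_ifs <;> simp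

theorem emb_add (i : ι) (A B : Matrix Λ Λ ℂ) : emb (ι := ι) i (A + B) = emb i A + emb i B := by
  ext X Y
  simp only [emb, Matrix.add_apply]
  split_ifs <;> simp

theorem emb_smul (i : ι) (c : ℂ) (A : Matrix Λ Λ ℂ) : emb (ι := ι) i (c • A) = c • emb i A := by
  ext X Y
  simp only [emb, Matrix.smul_apply]
  split_ifs <;> simp

theorem emb_diagonal (i : ι) (c : Λ → ℂ) :
    emb (ι := ι) i (diagonal c) = diagonal (fun X => c (X i)) := by
  ext X Y
  by_cases h : X = Y
  · subst h; simp [emb]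
  · rw [Matrix.diagonal_apply_ne _ h, emb]
    split_ifs with h1
    · apply Matrix.diagonal_apply_ne
      intro h2
      apply h
      ext j
      by_cases hj : j = i
      · subst hj; exact h2
      · exact h1 j hj
    · rfl

theorem emb_posSemidef (i : ι) {A : Matrix Λ Λ ℂ} (hA : A.PosSemidef) :
    (emb (ι := ι) i A).PosSemidef := by
  obtain ⟨U, a, -, -, ha, rfl⟩ := posSemidef_diag hA
  rw [emb_mul, emb_mul, emb_conjTranspose, emb_diagonal]
  exact posSemidef_conj fun X => ha (X i)

theorem dG_add (A B : Matrix Λ Λ ℂ) : dG (ι := ι) (A + B) = dG A + dG B := by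
  simp only [dG, emb_add, Finset.sum_add_distrib]

theorem dG_smul (c : ℂ) (A : Matrix Λ Λ ℂ) : dG (ι := ι) (c • A) = c • dG A := by
  simp only [dG, emb_smul, Finset.smul_sum]

theorem dG_sub (A B : Matrix Λ Λ ℂ) : dG (ι := ι) (A - B) = dG A - dG B := by
  have : A - B = A + (-1 : ℂ) • B := by ext; simp [sub_eq_add_neg]
  rw [this, dG_add, dG_smul]; ext; simp [sub_eq_add_neg]

theorem dG_diagonal (c : Λ → ℂ) :
    dG (ι := ι) (diagonal c) = diagonal (fun X => ∑ i, c (X i)) := by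
  simp only [dG, emb_diagonal]
  ext X Y
  rw [Matrix.sum_apply]
  by_cases h : X = Y
  · subst h; simp
  · simp [h]

theorem dG_posSemidef {A : Matrix Λ Λ ℂ} (hA : A.PosSemidef) : (dG (ι := ι) A).PosSemidef :=
  Matrix.posSemidef_sum _ fun i _ => emb_posSemidef i hA

theorem dG_isHermitian {A : Matrix Λ Λ ℂ} (hA : A.IsHermitian) :
    (dG (ι := ι) A).IsHermitian := by
  rw [Matrix.IsHermitian, dG, Matrix.conjTranspose_sum]
  refine Finset.sum_congr rfl fun i _ => ?_
  rw [← emb_conjTranspose, hA]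

theorem diag_isHermitian (f : Λ → ℝ) : (diagonal fun x => (f x : ℂ)).IsHermitian := by
  rw [Matrix.IsHermitian, Matrix.diagonal_conjTranspose]
  congr 1
  ext x
  simp

theorem Hm_isHermitian {h : Matrix Λ Λ ℂ} (hh : h.IsHermitian) (w : Λ → Λ → ℝ) :
    (Hm (ι := ι) h w).IsHermitian :=
  (dG_isHermitian hh).add (diag_isHermitian _)

/-! #### Symmetrization -/

theorem sum_ite_comp (g : Equiv.Perm ι) (X : ι → Λ) (f : (ι → Λ) → ℂ) :
    ∑ Z, (if Z = X ∘ g then 1 else 0) * f Z = f (X ∘ g) := by simp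

theorem Wm_mul_apply (M : Matrix (ι → Λ) (ι → Λ) ℂ) (X Y : ι → Λ) :
    (Wm Λ ι * M) X Y = ∑ g : Equiv.Perm ι, M (X ∘ g) Y := by
  simp only [Matrix.mul_apply, Wm, Finset.sum_mul]
  rw [Finset.sum_comm]
  exact Finset.sum_congr rfl fun g _ => sum_ite_comp g X _

theorem eq_comp_iff (g : Equiv.Perm ι) (X Y : ι → Λ) : Y = X ∘ g ↔ X = Y ∘ (g⁻¹ : Equiv.Perm ι) := by
  constructor
  · rintro rfl; ext i; simp
  · rintro rfl; ext i; simp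

theorem Wm_symm (X Y : ι → Λ) : Wm Λ ι X Y = Wm Λ ι Y X := by
  simp only [Wm]
  rw [← Equiv.sum_comp (Equiv.inv (Equiv.Perm ι))]
  refine Finset.sum_congr rfl fun g _ => ?_
  have := eq_comp_iff g⁻¹ X Y
  rw [inv_inv] at this
  simp only [Equiv.inv_apply, this]

theorem mul_Wm_apply (M : Matrix (ι → Λ) (ι → Λ) ℂ) (X Y : ι → Λ) :
    (M * Wm Λ ι) X Y = ∑ g : Equiv.Perm ι, M X (Y ∘ g) := by
  have : (M * Wm Λ ι) X Y = (Wm Λ ι * Mᵀ) Y X := by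
    simp only [Matrix.mul_apply, Matrix.transpose_apply]
    refine Finset.sum_congr rfl fun Z _ => ?_
    rw [Wm_symm, mul_comm]
  rw [this, Wm_mul_apply]
  rfl

theorem Wm_comp (g : Equiv.Perm ι) (X Y : ι → Λ) : Wm Λ ι (X ∘ g) Y = Wm Λ ι X Y := by
  simp only [Wm]
  rw [← Equiv.sum_comp (Equiv.mulLeft g) fun h : Equiv.Perm ι => if Y = X ∘ h then (1 : ℂ) else 0]
  rfl

theorem Wm_mul_Wm : Wm Λ ι * Wm Λ ι = ((Fintype.card ι).factorial : ℂ) • Wm Λ ι := by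
  ext X Y
  rw [Wm_mul_apply]
  simp [Wm_comp, Fintype.card_perm]

theorem fact_ne (n : ℕ) : (n.factorial : ℂ) ≠ 0 := by exact_mod_cast n.factorial_ne_zero

theorem Pm_mul_Pm : Pm Λ ι * Pm Λ ι = Pm Λ ι := by
  simp only [Pm, Matrix.smul_mul, Matrix.mul_smul, Wm_mul_Wm, smul_smul]
  rw [inv_mul_cancel₀ (fact_ne _), mul_one]

theorem Wm_isHermitian : (Wm Λ ι).IsHermitian := by
  ext X Y
  rw [Matrix.conjTranspose_apply, Wm_symm]
  simp only [Wm, star_sum]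
  refine Finset.sum_congr rfl fun g _ => ?_
  split_ifs <;> simp

theorem Pm_isHermitian : (Pm Λ ι).IsHermitian := by
  rw [Matrix.IsHermitian, Pm, Matrix.conjTranspose_smul, Wm_isHermitian]
  simp

theorem Wm_comm {M : Matrix (ι → Λ) (ι → Λ) ℂ}
    (hM : ∀ (g : Equiv.Perm ι) X Y, M (X ∘ g) (Y ∘ g) = M X Y) : Wm Λ ι * M = M * Wm Λ ι := by
  ext X Y
  rw [Wm_mul_apply, mul_Wm_apply, ← Equiv.sum_comp (Equiv.inv (Equiv.Perm ι))]
  refine Finset.sum_congr rfl fun g _ => ?_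
  rw [← hM g]
  congr 1
  ext i
  simp

theorem Pm_comm {M : Matrix (ι → Λ) (ι → Λ) ℂ}
    (hM : ∀ (g : Equiv.Perm ι) X Y, M (X ∘ g) (Y ∘ g) = M X Y) : Pm Λ ι * M = M * Pm Λ ι := by
  rw [Pm, Matrix.smul_mul, Matrix.mul_smul, Wm_comm hM]

theorem emb_comp (g : Equiv.Perm ι) (i : ι) (A : Matrix Λ Λ ℂ) (X Y : ι → Λ) :
    emb i A (X ∘ g) (Y ∘ g) = emb (g i) A X Y := by
  simp only [emb, Function.comp]
  have : (∀ j, j ≠ i → X (g j) = Y (g j)) ↔ (∀ j, j ≠ g i → X j = Y j) := by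
    constructor
    · intro h j hj
      have := h (g.symm j) (by rintro rfl; simp at hj)
      simpa using this
    · intro h j hj
      exact h _ (by simpa using hj)
  simp only [this]

theorem Hm_comp (h : Matrix Λ Λ ℂ) (w : Λ → Λ → ℝ) (g : Equiv.Perm ι) (X Y : ι → Λ) :
    Hm h w (X ∘ g) (Y ∘ g) = Hm h w X Y := by
  simp only [Hm, Matrix.add_apply]
  congr 1
  · simp only [dG, Matrix.sum_apply, emb_comp]
    exact Equiv.sum_comp g fun i => emb i h X Y
  · by_cases hXY : X = Y
    · subst hXY
      simp only [Matrix.diagonal_apply_eq, pairE, Function.comp]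
      have h1 : ∀ i, ∑ j, w (X i) (X (g j)) = ∑ j, w (X i) (X j) := fun i =>
        Equiv.sum_comp g fun j => w (X i) (X j)
      simp only [h1]
      rw [Equiv.sum_comp g fun i => ∑ j, w (X i) (X j)]
    · rw [Matrix.diagonal_apply_ne _ hXY, Matrix.diagonal_apply_ne]
      intro h
      apply hXY
      ext i
      have := congrFun h (g.symm i)
      simpa using this

theorem Pm_comm_Hm (h : Matrix Λ Λ ℂ) (w : Λ → Λ → ℝ) :
    Pm Λ ι * Hm h w = Hm h w * Pm Λ ι := Pm_comm (Hm_comp h w)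

end ManyBody
end BoseGas

namespace BoseGas
open scoped ComplexOrder

/-! ### Grand canonical sums and the Peierls–Bogoliubov inequality -/

section GrandCanonical
variable {Λ ι : Type} [Fintype Λ] [DecidableEq Λ] [Fintype ι] [DecidableEq ι]

/-- The unnormalized canonical density matrix `e^{-H} P`. -/
def rhoM (h : Matrix Λ Λ ℂ) (w : Λ → Λ → ℝ) : Matrix (ι → Λ) (ι → Λ) ℂ :=
  NormedSpace.exp (-(Hm h w)) * Pm Λ ι

/-- Diagonal entries of the canonical density matrix. -/
def rho (h : Matrix Λ Λ ℂ) (w : Λ → Λ → ℝ) (X : ι → Λ) : ℝ := (rhoM h w X X).re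

/-- The canonical partition function of the particles labelled by `ι`. -/
def tau (ι : Type) [Fintype ι] [DecidableEq ι] (h : Matrix Λ Λ ℂ) (w : Λ → Λ → ℝ) : ℝ :=
  (rhoM (ι := ι) h w).trace.re

/-- The grand canonical partition function. -/
def Xi (h : Matrix Λ Λ ℂ) (w : Λ → Λ → ℝ) : ℝ := ∑' n : ℕ, tau (Fin n) h w

theorem tau_eq_sum (h : Matrix Λ Λ ℂ) (w : Λ → Λ → ℝ) :
    tau ι h w = ∑ X : ι → Λ, rho h w X := by
  simp [tau, rho, Matrix.trace, Complex.re_sum]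

theorem Pm_comm_exp (h : Matrix Λ Λ ℂ) (w : Λ → Λ → ℝ) :
    Pm Λ ι * NormedSpace.exp (-(Hm h w)) = NormedSpace.exp (-(Hm h w)) * Pm Λ ι := by
  refine (exp_intertwine _ _ _ ?_).symm
  rw [Matrix.neg_mul, Matrix.mul_neg, Pm_comm_Hm]

theorem rhoM_posSemidef {h : Matrix Λ Λ ℂ} (hh : h.IsHermitian) (w : Λ → Λ → ℝ) :
    (rhoM (ι := ι) h w).PosSemidef := by
  have h1 := (exp_posSemidef (Hm_isHermitian (ι := ι) hh w).neg).mul_mul_conjTranspose_same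
    (Pm Λ ι)
  have h2 : Pm Λ ι * NormedSpace.exp (-(Hm h w)) * (Pm Λ ι)ᴴ = rhoM h w := by
    rw [Pm_isHermitian, Pm_comm_exp, Matrix.mul_assoc, Pm_mul_Pm, rhoM]
  rwa [h2] at h1

theorem rho_nonneg {h : Matrix Λ Λ ℂ} (hh : h.IsHermitian) (w : Λ → Λ → ℝ) (X : ι → Λ) :
    0 ≤ rho h w X :=
  (Complex.nonneg_iff.mp ((rhoM_posSemidef hh w).diag_nonneg (i := X))).1

theorem tau_nonneg {h : Matrix Λ Λ ℂ} (hh : h.IsHermitian) (w : Λ → Λ → ℝ) :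
    0 ≤ tau ι h w := by
  rw [tau_eq_sum]
  exact Finset.sum_nonneg fun X _ => rho_nonneg hh w X

theorem tau_of_isEmpty [IsEmpty ι] (h : Matrix Λ Λ ℂ) (w : Λ → Λ → ℝ) : tau ι h w = 1 := by
  have h1 : Hm (ι := ι) h w = 0 := by
    ext X Y
    have : X = Y := Subsingleton.elim _ _
    subst this
    simp [Hm, dG, pairE]
  rw [tau, rhoM, h1, neg_zero, NormedSpace.exp_zero, Matrix.one_mul]
  have h2 : ∀ (X : ι → Λ) (g : Equiv.Perm ι), (X = X ∘ g) = True := fun X g =>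
    eq_true (Subsingleton.elim _ _)
  simp only [Pm, Wm, Matrix.trace, Matrix.diag_apply, Matrix.smul_apply, h2]
  simp

theorem Xi_ge_one {h : Matrix Λ Λ ℂ} (hh : h.IsHermitian) {w : Λ → Λ → ℝ}
    (hs : Summable fun n : ℕ => tau (Fin n) h w) : 1 ≤ Xi h w := by
  have := hs.le_tsum 0 (fun n _ => tau_nonneg hh w)
  rwa [tau_of_isEmpty] at this

theorem exp_add_scalar {m : Type*} [Fintype m] [DecidableEq m] (A : Matrix m m ℂ) (c : ℝ) :
    NormedSpace.exp (A + (c : ℂ) • (1 : Matrix m m ℂ)) = (Real.exp c : ℂ) • NormedSpace.exp A := by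
  rw [Matrix.exp_add_of_commute]
  · have : (c : ℂ) • (1 : Matrix m m ℂ) = diagonal (fun _ => (c : ℂ)) := by
      ext i j; by_cases h : i = j <;> simp [h]
    rw [this, Matrix.exp_diagonal]
    have h6 : NormedSpace.exp (fun _ : m => (c : ℂ)) = fun _ => ((Real.exp c : ℝ) : ℂ) := by
      ext i
      rw [Pi.coe_exp, ← Complex.exp_eq_exp_ℂ]
      simp
    rw [h6]
    ext i j
    simp [mul_comm]
  · exact (Commute.one_right A).smul_right _

/-- Canonical form of the Peierls–Bogoliubov inequality: if `H' - H ≤ D` with `D` diagonal, then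
`(1 + c) Tr(e^{-H} P) - Tr(D e^{-H} P) ≤ e^c Tr(e^{-H'} P)`. -/
theorem peierls_n {h h' : Matrix Λ Λ ℂ} (hh : h.IsHermitian) (hh' : h'.IsHermitian)
    {w w' : Λ → Λ → ℝ} {D : (ι → Λ) → ℝ} (c : ℝ)
    (hD : (diagonal (fun X => (D X : ℂ)) + Hm h w - Hm h' w').PosSemidef) :
    (1 + c) * tau ι h w - ∑ X, D X * rho h w X ≤ Real.exp c * tau ι h' w' := by
  have hA : (-(Hm (ι := ι) h' w') + (c : ℂ) • 1).IsHermitian := by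
    refine (Hm_isHermitian hh' w').neg.add ?_
    rw [Matrix.IsHermitian, Matrix.conjTranspose_smul]; simp
  have hK := klein_proj hA (Hm_isHermitian (ι := ι) hh w).neg Pm_isHermitian Pm_mul_Pm
    (by rw [Matrix.mul_add, Matrix.add_mul, Matrix.mul_neg, Matrix.neg_mul, Pm_comm_Hm]; simp)
    (by rw [Matrix.mul_neg, Matrix.neg_mul, Pm_comm_Hm])
  rw [exp_add_scalar, Matrix.smul_mul, Matrix.trace_smul, smul_eq_mul, Complex.re_ofReal_mul] at hK
  change _ ≤ Real.exp c * tau ι h' w' at hK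
  refine le_trans ?_ hK
  have h1 := trace_mul_nonneg hD (rhoM_posSemidef (ι := ι) hh w)
  have h2 : (diagonal (fun X => (D X : ℂ)) * rhoM (ι := ι) h w).trace.re = ∑ X, D X * rho h w X := by
    simp only [Matrix.trace, Matrix.diag_apply, Matrix.diagonal_mul, Complex.re_sum,
      Complex.re_ofReal_mul, rho]
  have h3 : 1 + (-(Hm (ι := ι) h' w') + (c : ℂ) • 1) - -(Hm h w) =
      ((1 + c : ℝ) : ℂ) • (1 : Matrix (ι → Λ) (ι → Λ) ℂ) - diagonal (fun X => (D X : ℂ))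
       + (diagonal (fun X => (D X : ℂ)) + Hm h w - Hm h' w') := by
    push_cast
    rw [add_smul, one_smul]
    abel
  rw [h3]
  change _ ≤ ((_ - _ + _ : Matrix (ι → Λ) (ι → Λ) ℂ) * rhoM h w).trace.re
  rw [Matrix.add_mul, Matrix.sub_mul, Matrix.trace_add, Matrix.trace_sub, Complex.add_re,
    Complex.sub_re, h2, Matrix.smul_mul, Matrix.trace_smul, smul_eq_mul, Complex.re_ofReal_mul,
    Matrix.one_mul]
  simp only [tau]
  linarith

theorem loewner {h h' : Matrix Λ Λ ℂ} {w w' : Λ → Λ → ℝ} {δ : Λ → ℝ} {e : (ι → Λ) → ℝ}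
    (hδ : (diagonal (fun x => (δ x : ℂ)) + h - h').PosSemidef)
    (hw : ∀ X, pairE w' X ≤ pairE w X + e X) :
    (diagonal (fun X : ι → Λ => ((∑ i, δ (X i) + e X : ℝ) : ℂ)) + Hm h w - Hm h' w').PosSemidef := by
  have h1 := dG_posSemidef (ι := ι) hδ
  rw [dG_sub, dG_add, dG_diagonal] at h1
  have h2 := diag_posSemidef (f := fun X : ι → Λ => pairE w X + e X - pairE w' X)
    (fun X => by linarith [hw X])
  have h3 := h1.add h2
  convert h3 using 1
  have e1 : diagonal (fun X : ι → Λ => ((∑ i, δ (X i) + e X : ℝ) : ℂ)) =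
    diagonal (fun X : ι → Λ => ∑ i, (δ (X i) : ℂ)) + diagonal (fun X : ι → Λ => (e X : ℂ)) := by
    rw [Matrix.diagonal_add]; push_cast; rfl
  have e2 : (diagonal fun X : ι → Λ => ((pairE w X + e X - pairE w' X : ℝ) : ℂ)) =
      diagonal (fun X : ι → Λ => (pairE w X : ℂ)) + diagonal (fun X : ι → Λ => (e X : ℂ))
      - diagonal (fun X : ι → Λ => (pairE w' X : ℂ)) := by
    rw [Matrix.diagonal_add, Matrix.diagonal_sub]; push_cast; rfl
  rw [e1, e2, Hm, Hm]
  abel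

/-- The partition function is monotone in the Hamiltonian. -/
theorem tau_mono {h h' : Matrix Λ Λ ℂ} (hh : h.IsHermitian) (hh' : h'.IsHermitian)
    {w w' : Λ → Λ → ℝ} (hle : (h - h').PosSemidef) (hw : ∀ x y, w' x y ≤ w x y) :
    tau ι h w ≤ tau ι h' w' := by
  have h1 := loewner (ι := ι) (h := h) (h' := h') (w := w) (w' := w') (δ := fun _ => 0)
    (e := fun _ => 0) (by simpa using hle) (fun X => by
      simp only [pairE, add_zero]
      gcongr
      exact hw _ _)
  have h2 := peierls_n hh hh' 0 h1
  simpa using h2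

/-- The grand canonical Peierls–Bogoliubov inequality. -/
theorem peierls {h h' : Matrix Λ Λ ℂ} (hh : h.IsHermitian) (hh' : h'.IsHermitian)
    {w w' : Λ → Λ → ℝ} (hs : Summable fun n : ℕ => tau (Fin n) h w)
    (hs' : Summable fun n : ℕ => tau (Fin n) h' w')
    (D : ∀ n : ℕ, (Fin n → Λ) → ℝ) {S : ℝ}
    (hD : ∀ n, (diagonal (fun X => (D n X : ℂ)) + Hm h w - Hm h' w').PosSemidef)
    (hS : HasSum (fun n => ∑ X, D n X * rho h w X) S) :
    Xi h w ≤ Real.exp (S / Xi h w) * Xi h' w' := by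
  have h1 := Xi_ge_one hh hs
  set c := S / Xi h w with hc
  have h2 : (1 + c) * Xi h w - S ≤ Real.exp c * Xi h' w' :=
    hasSum_le (fun n => peierls_n hh hh' c (hD n)) ((hs.hasSum.mul_left _).sub hS)
      (hs'.hasSum.mul_left _)
  have h3 : c * Xi h w = S := by rw [hc]; field_simp
  nlinarith

/-! #### Occupation numbers -/

theorem sum_occ (X : ι → Λ) (f : Λ → ℝ) : ∑ i, f (X i) = ∑ x, (occ X x : ℝ) * f x := by
  rw [← Finset.sum_fiberwise_of_maps_to (s := Finset.univ) (t := Finset.univ) (g := X)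
    (fun _ _ => Finset.mem_univ _)]
  refine Finset.sum_congr rfl fun x _ => ?_
  rw [Finset.sum_congr rfl (g := fun _ => f x)]
  · simp [occ]
  · intro i hi
    rw [(Finset.mem_filter.mp hi).2]

theorem pairE_occ (w : Λ → Λ → ℝ) (X : ι → Λ) :
    pairE w X = (1 / 2) * ∑ x, ∑ y, (occ X x : ℝ) * (occ X y : ℝ) * w x y := by
  rw [pairE, sum_occ X (fun x => ∑ j, w x (X j))]
  congr 1
  refine Finset.sum_congr rfl fun x _ => ?_
  rw [sum_occ X (fun y => w x y), Finset.mul_sum]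
  exact Finset.sum_congr rfl fun y _ => by ring

/-- A priori bound on the first two moments of the occupation numbers. -/
theorem moments {h : Matrix Λ Λ ℂ} (hh : h.IsHermitian) {w : Λ → Λ → ℝ} {θ w₀ : ℝ}
    (hle : (h - ((2 * θ : ℝ) : ℂ) • (1 : Matrix Λ Λ ℂ)).PosSemidef)
    (hw : ∀ x y, 0 ≤ w x y) (hθ : 0 < θ) (hw₀ : 0 ≤ w₀) (hwd : ∀ x, w₀ ≤ w x x)
    (hs' : Summable fun n : ℕ => tau (Fin n) ((θ : ℂ) • (1 : Matrix Λ Λ ℂ)) 0) :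
    (Summable fun n : ℕ => tau (Fin n) h w) ∧
    ∃ S : ℝ, HasSum (fun n : ℕ => ∑ X : Fin n → Λ,
        (∑ x, (θ * occ X x + w₀ / 2 * (occ X x : ℝ) ^ 2)) * rho h w X) S ∧
      S / Xi h w ≤ Real.log (Xi ((θ : ℂ) • (1 : Matrix Λ Λ ℂ)) 0) := by
  have hh' : ((θ : ℂ) • (1 : Matrix Λ Λ ℂ)).IsHermitian := by
    rw [Matrix.IsHermitian, Matrix.conjTranspose_smul]; simp
  set F : ∀ n : ℕ, (Fin n → Λ) → ℝ :=
    fun n X => ∑ x, (θ * occ X x + w₀ / 2 * (occ X x : ℝ) ^ 2) with hF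
  have hF0 : ∀ n X, 0 ≤ F n X := fun n X => Finset.sum_nonneg fun x _ => by positivity
  have hD : ∀ n, (diagonal (fun X => ((-F n X : ℝ) : ℂ)) + Hm h w -
      Hm ((θ : ℂ) • (1 : Matrix Λ Λ ℂ)) 0).PosSemidef := by
    intro n
    have h1 := loewner (ι := Fin n) (h := h) (h' := ((θ : ℂ) • (1 : Matrix Λ Λ ℂ))) (w := w)
      (w' := 0) (δ := fun _ => -θ) (e := fun X => -∑ x, w₀ / 2 * (occ X x : ℝ) ^ 2) (by
        convert hle using 1
        rw [show (diagonal fun _ : Λ => ((-θ : ℝ) : ℂ)) = (-θ : ℂ) • 1 by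
          rw [Matrix.smul_one_eq_diagonal]; push_cast; rfl]
        ext i j
        simp only [Matrix.sub_apply, Matrix.add_apply, Matrix.smul_apply, smul_eq_mul]
        push_cast
        ring) (fun X => by
        have h2 : pairE (0 : Λ → Λ → ℝ) X = 0 := by simp [pairE]
        rw [h2, pairE_occ, ← sub_eq_add_neg, sub_nonneg, Finset.mul_sum]
        refine Finset.sum_le_sum fun x _ => ?_
        have h3 : (occ X x : ℝ) * (occ X x : ℝ) * w x x ≤
            ∑ y, (occ X x : ℝ) * (occ X y : ℝ) * w x y :=
          Finset.single_le_sum (f := fun y => (occ X x : ℝ) * (occ X y : ℝ) * w x y)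
            (fun y _ => mul_nonneg (by positivity) (hw x y)) (Finset.mem_univ x)
        have h4 : (occ X x : ℝ) * (occ X x : ℝ) * w₀ ≤ (occ X x : ℝ) * (occ X x : ℝ) * w x x :=
          mul_le_mul_of_nonneg_left (hwd x) (by positivity)
        nlinarith)
    convert h1 using 5
    rename_i X
    rw [hF, sum_occ X (fun _ => -θ)]
    simp only [Finset.sum_add_distrib, mul_neg, Finset.sum_neg_distrib, neg_add, mul_comm θ]
  have hn : ∀ n, tau (Fin n) h w + ∑ X, F n X * rho h w X ≤
      tau (Fin n) ((θ : ℂ) • (1 : Matrix Λ Λ ℂ)) 0 := by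
    intro n
    have := peierls_n hh hh' 0 (hD n)
    simp only [add_zero, one_mul, neg_mul, Finset.sum_neg_distrib, sub_neg_eq_add,
      Real.exp_zero] at this
    exact this
  have hn0 : ∀ n, 0 ≤ ∑ X, F n X * rho h w X := fun n =>
    Finset.sum_nonneg fun X _ => mul_nonneg (hF0 n X) (rho_nonneg hh w X)
  have hs : Summable fun n : ℕ => tau (Fin n) h w :=
    hs'.of_nonneg_of_le (fun n => tau_nonneg hh w) (fun n => by linarith [hn n, hn0 n])
  have hSs : Summable fun n : ℕ => ∑ X, F n X * rho h w X :=
    hs'.of_nonneg_of_le hn0 (fun n => by linarith [hn n, tau_nonneg (ι := Fin n) hh w])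
  refine ⟨hs, _, hSs.hasSum, ?_⟩
  have h5 := peierls hh hh' hs hs' (fun n X => -F n X) hD (S := -∑' n, ∑ X, F n X * rho h w X) (by
    have := hSs.hasSum.neg
    simpa [Finset.sum_neg_distrib] using this)
  have h6 := Xi_ge_one hh hs
  have h7 := Xi_ge_one hh' hs'
  set s := ∑' n, ∑ X, F n X * rho h w X
  rw [neg_div, Real.exp_neg] at h5
  rw [Real.le_log_iff_exp_le (by linarith)]
  have h8 := Real.exp_pos (s / Xi h w)
  have h9 : 1 ≤ (Real.exp (s / Xi h w))⁻¹ * Xi ((θ : ℂ) • (1 : Matrix Λ Λ ℂ)) 0 := h6.trans h5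
  rwa [inv_mul_eq_div, le_div_iff₀ h8, one_mul] at h9

end GrandCanonical
end BoseGas

namespace BoseGas
open scoped ComplexOrder

/-! ### Relabelling and decoupling of systems -/

section Reindex
variable {Λ Λ' ι ι' : Type} [Fintype Λ] [DecidableEq Λ] [Fintype ι] [DecidableEq ι]
  [Fintype Λ'] [DecidableEq Λ'] [Fintype ι'] [DecidableEq ι']

/-- The number of permutations carrying `X` to `Y` is a product of factorials of occupation
numbers if these agree, and vanishes otherwise. -/
theorem Wm_eq_prod (X Y : ι → Λ) :
    Wm Λ ι X Y = ∏ x, if occ X x = occ Y x then ((occ X x).factorial : ℂ) else 0 := by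
  by_cases h : ∀ x, occ X x = occ Y x
  · have h1 : ∃ g : Equiv.Perm ι, X ∘ g = Y := by
      refine ⟨Equiv.ofFiberEquiv (f := Y) (g := X) fun x => Fintype.equivOfCardEq ?_, ?_⟩
      · rw [Fintype.card_subtype, Fintype.card_subtype]
        exact (h x).symm
      · ext i
        exact Equiv.ofFiberEquiv_map _ i
    obtain ⟨g, rfl⟩ := h1
    rw [Wm_symm, Wm_comp]
    simp only [h, if_true]
    have h2 := DomMulAct.stabilizer_card (f := X)
    have h3 : Wm Λ ι X X = (Fintype.card {g : Equiv.Perm ι // X ∘ g = X} : ℂ) := by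
      rw [Wm, Fintype.card_subtype]
      simp only [Finset.sum_boole, eq_comm]
    rw [h3, h2]
    push_cast
    refine Finset.prod_congr rfl fun x _ => ?_
    rw [← h x, occ, Fintype.card_subtype]
  · push Not at h
    obtain ⟨x, hx⟩ := h
    rw [Finset.prod_eq_zero (Finset.mem_univ x) (if_neg hx), Wm]
    refine Finset.sum_eq_zero fun g _ => if_neg ?_
    rintro rfl
    apply hx
    simp only [occ]
    refine Finset.card_bij (fun i _ => g.symm i) ?_ ?_ ?_
    · intro i hi
      simpa using hi
    · intro i _ j _ hij
      simpa using hij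
    · intro i hi
      exact ⟨g i, by simpa using hi, by simp⟩

theorem exp_submatrix_equiv {m n : Type} [Fintype m] [DecidableEq m] [Fintype n] [DecidableEq n]
    (e : m ≃ n) (A : Matrix n n ℂ) :
    NormedSpace.exp (A.submatrix e e) = (NormedSpace.exp A).submatrix e e := by
  have hp : ∀ k : ℕ, (A.submatrix e e) ^ k = (A ^ k).submatrix e e := by
    intro k
    induction k with
    | zero => simp
    | succ k ih => rw [pow_succ, ih, pow_succ, Matrix.submatrix_mul_equiv]
  ext x y
  refine (hasSum_exp_apply (A.submatrix e e) x y).unique ?_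
  have := hasSum_exp_apply A (e x) (e y)
  simpa [hp] using this

/-- Relabelling of configurations induced by relabellings of sites and particles. -/
def cfgEquiv (σ : Λ ≃ Λ') (t : ι ≃ ι') : (ι → Λ) ≃ (ι' → Λ') := t.arrowCongr σ

theorem emb_reindex (σ : Λ ≃ Λ') (t : ι ≃ ι') (i : ι) {h : Matrix Λ Λ ℂ} {h' : Matrix Λ' Λ' ℂ}
    (hh : ∀ x y, h' (σ x) (σ y) = h x y) (X Y : ι → Λ) :
    emb (t i) h' (cfgEquiv σ t X) (cfgEquiv σ t Y) = emb i h X Y := by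
  have : (∀ j, j ≠ t i → cfgEquiv σ t X j = cfgEquiv σ t Y j) ↔ (∀ j, j ≠ i → X j = Y j) := by
    constructor
    · intro H j hj
      have := H (t j) (by simpa using hj)
      simpa [cfgEquiv] using this
    · intro H j hj
      have := H (t.symm j) (by rintro rfl; simp at hj)
      simp [cfgEquiv, this]
  simp only [emb, this]
  simp [cfgEquiv, hh]

theorem Hm_reindex (σ : Λ ≃ Λ') (t : ι ≃ ι') {h : Matrix Λ Λ ℂ} {h' : Matrix Λ' Λ' ℂ}
    {w : Λ → Λ → ℝ} {w' : Λ' → Λ' → ℝ}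
    (hh : ∀ x y, h' (σ x) (σ y) = h x y) (hw : ∀ x y, w' (σ x) (σ y) = w x y) (X Y : ι → Λ) :
    Hm h' w' (cfgEquiv σ t X) (cfgEquiv σ t Y) = Hm h w X Y := by
  simp only [Hm, Matrix.add_apply]
  congr 1
  · simp only [dG, Matrix.sum_apply]
    rw [← Equiv.sum_comp t]
    exact Finset.sum_congr rfl fun i _ => emb_reindex σ t i hh X Y
  · by_cases hXY : X = Y
    · subst hXY
      simp only [Matrix.diagonal_apply_eq, pairE]
      rw [← Equiv.sum_comp t]
      congr 3
      ext i
      rw [← Equiv.sum_comp t]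
      simp [cfgEquiv, hw]
    · rw [Matrix.diagonal_apply_ne _ hXY, Matrix.diagonal_apply_ne]
      simpa using hXY

theorem occ_reindex (σ : Λ ≃ Λ') (t : ι ≃ ι') (X : ι → Λ) (x : Λ) :
    occ (cfgEquiv σ t X) (σ x) = occ X x := by
  simp only [occ]
  refine Finset.card_bij (fun i _ => t.symm i) ?_ ?_ ?_
  · intro i hi
    simpa [cfgEquiv] using hi
  · intro i _ j _ hij
    simpa using hij
  · intro i hi
    exact ⟨t i, by simpa [cfgEquiv] using hi, by simp⟩

theorem Wm_reindex (σ : Λ ≃ Λ') (t : ι ≃ ι') (X Y : ι → Λ) :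
    Wm Λ' ι' (cfgEquiv σ t X) (cfgEquiv σ t Y) = Wm Λ ι X Y := by
  rw [Wm_eq_prod, Wm_eq_prod, ← Equiv.prod_comp σ]
  exact Finset.prod_congr rfl fun x _ => by rw [occ_reindex, occ_reindex]

theorem rhoM_reindex (σ : Λ ≃ Λ') (t : ι ≃ ι') {h : Matrix Λ Λ ℂ} {h' : Matrix Λ' Λ' ℂ}
    {w : Λ → Λ → ℝ} {w' : Λ' → Λ' → ℝ}
    (hh : ∀ x y, h' (σ x) (σ y) = h x y) (hw : ∀ x y, w' (σ x) (σ y) = w x y) (X Y : ι → Λ) :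
    rhoM h' w' (cfgEquiv σ t X) (cfgEquiv σ t Y) = rhoM h w X Y := by
  have h1 : (-(Hm (ι := ι') h' w')).submatrix (cfgEquiv σ t) (cfgEquiv σ t) = -Hm h w := by
    ext X Y
    simp [Hm_reindex σ t hh hw]
  have h2 : (Pm Λ' ι').submatrix (cfgEquiv σ t) (cfgEquiv σ t) = Pm Λ ι := by
    ext X Y
    simp [Pm, Wm_reindex, Fintype.card_congr t]
  rw [rhoM, rhoM, ← h1, ← h2, exp_submatrix_equiv, Matrix.submatrix_mul_equiv]
  rfl

theorem rho_reindex (σ : Λ ≃ Λ') (t : ι ≃ ι') {h : Matrix Λ Λ ℂ} {h' : Matrix Λ' Λ' ℂ}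
    {w : Λ → Λ → ℝ} {w' : Λ' → Λ' → ℝ}
    (hh : ∀ x y, h' (σ x) (σ y) = h x y) (hw : ∀ x y, w' (σ x) (σ y) = w x y) (X : ι → Λ) :
    rho h' w' (cfgEquiv σ t X) = rho h w X := by
  rw [rho, rho, rhoM_reindex σ t hh hw]

theorem tau_reindex (σ : Λ ≃ Λ') (t : ι ≃ ι') {h : Matrix Λ Λ ℂ} {h' : Matrix Λ' Λ' ℂ}
    {w : Λ → Λ → ℝ} {w' : Λ' → Λ' → ℝ}
    (hh : ∀ x y, h' (σ x) (σ y) = h x y) (hw : ∀ x y, w' (σ x) (σ y) = w x y) :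
    tau ι' h' w' = tau ι h w := by
  rw [tau_eq_sum, tau_eq_sum, ← Equiv.sum_comp (cfgEquiv σ t)]
  exact Finset.sum_congr rfl fun X _ => rho_reindex σ t hh hw X

theorem Xi_reindex (σ : Λ ≃ Λ') {h : Matrix Λ Λ ℂ} {h' : Matrix Λ' Λ' ℂ}
    {w : Λ → Λ → ℝ} {w' : Λ' → Λ' → ℝ}
    (hh : ∀ x y, h' (σ x) (σ y) = h x y) (hw : ∀ x y, w' (σ x) (σ y) = w x y) :
    Xi h' w' = Xi h w := by
  simp only [Xi, tau_reindex σ (Equiv.refl (Fin _)) hh hw]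

/-- The canonical trace is real, so that `tau` loses nothing by taking its real part. -/
theorem trace_rhoM {h : Matrix Λ Λ ℂ} (hh : h.IsHermitian) (w : Λ → Λ → ℝ) :
    (rhoM (ι := ι) h w).trace = (tau ι h w : ℂ) := by
  apply Complex.ext
  · simp [tau]
  · rw [Complex.ofReal_im, Matrix.trace, Complex.im_sum]
    exact Finset.sum_eq_zero fun X _ =>
      ((Complex.nonneg_iff.mp ((rhoM_posSemidef hh w).diag_nonneg (i := X))).2).symm

/-- `n! Tr(e^{-H} P)`, as a sum over pairs of configurations. -/
theorem factorial_tau {h : Matrix Λ Λ ℂ} (hh : h.IsHermitian) (w : Λ → Λ → ℝ) :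
    ((Fintype.card ι).factorial : ℂ) * (tau ι h w : ℂ) =
      ∑ Y : ι → Λ, ∑ X : ι → Λ, NormedSpace.exp (-(Hm h w)) X Y * Wm Λ ι Y X := by
  rw [← trace_rhoM hh, rhoM, Pm, Matrix.mul_smul, Matrix.trace_smul, smul_eq_mul,
    mul_inv_cancel_left₀ (fact_ne _), Matrix.trace, Finset.sum_comm]
  rfl

end Reindex

section Decouple
variable {A B ι : Type} [Fintype A] [DecidableEq A] [Fintype B] [DecidableEq B]
  [Fintype ι] [DecidableEq ι]

/-- Interaction of two decoupled systems. -/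
def wSum (u : A → A → ℝ) (v : B → B → ℝ) : A ⊕ B → A ⊕ B → ℝ
  | .inl a, .inl a' => u a a'
  | .inr b, .inr b' => v b b'
  | _, _ => 0

/-- The configuration in which the particles in `S` occupy `A` and the others occupy `B`. -/
def join (S : Finset ι) (p : {i // i ∈ S} → A) (q : {i // i ∉ S} → B) : ι → A ⊕ B :=
  fun i => if hi : i ∈ S then .inl (p ⟨i, hi⟩) else .inr (q ⟨i, hi⟩)

theorem join_mem (S : Finset ι) (p : {i // i ∈ S} → A) (q : {i // i ∉ S} → B) (i : {i // i ∈ S}) :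
    join S p q i = .inl (p i) := by simp [join]

theorem join_not_mem (S : Finset ι) (p : {i // i ∈ S} → A) (q : {i // i ∉ S} → B)
    (i : {i // i ∉ S}) : join S p q i = .inr (q i) := by simp [join, i.2]

theorem join_inj (S : Finset ι) (p p' : {i // i ∈ S} → A) (q q' : {i // i ∉ S} → B) :
    join S p q = join S p' q' ↔ p = p' ∧ q = q' := by
  constructor
  · intro h
    constructor
    · ext i
      have := congrFun h i
      rw [join_mem, join_mem] at this
      exact Sum.inl_injective this
    · ext i
      have := congrFun h i
      rw [join_not_mem, join_not_mem] at this
      exact Sum.inr_injective this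
  · rintro ⟨rfl, rfl⟩; rfl

theorem exists_join (S : Finset ι) (X : ι → A ⊕ B) (hX : ∀ i, i ∈ S ↔ (X i).isLeft) :
    ∃ p q, X = join S p q := by
  refine ⟨fun i => (X i).getLeft ((hX i).mp i.2), fun i => (X i).getRight (by
    have := i.2; rw [hX] at this; simpa using this), ?_⟩
  ext i
  by_cases hi : i ∈ S
  · simp [join, hi]
  · simp [join, hi]

theorem sum_join {M : Type*} [AddCommMonoid M] (f : (ι → A ⊕ B) → M) :
    ∑ X, f X = ∑ S : Finset ι, ∑ p : {i // i ∈ S} → A, ∑ q : {i // i ∉ S} → B, f (join S p q) := by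
  have h1 : ∀ S : Finset ι, ∑ p : {i // i ∈ S} → A, ∑ q : {i // i ∉ S} → B, f (join S p q)
      = ∑ r : ({i // i ∈ S} → A) × ({i // i ∉ S} → B), f (join S r.1 r.2) := fun S => by
    rw [Fintype.sum_prod_type]
  simp only [h1]
  rw [← Fintype.sum_sigma' (fun (S : Finset ι) (r : ({i // i ∈ S} → A) × ({i // i ∉ S} → B)) =>
    f (join S r.1 r.2))]
  symm
  refine Fintype.sum_bijective (fun r : (Σ S : Finset ι, ({i // i ∈ S} → A) × ({i // i ∉ S} → B)) =>
    join r.1 r.2.1 r.2.2) ⟨?_, ?_⟩ _ _ (fun _ => rfl)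
  · rintro ⟨S, p, q⟩ ⟨S', p', q'⟩ h
    have hS : S = S' := by
      ext i
      have h2 := congrArg Sum.isLeft (congrFun h i)
      by_cases hi : i ∈ S <;> by_cases hi' : i ∈ S' <;> simp_all [join]
    subst hS
    obtain ⟨rfl, rfl⟩ := (join_inj S p p' q q').mp h
    rfl
  · intro X
    obtain ⟨p, q, h⟩ := exists_join (Finset.univ.filter fun i => (X i).isLeft) X (by simp)
    exact ⟨⟨_, p, q⟩, h.symm⟩

theorem occ_join_inl (S : Finset ι) (p : {i // i ∈ S} → A) (q : {i // i ∉ S} → B) (a : A) :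
    occ (join S p q) (.inl a) = occ p a := by
  simp only [occ]
  symm
  refine Finset.card_bij (fun i _ => i.1) ?_ ?_ ?_
  · intro i hi
    simp only [Finset.mem_filter, Finset.mem_univ, true_and] at hi ⊢
    rw [join_mem, hi]
  · intro i _ j _ hij
    exact Subtype.ext hij
  · intro i hi
    simp only [Finset.mem_filter, Finset.mem_univ, true_and] at hi
    by_cases h : i ∈ S
    · refine ⟨⟨i, h⟩, ?_, rfl⟩
      simpa [join, h] using hi
    · simp [join, h] at hi

theorem occ_join_inr (S : Finset ι) (p : {i // i ∈ S} → A) (q : {i // i ∉ S} → B) (b : B) :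
    occ (join S p q) (.inr b) = occ q b := by
  simp only [occ]
  symm
  refine Finset.card_bij (fun i _ => i.1) ?_ ?_ ?_
  · intro i hi
    simp only [Finset.mem_filter, Finset.mem_univ, true_and] at hi ⊢
    rw [join_not_mem, hi]
  · intro i _ j _ hij
    exact Subtype.ext hij
  · intro i hi
    simp only [Finset.mem_filter, Finset.mem_univ, true_and] at hi
    by_cases h : i ∈ S
    · simp [join, h] at hi
    · refine ⟨⟨i, h⟩, ?_, rfl⟩
      simpa [join, h] using hi

theorem Wm_join (S : Finset ι) (p p' : {i // i ∈ S} → A) (q q' : {i // i ∉ S} → B) :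
    Wm (A ⊕ B) ι (join S p q) (join S p' q') = Wm A _ p p' * Wm B _ q q' := by
  simp only [Wm_eq_prod, Fintype.prod_sum_type, occ_join_inl, occ_join_inr]

theorem pairE_join (u : A → A → ℝ) (v : B → B → ℝ) (S : Finset ι) (p : {i // i ∈ S} → A)
    (q : {i // i ∉ S} → B) : pairE (wSum u v) (join S p q) = pairE u p + pairE v q := by
  simp only [pairE_occ, Fintype.sum_sum_type, occ_join_inl, occ_join_inr, wSum]
  simp
  ring

theorem emb_join_mem (a : Matrix A A ℂ) (b : Matrix B B ℂ) (S : Finset ι)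
    (p p' : {i // i ∈ S} → A) (q q' : {i // i ∉ S} → B) (i : {i // i ∈ S}) :
    emb i.1 (fromBlocks a 0 0 b) (join S p q) (join S p' q') =
      emb i a p p' * (1 : Matrix _ _ ℂ) q q' := by
  have : (∀ j, j ≠ i.1 → join S p q j = join S p' q' j) ↔
      (∀ j : {i // i ∈ S}, j ≠ i → p j = p' j) ∧ q = q' := by
    constructor
    · intro H
      constructor
      · intro j hj
        have := H j (fun h => hj (Subtype.ext h))
        rw [join_mem, join_mem] at this
        exact Sum.inl_injective this
      · ext j
        have := H j (fun h => j.2 (h ▸ i.2))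
        rw [join_not_mem, join_not_mem] at this
        exact Sum.inr_injective this
    · rintro ⟨H, rfl⟩ j hj
      by_cases h : j ∈ S
      · simp only [join, h, dif_pos]
        rw [H ⟨j, h⟩ (fun h => hj (congrArg Subtype.val h))]
      · simp [join, h]
  simp only [emb, this, join_mem, fromBlocks_apply₁₁, Matrix.one_apply]
  by_cases h1 : q = q' <;> simp [h1]

theorem emb_join_not_mem (a : Matrix A A ℂ) (b : Matrix B B ℂ) (S : Finset ι)
    (p p' : {i // i ∈ S} → A) (q q' : {i // i ∉ S} → B) (i : {i // i ∉ S}) :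
    emb i.1 (fromBlocks a 0 0 b) (join S p q) (join S p' q') =
      (1 : Matrix _ _ ℂ) p p' * emb i b q q' := by
  have : (∀ j, j ≠ i.1 → join S p q j = join S p' q' j) ↔
      (∀ j : {i // i ∉ S}, j ≠ i → q j = q' j) ∧ p = p' := by
    constructor
    · intro H
      constructor
      · intro j hj
        have := H j (fun h => hj (Subtype.ext h))
        rw [join_not_mem, join_not_mem] at this
        exact Sum.inr_injective this
      · ext j
        have := H j (fun h => i.2 (h ▸ j.2))
        rw [join_mem, join_mem] at this
        exact Sum.inl_injective this
    · rintro ⟨H, rfl⟩ j hj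
      by_cases h : j ∈ S
      · simp [join, h]
      · simp only [join, h, dif_neg, not_false_eq_true]
        rw [H ⟨j, h⟩ (fun h => hj (congrArg Subtype.val h))]
  simp only [emb, this, join_not_mem, fromBlocks_apply₂₂, Matrix.one_apply]
  by_cases h1 : p = p' <;> simp [h1]

theorem Hm_join (a : Matrix A A ℂ) (b : Matrix B B ℂ) (u : A → A → ℝ) (v : B → B → ℝ)
    (S : Finset ι) (p p' : {i // i ∈ S} → A) (q q' : {i // i ∉ S} → B) :
    Hm (fromBlocks a 0 0 b) (wSum u v) (join S p q) (join S p' q') =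
      Hm a u p p' * (1 : Matrix _ _ ℂ) q q' + (1 : Matrix _ _ ℂ) p p' * Hm b v q q' := by
  simp only [Hm, Matrix.add_apply, dG, Matrix.sum_apply]
  have hs : ∑ i, emb i (fromBlocks a 0 0 b) (join S p q) (join S p' q') =
      (∑ i, emb i a p p') * (1 : Matrix _ _ ℂ) q q' +
        (1 : Matrix _ _ ℂ) p p' * ∑ i, emb i b q q' := by
    rw [← Fintype.sum_subtype_add_sum_subtype (fun i => i ∈ S), Finset.sum_mul, Finset.mul_sum]
    simp only [emb_join_mem, emb_join_not_mem]
    congr!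
  have : diagonal (fun X => (pairE (wSum u v) X : ℂ)) (join S p q) (join S p' q') =
      diagonal (fun X => (pairE u X : ℂ)) p p' * (1 : Matrix _ _ ℂ) q q' +
      (1 : Matrix _ _ ℂ) p p' * diagonal (fun X => (pairE v X : ℂ)) q q' := by
    simp only [Matrix.diagonal_apply, join_inj, Matrix.one_apply]
    by_cases h1 : p = p' <;> by_cases h2 : q = q' <;> simp [h1, h2]
    rw [pairE_join, Complex.ofReal_add]
  rw [this, hs]
  ring

theorem Hm_join_zero (a : Matrix A A ℂ) (b : Matrix B B ℂ) (u : A → A → ℝ) (v : B → B → ℝ)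
    (S : Finset ι) (X : ι → A ⊕ B) (p' : {i // i ∈ S} → A) (q' : {i // i ∉ S} → B)
    (hX : ∀ p q, X ≠ join S p q) :
    Hm (fromBlocks a 0 0 b) (wSum u v) X (join S p' q') = 0 := by
  rw [Hm, Matrix.add_apply, Matrix.diagonal_apply_ne _ (hX p' q'), add_zero, dG, Matrix.sum_apply]
  refine Finset.sum_eq_zero fun i _ => ?_
  rw [emb]
  split_ifs with h
  · by_contra h0
    have hi : (X i).isLeft = (join S p' q' i).isLeft := by
      cases h1 : X i <;> cases h2 : join S p' q' i <;> simp_all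
    obtain ⟨p, q, h3⟩ := exists_join S X (fun j => by
      have : (X j).isLeft = (join S p' q' j).isLeft := by
        by_cases hj : j = i
        · rw [hj, hi]
        · rw [h j hj]
      rw [this]
      by_cases hj : j ∈ S <;> simp [join, hj])
    exact hX p q h3
  · rfl

/-- The exponential of a Kronecker sum. -/
theorem exp_kron {m n : Type} [Fintype m] [DecidableEq m] [Fintype n] [DecidableEq n]
    (M : Matrix m m ℂ) (N : Matrix n n ℂ) :
    NormedSpace.exp (Matrix.of fun x y : m × n => M x.1 y.1 * (1 : Matrix n n ℂ) x.2 y.2 +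
      (1 : Matrix m m ℂ) x.1 y.1 * N x.2 y.2) =
    Matrix.of fun x y => NormedSpace.exp M x.1 y.1 * NormedSpace.exp N x.2 y.2 := by
  set M' : Matrix (m × n) (m × n) ℂ :=
    Matrix.of fun x y => M x.1 y.1 * (1 : Matrix n n ℂ) x.2 y.2 with hM'
  set N' : Matrix (m × n) (m × n) ℂ :=
    Matrix.of fun x y => (1 : Matrix m m ℂ) x.1 y.1 * N x.2 y.2 with hN'
  change NormedSpace.exp (M' + N') = _
  have hMN : M' * N' = Matrix.of fun x y => M x.1 y.1 * N x.2 y.2 := by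
    ext x y
    rw [Matrix.mul_apply, Fintype.sum_prod_type]
    simp [hM', hN', Matrix.one_apply]
  have hNM : N' * M' = Matrix.of fun x y => M x.1 y.1 * N x.2 y.2 := by
    ext x y
    rw [Matrix.mul_apply, Fintype.sum_prod_type]
    simp [hM', hN', Matrix.one_apply, mul_comm]
  rw [Matrix.exp_add_of_commute _ _ (hMN.trans hNM.symm)]
  have h1 : NormedSpace.exp M' =
      Matrix.of fun x y => NormedSpace.exp M x.1 y.1 * (1 : Matrix n n ℂ) x.2 y.2 := by
    ext x y
    have := exp_intertwine M' M
      (Matrix.of fun (x : m × n) (z : m) => if x.2 = y.2 then if x.1 = z then 1 else 0 else 0) (by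
      ext x z
      simp [Matrix.mul_apply, hM', Fintype.sum_prod_type, Matrix.one_apply])
    have := congrFun (congrFun this x) y.1
    simpa [Matrix.mul_apply, Fintype.sum_prod_type, Matrix.one_apply] using this
  have h2 : NormedSpace.exp N' =
      Matrix.of fun x y => (1 : Matrix m m ℂ) x.1 y.1 * NormedSpace.exp N x.2 y.2 := by
    ext x y
    have := exp_intertwine N' N
      (Matrix.of fun (x : m × n) (z : n) => if x.1 = y.1 then if x.2 = z then 1 else 0 else 0) (by
      ext x z
      simp [Matrix.mul_apply, hN', Fintype.sum_prod_type, Matrix.one_apply])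
    have := congrFun (congrFun this x) y.2
    simpa [Matrix.mul_apply, Fintype.sum_prod_type, Matrix.one_apply] using this
  rw [h1, h2]
  ext x y
  rw [Matrix.mul_apply, Fintype.sum_prod_type]
  simp [Matrix.one_apply]

/-- With the particles in `S` in `A` and the others in `B`, the Hamiltonian is a Kronecker sum, and
its exponential factorizes. -/
theorem exp_join (a : Matrix A A ℂ) (b : Matrix B B ℂ) (u : A → A → ℝ) (v : B → B → ℝ)
    (S : Finset ι) (X : ι → A ⊕ B) (p : {i // i ∈ S} → A) (q : {i // i ∉ S} → B) :
    NormedSpace.exp (-(Hm (fromBlocks a 0 0 b) (wSum u v))) X (join S p q) =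
      ∑ p', ∑ q', if X = join S p' q' then
        NormedSpace.exp (-(Hm a u)) p' p * NormedSpace.exp (-(Hm b v)) q' q else 0 := by
  have h1 := exp_intertwine (-(Hm (ι := ι) (fromBlocks a 0 0 b) (wSum u v)))
    (Matrix.of fun x y : ({i // i ∈ S} → A) × ({i // i ∉ S} → B) =>
      (-(Hm a u)) x.1 y.1 * (1 : Matrix _ _ ℂ) x.2 y.2 +
      (1 : Matrix _ _ ℂ) x.1 y.1 * (-(Hm b v)) x.2 y.2)
    (Matrix.of fun X z => if X = join S z.1 z.2 then 1 else 0) (by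
      ext X z
      simp only [Matrix.mul_apply, Matrix.of_apply, mul_ite, mul_one, mul_zero,
        Finset.sum_ite_eq', Finset.mem_univ, if_true, ite_mul, one_mul, zero_mul]
      by_cases hX : ∃ p q, X = join S p q
      · obtain ⟨p, q, rfl⟩ := hX
        simp only [join_inj, Fintype.sum_prod_type, ite_and]
        simp only [Finset.sum_ite_irrel, Finset.sum_const_zero, Finset.sum_ite_eq, Finset.mem_univ,
          if_true, Matrix.neg_apply, Hm_join]
        ring
      · push Not at hX
        rw [Matrix.neg_apply, Hm_join_zero _ _ _ _ _ _ _ _ hX, neg_zero]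
        symm
        exact Finset.sum_eq_zero fun r _ => if_neg (hX _ _))
  rw [exp_kron] at h1
  have h2 := congrFun (congrFun h1 X) (p, q)
  simp only [Matrix.mul_apply, Matrix.of_apply, mul_ite, mul_one, mul_zero, Finset.sum_ite_eq',
    Finset.mem_univ, if_true, ite_mul, one_mul, zero_mul, Fintype.sum_prod_type] at h2
  exact h2

theorem fromBlocks_isHermitian {a : Matrix A A ℂ} {b : Matrix B B ℂ} (ha : a.IsHermitian)
    (hb : b.IsHermitian) : (fromBlocks a 0 0 b).IsHermitian :=
  ha.fromBlocks (by simp) hb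

theorem tau_decouple_card {a : Matrix A A ℂ} {b : Matrix B B ℂ} (ha : a.IsHermitian)
    (hb : b.IsHermitian) (u : A → A → ℝ) (v : B → B → ℝ) :
    ((Fintype.card ι).factorial : ℂ) * (tau ι (fromBlocks a 0 0 b) (wSum u v) : ℂ) =
      ∑ S : Finset ι, (((Fintype.card {i // i ∈ S}).factorial : ℂ) * tau {i // i ∈ S} a u) *
        (((Fintype.card {i // i ∉ S}).factorial : ℂ) * tau {i // i ∉ S} b v) := by
  rw [factorial_tau (fromBlocks_isHermitian ha hb), sum_join]
  refine Finset.sum_congr rfl fun S _ => ?_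
  rw [factorial_tau ha, factorial_tau hb, Finset.sum_mul_sum]
  refine Finset.sum_congr rfl fun p _ => Finset.sum_congr rfl fun q _ => ?_
  rw [Finset.sum_mul_sum]
  simp only [exp_join, Finset.sum_mul, ite_mul, zero_mul]
  rw [Finset.sum_comm]
  refine Finset.sum_congr rfl fun p' _ => ?_
  rw [Finset.sum_comm]
  refine Finset.sum_congr rfl fun q' _ => ?_
  rw [Finset.sum_ite_eq' Finset.univ, if_pos (Finset.mem_univ _), Wm_join]
  ring

theorem tau_decouple {a : Matrix A A ℂ} {b : Matrix B B ℂ} (ha : a.IsHermitian)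
    (hb : b.IsHermitian) (u : A → A → ℝ) (v : B → B → ℝ) (n : ℕ) :
    tau (Fin n) (fromBlocks a 0 0 b) (wSum u v) =
      ∑ k ∈ Finset.range (n + 1), tau (Fin k) a u * tau (Fin (n - k)) b v := by
  have h1 := tau_decouple_card (ι := Fin n) ha hb u v
  have h2 : ∀ S : Finset (Fin n), tau {i // i ∈ S} a u = tau (Fin S.card) a u := fun S =>
    (tau_reindex (Equiv.refl A) (Fintype.equivFinOfCardEq (by simp)) (fun _ _ => rfl)
      (fun _ _ => rfl)).symm
  have h3 : ∀ S : Finset (Fin n), tau {i // i ∉ S} b v = tau (Fin (n - S.card)) b v := fun S =>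
    (tau_reindex (Equiv.refl B) (Fintype.equivFinOfCardEq (by simp)) (fun _ _ => rfl)
      (fun _ _ => rfl)).symm
  have h4 : ∀ S : Finset (Fin n), Fintype.card {i // i ∈ S} = S.card := fun S => by simp
  have h5 : ∀ S : Finset (Fin n), Fintype.card {i // i ∉ S} = n - S.card := fun S => by simp
  simp only [h2, h3, h4, h5, Fintype.card_fin] at h1
  rw [← Finset.powerset_univ, Finset.sum_powerset_apply_card (fun k => ((k.factorial : ℂ) *
    (tau (Fin k) a u : ℂ)) * (((n - k).factorial : ℂ) * (tau (Fin (n - k)) b v : ℂ)))] at h1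
  have h6 : ((tau (Fin n) (fromBlocks a 0 0 b) (wSum u v) : ℝ) : ℂ) =
      ((∑ k ∈ Finset.range (n + 1), tau (Fin k) a u * tau (Fin (n - k)) b v : ℝ) : ℂ) := by
    apply mul_left_cancel₀ (fact_ne n)
    rw [h1]
    push_cast
    rw [Finset.mul_sum, Finset.card_univ, Fintype.card_fin]
    refine Finset.sum_congr rfl fun k hk => ?_
    have hk' : k ≤ n := by simpa [Nat.lt_succ_iff] using hk
    rw [nsmul_eq_mul, ← Nat.choose_mul_factorial_mul_factorial hk']
    push_cast
    ring
  exact_mod_cast h6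

/-- The grand canonical partition function of two decoupled systems factorizes. -/
theorem Xi_decouple {a : Matrix A A ℂ} {b : Matrix B B ℂ} (ha : a.IsHermitian)
    (hb : b.IsHermitian) {u : A → A → ℝ} {v : B → B → ℝ}
    (hsa : Summable fun n : ℕ => tau (Fin n) a u) (hsb : Summable fun n : ℕ => tau (Fin n) b v) :
    (Summable fun n : ℕ => tau (Fin n) (fromBlocks a 0 0 b) (wSum u v)) ∧
      Xi (fromBlocks a 0 0 b) (wSum u v) = Xi a u * Xi b v := by
  have h := hasSum_sum_range_mul_of_summable_norm hsa.norm hsb.norm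
  simp only [← tau_decouple ha hb u v] at h
  exact ⟨h.summable, h.tsum_eq⟩

end Decouple
end BoseGas

namespace BoseGas
open scoped ComplexOrder

/-! ### Gaussian moments -/

theorem integral_norm_pow_exp (k : ℕ) :
    ∫ z : ℂ, ‖z‖ ^ k * Real.exp (-Complex.normSq z) = π * Real.Gamma ((k + 2 : ℝ) / 2) := by
  have h := Complex.integral_rpow_mul_exp_neg_rpow (p := 2) (q := k) (by norm_num)
    (by have : (0 : ℝ) ≤ k := k.cast_nonneg
        linarith)
  have h2 : 2 * π / 2 = π := by ring
  rw [h2] at h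
  rw [← h]
  congr 1
  ext z
  rw [Real.rpow_natCast, Complex.normSq_eq_norm_sq]
  norm_num

theorem integrable_norm_pow_exp (k : ℕ) :
    Integrable fun z : ℂ => ‖z‖ ^ k * Real.exp (-Complex.normSq z) := by
  apply Integrable.of_integral_ne_zero
  rw [integral_norm_pow_exp]
  exact (mul_pos Real.pi_pos (Real.Gamma_pos_of_pos (by positivity))).ne'

theorem integrable_site (a b : ℕ) :
    Integrable fun z : ℂ => z ^ a * conj z ^ b * (Real.exp (-Complex.normSq z) : ℂ) := by
  refine (integrable_norm_pow_exp (a + b)).mono' ?_ ?_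
  · exact (by fun_prop : Continuous fun z : ℂ =>
      z ^ a * conj z ^ b * (Real.exp (-Complex.normSq z) : ℂ)).aestronglyMeasurable
  · refine Eventually.of_forall fun z => ?_
    rw [norm_mul, norm_mul, norm_pow, norm_pow, RCLike.norm_conj, Complex.norm_real,
      Real.norm_of_nonneg (Real.exp_pos _).le, pow_add]

/-- Moments of the standard complex Gaussian; off-diagonal ones vanish by rotation invariance. -/
theorem integral_site (a b : ℕ) :
    ∫ z : ℂ, z ^ a * conj z ^ b * (Real.exp (-Complex.normSq z) : ℂ)
      = π * if a = b then (a.factorial : ℂ) else 0 := by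
  split_ifs with hab
  · subst hab
    have h := integral_norm_pow_exp (2 * a)
    have h1 : ((2 * a : ℕ) + 2 : ℝ) / 2 = a + 1 := by push_cast; ring
    rw [h1, Real.Gamma_nat_eq_factorial] at h
    have h2 : ((∫ z : ℂ, ‖z‖ ^ (2 * a) * Real.exp (-Complex.normSq z) : ℝ) : ℂ)
        = π * a.factorial := by rw [h]; push_cast; ring
    rw [← h2, ← integral_complex_ofReal]
    congr 1
    ext z
    rw [← mul_pow, Complex.mul_conj, Complex.normSq_eq_norm_sq, pow_mul]
    push_cast
    ring
  · rw [mul_zero]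
    -- rotating by an angle `π / (a - b)` multiplies the integrand by `-1`
    have hne : ((a : ℝ) - b) ≠ 0 := by
      rw [sub_ne_zero]; exact_mod_cast hab
    set c : Circle := Circle.exp (π / (a - b)) with hc
    have hc1 : (c : ℂ) ^ a * conj (c : ℂ) ^ b = -1 := by
      rw [hc, Circle.coe_exp, ← Complex.exp_conj, ← Complex.exp_nat_mul, ← Complex.exp_nat_mul,
        ← Complex.exp_add, ← Complex.exp_pi_mul_I]
      congr 1
      have hne' : ((a : ℂ) - b) ≠ 0 := by exact_mod_cast hne
      simp only [map_mul, Complex.conj_ofReal, Complex.conj_I]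
      push_cast
      field_simp
      ring
    have h1 := (LinearIsometryEquiv.measurePreserving (rotation c)).integral_comp'
      (f := (rotation c).toHomeomorph.toMeasurableEquiv)
      (fun z : ℂ => z ^ a * conj z ^ b * (Real.exp (-Complex.normSq z) : ℂ))
    have h2 : ∀ z : ℂ, (rotation c z) ^ a * conj (rotation c z) ^ b
        * (Real.exp (-Complex.normSq (rotation c z)) : ℂ)
        = -1 * (z ^ a * conj z ^ b * (Real.exp (-Complex.normSq z) : ℂ)) := by
      intro z
      rw [← hc1, rotation_apply, Complex.normSq_mul, Circle.normSq_coe, one_mul, map_mul, mul_pow,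
        mul_pow]
      ring
    have h3 : ∫ z : ℂ, (rotation c z) ^ a * conj (rotation c z) ^ b
        * (Real.exp (-Complex.normSq (rotation c z)) : ℂ)
        = ∫ z : ℂ, z ^ a * conj z ^ b * (Real.exp (-Complex.normSq z) : ℂ) := h1
    simp_rw [h2] at h3
    rw [integral_const_mul] at h3
    have h4 : ∀ w : ℂ, -1 * w = w → w = 0 := fun w hw => by
      have : (2 : ℂ) * w = 0 := by linear_combination -hw
      simpa using this
    exact h4 _ h3

section Field
variable {Λ ι : Type} [Fintype Λ] [DecidableEq Λ] [Fintype ι] [DecidableEq ι]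

/-- The product wave function `φ^{⊗ι}`. -/
def mono (φ : Λ → ℂ) (X : ι → Λ) : ℂ := ∏ i, φ (X i)

/-- The squared `ℓ²` norm of a field. -/
def nrm (φ : Λ → ℂ) : ℝ := ∑ x, Complex.normSq (φ x)

/-- The expectation of a many-body matrix in the state `φ^{⊗ι}`. -/
def br (M : Matrix (ι → Λ) (ι → Λ) ℂ) (φ : Λ → ℂ) : ℂ :=
  ∑ Y, ∑ X, conj (mono φ Y) * M Y X * mono φ X

/-- The Gaussian weight `e^{-|φ|²}`. -/
def gw (φ : Λ → ℂ) : ℂ := (Real.exp (-nrm φ) : ℂ)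

theorem mono_eq_occ (φ : Λ → ℂ) (X : ι → Λ) : mono φ X = ∏ x, φ x ^ occ X x := by
  rw [mono, ← Finset.prod_fiberwise_of_maps_to (t := Finset.univ) (g := X) (by simp)]
  refine Finset.prod_congr rfl fun x _ => ?_
  rw [occ, ← Finset.prod_const]
  refine Finset.prod_congr rfl fun i hi => ?_
  rw [(Finset.mem_filter.1 hi).2]

theorem gw_eq (φ : Λ → ℂ) : gw φ = ∏ x, (Real.exp (-Complex.normSq (φ x)) : ℂ) := by
  rw [gw, nrm, ← Finset.sum_neg_distrib, Real.exp_sum]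
  push_cast
  rfl

theorem mono_gauss_eq (X Y : ι → Λ) (φ : Λ → ℂ) : mono φ X * conj (mono φ Y) * gw φ =
    ∏ x, (φ x ^ occ X x * conj (φ x) ^ occ Y x * (Real.exp (-Complex.normSq (φ x)) : ℂ)) := by
  rw [mono_eq_occ, mono_eq_occ, gw_eq, map_prod, ← Finset.prod_mul_distrib,
    ← Finset.prod_mul_distrib]
  simp only [map_pow]

theorem integrable_mono (X Y : ι → Λ) :
    Integrable fun φ : Λ → ℂ => mono φ X * conj (mono φ Y) * gw φ := by
  simp_rw [mono_gauss_eq]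
  exact Integrable.fintype_prod (f := fun x z =>
    z ^ occ X x * conj z ^ occ Y x * (Real.exp (-Complex.normSq z) : ℂ))
    fun x => integrable_site _ _

/-- Wick's theorem. -/
theorem integral_mono (X Y : ι → Λ) :
    ∫ φ : Λ → ℂ, mono φ X * conj (mono φ Y) * gw φ
      = (π : ℂ) ^ Fintype.card Λ * Wm Λ ι X Y := by
  simp_rw [mono_gauss_eq]
  rw [integral_fintype_prod_volume_eq_prod (f := fun x z =>
    z ^ occ X x * conj z ^ occ Y x * (Real.exp (-Complex.normSq z) : ℂ))]
  simp_rw [integral_site]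
  rw [Finset.prod_mul_distrib, Finset.prod_const, Wm_eq_prod]
  rfl

/-- Adjoin one particle at `y`. -/
def adj (y : Λ) (X : ι → Λ) : Option ι → Λ := fun o => o.elim y X

theorem mono_adj (φ : Λ → ℂ) (y : Λ) (X : ι → Λ) : mono φ (adj y X) = φ y * mono φ X := by
  simp [mono, adj, Fintype.prod_option]

theorem occ_adj (y : Λ) (X : ι → Λ) (x : Λ) :
    occ (adj y X) x = occ X x + if y = x then 1 else 0 := by
  rw [occ, occ, Finset.card_filter, Finset.card_filter, Fintype.sum_option, add_comm]
  rfl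

theorem adj_eq_comp_iff (x y : Λ) (X Y : ι → Λ) (o : Option ι) (σ : Equiv.Perm ι) :
    adj x Y = adj y X ∘ (Equiv.swap none o * σ.optionCongr : Equiv.Perm (Option ι))
      ↔ (match o with
        | none => x = y ∧ Y = X ∘ σ
        | some i => X i = x ∧ Y = Function.update X i y ∘ σ) := by
  rw [funext_iff, Option.forall]
  cases o with
  | none => simp [adj, funext_iff]
  | some i =>
    simp only [adj, Function.comp, Equiv.Perm.mul_apply, Equiv.optionCongr_apply, Option.map,
      Option.elim, Equiv.swap_apply_left]
    refine and_congr eq_comm ?_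
    rw [funext_iff]
    refine forall_congr' fun j => ?_
    by_cases h : σ j = i
    · rw [h, Equiv.swap_apply_right]; simp [h]
    · rw [Equiv.swap_apply_of_ne_of_ne (by simp) (by simpa using h)]
      simp [Function.update_of_ne h]

theorem Wm_adj (x y : Λ) (X Y : ι → Λ) :
    Wm Λ (Option ι) (adj y X) (adj x Y) = (if x = y then Wm Λ ι X Y else 0)
      + ∑ i, if X i = x then Wm Λ ι (Function.update X i y) Y else 0 := by
  rw [Wm, ← Equiv.Perm.decomposeOption.symm.sum_comp, Fintype.sum_prod_type, Fintype.sum_option]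
  have key : ∀ o σ, (adj x Y = adj y X ∘ (Equiv.Perm.decomposeOption.symm (o, σ) :
      Equiv.Perm (Option ι))) ↔ _ := adj_eq_comp_iff x y X Y
  simp only [key]
  congr 1
  · by_cases h : x = y
    · simp [h, Wm]
    · simp [h]
  · refine Finset.sum_congr rfl fun i _ => ?_
    by_cases h : X i = x
    · simp [h, Wm]
    · simp [h]

theorem Wm_adj_diag (y : Λ) (X Y : ι → Λ) :
    Wm Λ (Option ι) (adj y X) (adj y Y) = (1 + occ X y) * Wm Λ ι X Y := by
  rw [Wm_adj, if_pos rfl, add_mul, one_mul, occ, Finset.card_filter]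
  push_cast
  rw [Finset.sum_mul]
  congr 1
  refine Finset.sum_congr rfl fun i _ => ?_
  split_ifs with h
  · rw [← h, Function.update_eq_self, one_mul]
  · simp

theorem integrable_br_aux (M : Matrix (ι → Λ) (ι → Λ) ℂ) (f : (Λ → ℂ) → ℂ)
    (hf : ∀ X Y : ι → Λ, Integrable fun φ : Λ → ℂ => f φ * (mono φ X * conj (mono φ Y) * gw φ)) :
    (Integrable fun φ : Λ → ℂ => f φ * br M φ * gw φ) ∧
    ∫ φ : Λ → ℂ, f φ * br M φ * gw φ = ∑ Y, ∑ X, M Y X *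
      ∫ φ : Λ → ℂ, f φ * (mono φ X * conj (mono φ Y) * gw φ) := by
  have h : ∀ φ : Λ → ℂ, f φ * br M φ * gw φ = ∑ Y, ∑ X, M Y X *
      (f φ * (mono φ X * conj (mono φ Y) * gw φ)) := by
    intro φ
    rw [br, Finset.mul_sum, Finset.sum_mul]
    refine Finset.sum_congr rfl fun Y _ => ?_
    rw [Finset.mul_sum, Finset.sum_mul]
    refine Finset.sum_congr rfl fun X _ => ?_
    ring
  simp_rw [h]
  refine ⟨integrable_finsetSum _ fun Y _ => integrable_finsetSum _ fun X _ =>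
    (hf X Y).const_mul _, ?_⟩
  refine (integral_finsetSum _ fun Y _ => integrable_finsetSum _ fun X _ =>
    (hf X Y).const_mul _).trans ?_
  refine Finset.sum_congr rfl fun Y _ => ?_
  refine (integral_finsetSum _ fun X _ => (hf X Y).const_mul _).trans ?_
  simp_rw [integral_const_mul]

theorem integral_br (M : Matrix (ι → Λ) (ι → Λ) ℂ) :
    (Integrable fun φ : Λ → ℂ => br M φ * gw φ) ∧
    ∫ φ : Λ → ℂ, br M φ * gw φ = (π : ℂ) ^ Fintype.card Λ * (M * Wm Λ ι).trace := by
  have h := integrable_br_aux M (fun _ => 1) (fun X Y => by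
    simpa using integrable_mono X Y)
  simp only [one_mul] at h
  refine ⟨h.1, h.2.trans ?_⟩
  simp_rw [integral_mono, Matrix.trace, Matrix.diag, Matrix.mul_apply, Finset.mul_sum]
  refine Finset.sum_congr rfl fun Y _ => Finset.sum_congr rfl fun X _ => ?_
  ring

/-- The quadratic form of a one-particle matrix, and its anti-Wick quantization. -/
theorem integral_br_quad (M : Matrix (ι → Λ) (ι → Λ) ℂ) (h : Matrix Λ Λ ℂ) :
    (Integrable fun φ : Λ → ℂ => (∑ x, ∑ y, h x y * (conj (φ x) * φ y)) * br M φ * gw φ) ∧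
    ∫ φ : Λ → ℂ, (∑ x, ∑ y, h x y * (conj (φ x) * φ y)) * br M φ * gw φ
      = (π : ℂ) ^ Fintype.card Λ * (M * (h.trace • 1 + dG h) * Wm Λ ι).trace := by
  have e : ∀ (X Y : ι → Λ) (φ : Λ → ℂ),
      (∑ x, ∑ y, h x y * (conj (φ x) * φ y)) * (mono φ X * conj (mono φ Y) * gw φ)
      = ∑ x, ∑ y, h x y * (mono φ (adj y X) * conj (mono φ (adj x Y)) * gw φ) := by
    intro X Y φ
    rw [Finset.sum_mul]
    refine Finset.sum_congr rfl fun x _ => ?_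
    rw [Finset.sum_mul]
    refine Finset.sum_congr rfl fun y _ => ?_
    rw [mono_adj, mono_adj, map_mul]
    ring
  have hIn : ∀ X Y : ι → Λ, Integrable fun φ : Λ → ℂ =>
      (∑ x, ∑ y, h x y * (conj (φ x) * φ y)) * (mono φ X * conj (mono φ Y) * gw φ) := by
    intro X Y
    simp_rw [e]
    exact integrable_finsetSum _ fun x _ => integrable_finsetSum _ fun y _ =>
      (integrable_mono _ _).const_mul _
  obtain ⟨h1, h2⟩ := integrable_br_aux M _ hIn
  refine ⟨h1, h2.trans ?_⟩
  have h3 : ∀ X Y : ι → Λ, ∫ φ : Λ → ℂ, (∑ x, ∑ y, h x y * (conj (φ x) * φ y))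
      * (mono φ X * conj (mono φ Y) * gw φ)
      = (π : ℂ) ^ Fintype.card Λ *
        ((h.trace • 1 + dG h) * Wm Λ ι : Matrix (ι → Λ) (ι → Λ) ℂ) X Y := by
    intro X Y
    simp_rw [e]
    refine (integral_finsetSum _ fun x _ => integrable_finsetSum _ fun y _ =>
      (integrable_mono _ _).const_mul _).trans ?_
    have h4 : ∀ x, ∫ φ : Λ → ℂ, ∑ y, h x y * (mono φ (adj y X) * conj (mono φ (adj x Y)) * gw φ)
        = ∑ y, h x y * ((π : ℂ) ^ Fintype.card Λ * Wm Λ (Option ι) (adj y X) (adj x Y)) := by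
      intro x
      refine (integral_finsetSum _ fun y _ => (integrable_mono _ _).const_mul _).trans ?_
      simp_rw [integral_const_mul, integral_mono]
    simp_rw [h4, Wm_adj]
    have h5 : ((h.trace • 1 + dG h) * Wm Λ ι : Matrix (ι → Λ) (ι → Λ) ℂ) X Y
        = h.trace * Wm Λ ι X Y + ∑ i, ∑ z, h (X i) z * Wm Λ ι (Function.update X i z) Y := by
      rw [Matrix.add_mul, Matrix.add_apply, Matrix.smul_mul, Matrix.smul_apply, Matrix.one_mul,
        smul_eq_mul, dG, Matrix.sum_mul, Matrix.sum_apply]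
      congr 1
      refine Finset.sum_congr rfl fun i _ => ?_
      rw [Matrix.mul_apply]
      exact sum_emb i h X fun Z => Wm Λ ι Z Y
    rw [h5]
    have h6 : ∀ x, ∑ y, h x y * ((π : ℂ) ^ Fintype.card Λ * ((if x = y then Wm Λ ι X Y else 0)
      + ∑ i, if X i = x then Wm Λ ι (Function.update X i y) Y else 0))
      = (π : ℂ) ^ Fintype.card Λ * (h x x * Wm Λ ι X Y
        + ∑ i, ∑ y, if X i = x then h x y * Wm Λ ι (Function.update X i y) Y else 0) := by
      intro x
      rw [Finset.sum_comm, mul_add, Finset.mul_sum]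
      have : (π : ℂ) ^ Fintype.card Λ * (h x x * Wm Λ ι X Y) = ∑ y, (π : ℂ) ^ Fintype.card Λ *
          (h x y * if x = y then Wm Λ ι X Y else 0) := by simp
      rw [this, ← Finset.sum_add_distrib]
      refine Finset.sum_congr rfl fun y _ => ?_
      rw [mul_add, mul_add, Finset.mul_sum, Finset.mul_sum, Finset.mul_sum]
      congr 1
      · ring
      · refine Finset.sum_congr rfl fun i _ => ?_
        split_ifs
        · ring
        · ring
    simp_rw [h6]
    rw [← Finset.mul_sum, Finset.sum_add_distrib, ← Finset.sum_mul]
    congr 2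
    rw [Finset.sum_comm]
    refine Finset.sum_congr rfl fun i _ => ?_
    rw [Finset.sum_comm]
    refine Finset.sum_congr rfl fun y _ => ?_
    simp
  simp_rw [h3]
  rw [Matrix.mul_assoc]
  simp_rw [Matrix.trace, Matrix.diag]
  simp_rw [Matrix.mul_apply (M := M), Finset.mul_sum]
  refine Finset.sum_congr rfl fun Y _ => Finset.sum_congr rfl fun X _ => ?_
  ring

theorem integral_br_quartic (M : Matrix (ι → Λ) (ι → Λ) ℂ) (w : Λ → Λ → ℝ) :
    (Integrable fun φ : Λ → ℂ => (∑ x, ∑ y, (w x y : ℂ) *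
      (Complex.normSq (φ x) * Complex.normSq (φ y) : ℝ)) * br M φ * gw φ) ∧
    ∫ φ : Λ → ℂ, (∑ x, ∑ y, (w x y : ℂ) *
      (Complex.normSq (φ x) * Complex.normSq (φ y) : ℝ)) * br M φ * gw φ
      = (π : ℂ) ^ Fintype.card Λ * (M * diagonal (fun X => ((∑ x, ∑ y, w x y *
        ((1 + occ X x + if y = x then 1 else 0) * (1 + occ X y)) : ℝ) : ℂ)) * Wm Λ ι).trace := by
  have e : ∀ (X Y : ι → Λ) (φ : Λ → ℂ),
      (∑ x, ∑ y, (w x y : ℂ) * (Complex.normSq (φ x) * Complex.normSq (φ y) : ℝ))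
        * (mono φ X * conj (mono φ Y) * gw φ)
      = ∑ x, ∑ y, (w x y : ℂ) * (mono φ (adj x (adj y X)) * conj (mono φ (adj x (adj y Y)))
        * gw φ) := by
    intro X Y φ
    rw [Finset.sum_mul]
    refine Finset.sum_congr rfl fun x _ => ?_
    rw [Finset.sum_mul]
    refine Finset.sum_congr rfl fun y _ => ?_
    rw [mono_adj, mono_adj, mono_adj, mono_adj, map_mul, map_mul, Complex.ofReal_mul,
      ← Complex.mul_conj, ← Complex.mul_conj]
    ring
  have hIn : ∀ X Y : ι → Λ, Integrable fun φ : Λ → ℂ =>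
      (∑ x, ∑ y, (w x y : ℂ) * (Complex.normSq (φ x) * Complex.normSq (φ y) : ℝ))
        * (mono φ X * conj (mono φ Y) * gw φ) := by
    intro X Y
    simp_rw [e]
    exact integrable_finsetSum _ fun x _ => integrable_finsetSum _ fun y _ =>
      (integrable_mono _ _).const_mul _
  obtain ⟨h1, h2⟩ := integrable_br_aux M _ hIn
  refine ⟨h1, h2.trans ?_⟩
  have h3 : ∀ X Y : ι → Λ, ∫ φ : Λ → ℂ,
      (∑ x, ∑ y, (w x y : ℂ) * (Complex.normSq (φ x) * Complex.normSq (φ y) : ℝ))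
        * (mono φ X * conj (mono φ Y) * gw φ)
      = (π : ℂ) ^ Fintype.card Λ * (diagonal (fun X => ((∑ x, ∑ y, w x y *
        ((1 + occ X x + if y = x then 1 else 0) * (1 + occ X y)) : ℝ) : ℂ)) * Wm Λ ι :
        Matrix (ι → Λ) (ι → Λ) ℂ) X Y := by
    intro X Y
    simp_rw [e]
    rw [integral_finsetSum _ fun x _ => integrable_finsetSum _ fun y _ =>
      (integrable_mono _ _).const_mul _, Matrix.diagonal_mul]
    push_cast
    rw [Finset.sum_mul, Finset.mul_sum]
    refine Finset.sum_congr rfl fun x _ => ?_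
    rw [integral_finsetSum _ fun y _ => (integrable_mono _ _).const_mul _,
      Finset.sum_mul, Finset.mul_sum]
    refine Finset.sum_congr rfl fun y _ => ?_
    rw [integral_const_mul, integral_mono, Wm_adj_diag, Wm_adj_diag, occ_adj]
    split_ifs <;> push_cast <;> ring
  simp_rw [h3]
  rw [Matrix.mul_assoc]
  simp_rw [Matrix.trace, Matrix.diag]
  simp_rw [Matrix.mul_apply (M := M), Finset.mul_sum]
  refine Finset.sum_congr rfl fun Y _ => Finset.sum_congr rfl fun X _ => ?_
  ring

end Field
end BoseGas

namespace BoseGas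
open scoped ComplexOrder

/-! ### Berezin–Lieb inequalities -/

section BL
variable {Λ ι : Type} [Fintype Λ] [DecidableEq Λ] [Fintype ι] [DecidableEq ι]

/-- The classical one-body energy `⟨φ, h φ⟩`. -/
def quadF (h : Matrix Λ Λ ℂ) (φ : Λ → ℂ) : ℝ := (∑ x, ∑ y, h x y * (conj (φ x) * φ y)).re

/-- The classical pair interaction energy. -/
def quarF (w : Λ → Λ → ℝ) (φ : Λ → ℂ) : ℝ :=
  (1 / 2) * ∑ x, ∑ y, w x y * (Complex.normSq (φ x) * Complex.normSq (φ y))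

/-- The self-energy produced by normal ordering the pair interaction. -/
def diagF (w : Λ → Λ → ℝ) (φ : Λ → ℂ) : ℝ := (1 / 2) * ∑ x, w x x * Complex.normSq (φ x)

theorem quad_eq_dot (h : Matrix Λ Λ ℂ) (φ : Λ → ℂ) :
    ∑ x, ∑ y, h x y * (conj (φ x) * φ y) = star φ ⬝ᵥ (h *ᵥ φ) := by
  simp only [dotProduct, mulVec, Finset.mul_sum, Pi.star_apply, RCLike.star_def]
  exact Finset.sum_congr rfl fun x _ => Finset.sum_congr rfl fun y _ => by ring

theorem quadF_ofReal {h : Matrix Λ Λ ℂ} (hh : h.IsHermitian) (φ : Λ → ℂ) :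
    ∑ x, ∑ y, h x y * (conj (φ x) * φ y) = (quadF h φ : ℂ) := by
  refine (Complex.ext rfl ?_)
  rw [Complex.ofReal_im, quad_eq_dot]
  exact hh.im_star_dotProduct_mulVec_self φ

theorem quadF_add (h h' : Matrix Λ Λ ℂ) (φ : Λ → ℂ) :
    quadF (h + h') φ = quadF h φ + quadF h' φ := by
  simp [quadF, add_mul, Finset.sum_add_distrib]

theorem quadF_scalar (c : ℝ) (φ : Λ → ℂ) :
    quadF ((c : ℂ) • (1 : Matrix Λ Λ ℂ)) φ = c * nrm φ := by
  have : ∀ x, ∑ y, ((c : ℂ) • (1 : Matrix Λ Λ ℂ)) x y * (conj (φ x) * φ y)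
      = ((c * Complex.normSq (φ x) : ℝ) : ℂ) := by
    intro x
    rw [Finset.sum_eq_single x]
    · rw [Matrix.smul_apply, Matrix.one_apply_eq, mul_comm (conj (φ x)), Complex.mul_conj]
      simp
    · intro y _ hy
      simp [Matrix.one_apply_ne hy.symm]
    · simp
  rw [quadF, Finset.sum_congr rfl fun x _ => this x, ← Complex.ofReal_sum, Complex.ofReal_re, nrm,
    Finset.mul_sum]

theorem quadF_nonneg {h : Matrix Λ Λ ℂ} (hh : h.PosSemidef) (φ : Λ → ℂ) : 0 ≤ quadF h φ := by
  rw [quadF, quad_eq_dot]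
  exact (Complex.nonneg_iff.mp (hh.dotProduct_mulVec_nonneg φ)).1

theorem nrm_nonneg (φ : Λ → ℂ) : 0 ≤ nrm φ := Finset.sum_nonneg fun _ _ => Complex.normSq_nonneg _

theorem quarF_nonneg {w : Λ → Λ → ℝ} (hw : ∀ x y, 0 ≤ w x y) (φ : Λ → ℂ) : 0 ≤ quarF w φ := by
  refine mul_nonneg (by norm_num) (Finset.sum_nonneg fun x _ => Finset.sum_nonneg fun y _ =>
    mul_nonneg (hw x y) (mul_nonneg ?_ ?_)) <;> exact Complex.normSq_nonneg _

theorem diagF_nonneg {w : Λ → Λ → ℝ} (hw : ∀ x y, 0 ≤ w x y) (φ : Λ → ℂ) : 0 ≤ diagF w φ :=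
  mul_nonneg (by norm_num) (Finset.sum_nonneg fun x _ =>
    mul_nonneg (hw x x) (Complex.normSq_nonneg _))

@[fun_prop]
theorem continuous_nrm : Continuous (nrm : (Λ → ℂ) → ℝ) := by
  unfold nrm
  exact continuous_finsetSum _ fun x _ => Complex.continuous_normSq.comp (continuous_apply x)

@[fun_prop]
theorem continuous_quadF (h : Matrix Λ Λ ℂ) : Continuous (quadF h) := by
  unfold quadF; fun_prop

@[fun_prop]
theorem continuous_quarF (w : Λ → Λ → ℝ) : Continuous (quarF w) := by
  unfold quarF
  have : ∀ x, Continuous fun φ : Λ → ℂ => Complex.normSq (φ x) :=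
    fun x => Complex.continuous_normSq.comp (continuous_apply x)
  fun_prop

@[fun_prop]
theorem continuous_diagF (w : Λ → Λ → ℝ) : Continuous (diagF w) := by
  unfold diagF
  have : ∀ x, Continuous fun φ : Λ → ℂ => Complex.normSq (φ x) :=
    fun x => Complex.continuous_normSq.comp (continuous_apply x)
  fun_prop

theorem integral_exp_nrm {θ : ℝ} (hθ : 0 < θ) :
    (Integrable fun φ : Λ → ℂ => Real.exp (-(θ * nrm φ))) ∧
    ∫ φ : Λ → ℂ, Real.exp (-(θ * nrm φ)) = (π / θ) ^ Fintype.card Λ := by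
  have h1 : ∀ φ : Λ → ℂ, Real.exp (-(θ * nrm φ)) = ∏ x, Real.exp (-θ * ‖φ x‖ ^ (2 : ℝ)) := by
    intro φ
    rw [← Real.exp_sum, ← Finset.mul_sum, nrm, neg_mul]
    simp_rw [Complex.normSq_eq_norm_sq]
    norm_num
  have h2 : ∫ z : ℂ, Real.exp (-θ * ‖z‖ ^ (2 : ℝ)) = π / θ := by
    rw [Complex.integral_exp_neg_mul_rpow (by norm_num) hθ]
    have : Real.Gamma (2 / 2 + 1) = 1 := by norm_num
    rw [this, mul_one, show (-2 / 2 : ℝ) = -1 by norm_num, Real.rpow_neg_one]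
    rfl
  have h3 : Integrable fun z : ℂ => Real.exp (-θ * ‖z‖ ^ (2 : ℝ)) :=
    Integrable.of_integral_ne_zero (by rw [h2]; positivity)
  simp_rw [h1]
  refine ⟨Integrable.fintype_prod (f := fun _ z => Real.exp (-θ * ‖z‖ ^ (2 : ℝ))) fun _ => h3, ?_⟩
  rw [integral_fintype_prod_volume_eq_pow (f := fun z : ℂ => Real.exp (-θ * ‖z‖ ^ (2 : ℝ))), h2]

theorem integrable_exp_of_le {f : (Λ → ℂ) → ℝ} (hf : Continuous f) {θ c : ℝ} (hθ : 0 < θ)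
    (hle : ∀ φ, θ * nrm φ - c ≤ f φ) : Integrable fun φ => Real.exp (-f φ) := by
  refine ((integral_exp_nrm (Λ := Λ) hθ).1.const_mul (Real.exp c)).mono'
    (by fun_prop : Continuous fun φ => Real.exp (-f φ)).aestronglyMeasurable
    (Eventually.of_forall fun φ => ?_)
  rw [Real.norm_of_nonneg (Real.exp_pos _).le, ← Real.exp_add, Real.exp_le_exp]
  linarith [hle φ]

/-! #### Expectations in product states -/

theorem br_eq_dot (M : Matrix (ι → Λ) (ι → Λ) ℂ) (φ : Λ → ℂ) :
    br M φ = star (mono φ) ⬝ᵥ (M *ᵥ (mono φ)) := by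
  simp only [br, dotProduct, mulVec, Finset.mul_sum, Pi.star_apply, RCLike.star_def, mul_assoc]

theorem br_nonneg {M : Matrix (ι → Λ) (ι → Λ) ℂ} (hM : M.PosSemidef) (φ : Λ → ℂ) :
    0 ≤ br M φ := by
  rw [br_eq_dot]; exact hM.dotProduct_mulVec_nonneg _

theorem br_add (M M' : Matrix (ι → Λ) (ι → Λ) ℂ) (φ : Λ → ℂ) :
    br (M + M') φ = br M φ + br M' φ := by
  simp only [br_eq_dot, Matrix.add_mulVec, dotProduct_add]

theorem br_sub (M M' : Matrix (ι → Λ) (ι → Λ) ℂ) (φ : Λ → ℂ) :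
    br (M - M') φ = br M φ - br M' φ := by
  simp only [br_eq_dot, Matrix.sub_mulVec, dotProduct_sub]

theorem br_smul (c : ℂ) (M : Matrix (ι → Λ) (ι → Λ) ℂ) (φ : Λ → ℂ) :
    br (c • M) φ = c * br M φ := by
  simp only [br_eq_dot, Matrix.smul_mulVec, dotProduct_smul, smul_eq_mul]

theorem br_diagonal (f : (ι → Λ) → ℝ) (φ : Λ → ℂ) :
    br (diagonal fun X => (f X : ℂ)) φ
      = ((∑ X : ι → Λ, (∏ i, Complex.normSq (φ (X i))) * f X : ℝ) : ℂ) := by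
  rw [br]
  push_cast
  refine Finset.sum_congr rfl fun X _ => ?_
  rw [Finset.sum_eq_single X]
  · rw [Matrix.diagonal_apply_eq, mono, map_prod]
    simp_rw [← Complex.mul_conj]
    rw [Finset.prod_mul_distrib]
    ring
  · intro Y _ hY
    rw [Matrix.diagonal_apply_ne _ hY.symm]
    ring
  · simp

theorem sum_prod_const (a : Λ → ℝ) :
    ∑ X : ι → Λ, ∏ i, a (X i) = (∑ x, a x) ^ Fintype.card ι := by
  rw [← Finset.card_univ, ← Finset.prod_const]
  exact (Fintype.prod_sum fun (_ : ι) x => a x).symm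

theorem br_one (φ : Λ → ℂ) :
    br (1 : Matrix (ι → Λ) (ι → Λ) ℂ) φ = ((nrm φ ^ Fintype.card ι : ℝ) : ℂ) := by
  have := br_diagonal (ι := ι) (fun _ => 1) φ
  simp only [mul_one, Complex.ofReal_one, diagonal_one] at this
  rw [this, sum_prod_const fun x => Complex.normSq (φ x)]
  rfl

theorem integral_four {α : Type*} [MeasurableSpace α] {μ : Measure α} {f₁ f₂ f₃ f₄ : α → ℂ}
    (h₁ : Integrable f₁ μ) (h₂ : Integrable f₂ μ) (h₃ : Integrable f₃ μ) (h₄ : Integrable f₄ μ)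
    (a b : ℂ) : ∫ t, a * f₁ t + f₂ t - f₃ t - b * f₄ t ∂μ
      = a * ∫ t, f₁ t ∂μ + ∫ t, f₂ t ∂μ - ∫ t, f₃ t ∂μ - b * ∫ t, f₄ t ∂μ := by
  have e₁ := h₁.const_mul a
  have e₄ := h₄.const_mul b
  have e₂ : Integrable (fun t => a * f₁ t + f₂ t) μ := e₁.add h₂
  have e₃ : Integrable (fun t => a * f₁ t + f₂ t - f₃ t) μ := e₂.sub h₃
  rw [integral_sub e₃ e₄, integral_sub e₂ h₃, integral_add e₁ h₂, integral_const_mul,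
    integral_const_mul]

theorem trace_mul_diag_Wm {h : Matrix Λ Λ ℂ} (hh : h.IsHermitian) (w : Λ → Λ → ℝ)
    (R : (ι → Λ) → ℝ) :
    (NormedSpace.exp (-(Hm h w)) * diagonal (fun X => (R X : ℂ)) * Wm Λ ι).trace
      = ((((Fintype.card ι).factorial : ℝ) * ∑ X : ι → Λ, R X * rho h w X : ℝ) : ℂ) := by
  have h1 : Wm Λ ι = ((Fintype.card ι).factorial : ℂ) • Pm Λ ι := by
    rw [Pm, smul_smul, mul_inv_cancel₀ (fact_ne _), one_smul]
  rw [h1, Matrix.mul_smul, Matrix.trace_smul, Matrix.mul_assoc, Matrix.trace_mul_comm,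
    Matrix.mul_assoc, Pm_comm_exp, ← rhoM, Matrix.trace, smul_eq_mul]
  push_cast
  congr 1
  refine Finset.sum_congr rfl fun X _ => ?_
  rw [Matrix.diag_apply, Matrix.diagonal_mul]
  congr 1
  exact Complex.ext rfl
    ((Complex.nonneg_iff.mp ((rhoM_posSemidef hh w).diag_nonneg (i := X))).2).symm

theorem exp_mul_Wm_trace {h : Matrix Λ Λ ℂ} (hh : h.IsHermitian) (w : Λ → Λ → ℝ) :
    (NormedSpace.exp (-(Hm h w)) * Wm Λ ι).trace
      = ((((Fintype.card ι).factorial : ℝ) * tau ι h w : ℝ) : ℂ) := by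
  have := trace_mul_diag_Wm (ι := ι) hh w (fun _ => 1)
  simp only [Complex.ofReal_one, diagonal_one, Matrix.mul_one, one_mul] at this
  rw [this, tau_eq_sum]

/-- The error made by the anti-Wick symbol of the interaction is controlled by the particle
number and the volume. -/
theorem antiwick_bound {w : Λ → Λ → ℝ} {ω : ℝ} (hw : ∀ x y, 0 ≤ w x y)
    (hr : ∀ x, ∑ y, w x y ≤ ω) (hc : ∀ y, ∑ x, w x y ≤ ω) (X : ι → Λ) :
    (1 / 2) * ∑ x, ∑ y, w x y * ((1 + occ X x + if y = x then 1 else 0) * (1 + occ X y))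
      ≤ pairE w X + 3 / 2 * ω * (Fintype.card ι + Fintype.card Λ) := by
  have hn : ∑ x, (occ X x : ℝ) = Fintype.card ι := by
    have := sum_occ X (fun _ => 1)
    simpa using this.symm
  have hd : ∀ x, w x x ≤ ω := fun x =>
    (Finset.single_le_sum (f := fun y => w x y) (fun y _ => hw x y) (Finset.mem_univ x)).trans (hr x)
  have e : ∀ x, ∑ y, w x y * ((1 + occ X x + if y = x then 1 else 0) * (1 + occ X y))
      = ∑ y, (occ X x : ℝ) * (occ X y : ℝ) * w x y + (1 + occ X x) * ∑ y, w x y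
        + ∑ y, (occ X y : ℝ) * w x y + (1 + occ X x) * w x x := by
    intro x
    have : (1 + occ X x) * w x x
        = ∑ y, (1 + occ X y) * (w x y * if y = x then 1 else 0) := by simp
    rw [this, Finset.mul_sum, ← Finset.sum_add_distrib, ← Finset.sum_add_distrib,
      ← Finset.sum_add_distrib]
    exact Finset.sum_congr rfl fun y _ => by ring
  have h1 : ∑ x, (1 + (occ X x : ℝ)) * ∑ y, w x y ≤ (Fintype.card Λ + Fintype.card ι) * ω := by
    calc _ ≤ ∑ x, (1 + (occ X x : ℝ)) * ω :=
          Finset.sum_le_sum fun x _ => mul_le_mul_of_nonneg_left (hr x) (by positivity)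
      _ = _ := by rw [← Finset.sum_mul, Finset.sum_add_distrib, hn]; simp
  have h2 : ∑ x, (1 + (occ X x : ℝ)) * w x x ≤ (Fintype.card Λ + Fintype.card ι) * ω := by
    calc _ ≤ ∑ x, (1 + (occ X x : ℝ)) * ω :=
          Finset.sum_le_sum fun x _ => mul_le_mul_of_nonneg_left (hd x) (by positivity)
      _ = _ := by rw [← Finset.sum_mul, Finset.sum_add_distrib, hn]; simp
  have h3 : ∑ x, ∑ y, (occ X y : ℝ) * w x y ≤ Fintype.card ι * ω := by
    rw [Finset.sum_comm]
    calc _ ≤ ∑ y, (occ X y : ℝ) * ω := Finset.sum_le_sum fun y _ => by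
            rw [← Finset.mul_sum]; exact mul_le_mul_of_nonneg_left (hc y) (by positivity)
      _ = _ := by rw [← Finset.sum_mul, hn]
  rw [Finset.sum_congr rfl fun x _ => e x, pairE_occ]
  simp only [Finset.sum_add_distrib] at *
  have h4 : 0 ≤ (Fintype.card Λ : ℝ) * ω := by
    rcases isEmpty_or_nonempty Λ with hE | ⟨⟨x⟩⟩
    · simp
    · exact mul_nonneg (by positivity) ((hw x x).trans (hd x))
  linarith

/-- The upper symbol used for the Hamiltonian. -/
def hup (h : Matrix Λ Λ ℂ) (w : Λ → Λ → ℝ) (ω : ℝ) (φ : Λ → ℂ) : ℝ :=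
  quadF h φ + quarF w φ - 3 / 2 * ω * nrm φ - h.trace.re

/-- The `n`-particle form of the upper bound: the tangent line inequality for the
exponential (`exp_tangent'`), evaluated in product states with `α = -hup φ`, and integrated. -/
theorem tau_upper {h : Matrix Λ Λ ℂ} (hh : h.IsHermitian) {w : Λ → Λ → ℝ} {ω : ℝ}
    (hw : ∀ x y, 0 ≤ w x y) (hr : ∀ x, ∑ y, w x y ≤ ω) (hc : ∀ y, ∑ x, w x y ≤ ω)
    (hi : Integrable fun φ : Λ → ℂ =>
      Real.exp (-hup h w ω φ) * nrm φ ^ Fintype.card ι * Real.exp (-nrm φ)) :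
    π ^ Fintype.card Λ * (((Fintype.card ι).factorial : ℝ) * tau ι h w) ≤
      ∫ φ : Λ → ℂ, Real.exp (-hup h w ω φ) * nrm φ ^ Fintype.card ι * Real.exp (-nrm φ) := by
  set E : Matrix (ι → Λ) (ι → Λ) ℂ := NormedSpace.exp (-(Hm h w)) with hE
  set h' : Matrix Λ Λ ℂ := h + ((-(3 / 2 * ω) : ℝ) : ℂ) • 1 with hh'
  have hh'H : h'.IsHermitian := hh.add (by
    rw [Matrix.IsHermitian, Matrix.conjTranspose_smul]; simp)
  obtain ⟨i1, e1⟩ := integral_br E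
  obtain ⟨i2, e2⟩ := integral_br (E * Hm h w)
  obtain ⟨i3, e3⟩ := integral_br_quad E h'
  obtain ⟨i4, e4⟩ := integral_br_quartic E w
  simp_rw [quadF_ofReal hh'H] at i3 e3
  set R : (ι → Λ) → ℝ := fun X => pairE w X - (1 / 2) * ∑ x, ∑ y, w x y *
    ((1 + occ X x + if y = x then 1 else 0) * (1 + occ X y))
    + 3 / 2 * ω * (Fintype.card ι + Fintype.card Λ) with hR
  have hR0 : ∀ X, 0 ≤ R X := fun X => by
    have := antiwick_bound hw hr hc X
    simp only [hR]; linarith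
  set F : (Λ → ℂ) → ℂ := fun φ => (1 + h.trace) * (br E φ * gw φ) + br (E * Hm h w) φ * gw φ
    - ((quadF h' φ : ℂ) * br E φ * gw φ) - (1 / 2) * ((∑ x, ∑ y, (w x y : ℂ) *
      (Complex.normSq (φ x) * Complex.normSq (φ y) : ℝ)) * br E φ * gw φ) with hF
  have iF : Integrable F := (((i1.const_mul _).add i2).sub i3).sub (i4.const_mul _)
  have eF : ∫ φ, F φ = (((π ^ Fintype.card Λ * (((Fintype.card ι).factorial : ℝ) *
      ∑ X : ι → Λ, (1 + R X) * rho h w X) : ℝ)) : ℂ) := by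
    simp only [hF]
    rw [integral_four i1 i2 i3 i4, e1, e2, e3, e4, Complex.ofReal_mul,
      ← trace_mul_diag_Wm hh w, Complex.ofReal_pow]
    have hm : (E * diagonal (fun X => ((1 + R X : ℝ) : ℂ)) * Wm Λ ι)
        = (1 + h.trace) • (E * Wm Λ ι) + E * Hm h w * Wm Λ ι
          - E * (h'.trace • 1 + dG h') * Wm Λ ι
          - (1 / 2 : ℂ) • (E * diagonal (fun X => ((∑ x, ∑ y, w x y *
        ((1 + occ X x + if y = x then 1 else 0) * (1 + occ X y)) : ℝ) : ℂ)) * Wm Λ ι) := by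
      have hd : diagonal (fun X => ((1 + R X : ℝ) : ℂ)) = (1 + h.trace) • 1 + Hm h w
          - (h'.trace • 1 + dG h') - (1 / 2 : ℂ) • diagonal (fun X : ι → Λ =>
          ((∑ x, ∑ y, w x y *
            ((1 + occ X x + if y = x then 1 else 0) * (1 + occ X y)) : ℝ) : ℂ)) := by
        have hone : dG (ι := ι) (1 : Matrix Λ Λ ℂ) = (Fintype.card ι : ℂ) • 1 := by
          rw [← diagonal_one, dG_diagonal, smul_one_eq_diagonal]
          simp
        rw [hh', dG_add, dG_smul, hone, Matrix.trace_add, Matrix.trace_smul, Matrix.trace_one, Hm]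
        ext X Y
        by_cases hXY : X = Y
        · subst hXY
          simp only [Matrix.diagonal_apply_eq, Matrix.add_apply, Matrix.sub_apply,
            Matrix.smul_apply, Matrix.one_apply_eq, hR, smul_eq_mul]
          push_cast
          ring
        · simp [Matrix.diagonal_apply_ne _ hXY, Matrix.one_apply_ne hXY]
      rw [hd]
      simp only [Matrix.mul_add, Matrix.add_mul, Matrix.mul_sub, Matrix.sub_mul, Matrix.mul_smul,
        Matrix.smul_mul, Matrix.mul_one]
    rw [hm]
    simp only [Matrix.trace_sub, Matrix.trace_add, Matrix.trace_smul, smul_eq_mul]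
    ring
  have hpt : ∀ φ, (F φ).re ≤
      Real.exp (-hup h w ω φ) * nrm φ ^ Fintype.card ι * Real.exp (-nrm φ) := by
    intro φ
    have hp := br_nonneg (exp_tangent' (Hm_isHermitian (ι := ι) hh w).neg (-hup h w ω φ)) φ
    rw [br_sub, br_smul, br_one, ← hE, sub_neg_eq_add, Matrix.mul_add, br_add, Matrix.mul_smul,
      br_smul, Matrix.mul_one] at hp
    obtain ⟨t, ht⟩ : ∃ t : ℝ, h.trace = (t : ℂ) := by
      refine ⟨h.trace.re, Complex.ext rfl ?_⟩
      have : star h.trace = h.trace := by rw [← Matrix.trace_conjTranspose, hh]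
      rw [Complex.ofReal_im]
      exact Complex.conj_eq_iff_im.mp this
    have hq : quadF h' φ = quadF h φ - 3 / 2 * ω * nrm φ := by
      rw [hh', quadF_add, quadF_scalar]; ring
    have hFe : F φ = ((1 + (-hup h w ω φ : ℝ)) * br E φ + br (E * Hm h w) φ) * gw φ := by
      have h4 : ∑ x, ∑ y, (w x y : ℂ) * (Complex.normSq (φ x) * Complex.normSq (φ y) : ℝ)
          = (2 * quarF w φ : ℝ) := by
        rw [quarF]; push_cast; ring
      simp only [hF, h4, hq, hup]
      rw [ht, Complex.ofReal_re]
      push_cast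
      ring
    have hz := Complex.nonneg_iff.mp hp
    rw [hFe, gw, Complex.re_mul_ofReal]
    refine mul_le_mul_of_nonneg_right ?_ (Real.exp_pos _).le
    have h5 := hz.1
    rw [Complex.sub_re, ← Complex.ofReal_mul, Complex.ofReal_re] at h5
    linarith
  have h1 : ∫ φ, (F φ).re = π ^ Fintype.card Λ * (((Fintype.card ι).factorial : ℝ) *
      ∑ X : ι → Λ, (1 + R X) * rho h w X) := by
    have := integral_re iF
    rw [eF] at this
    exact this
  calc _ ≤ π ^ Fintype.card Λ * (((Fintype.card ι).factorial : ℝ) *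
      ∑ X : ι → Λ, (1 + R X) * rho h w X) := by
        rw [tau_eq_sum]
        gcongr with X
        have := mul_nonneg (hR0 X) (rho_nonneg hh w X)
        linarith
    _ ≤ _ := h1 ▸ MeasureTheory.integral_mono iF.re hi hpt

end BL
end BoseGas

namespace BoseGas
open scoped ComplexOrder

section BL2
variable {Λ ι : Type} [Fintype Λ] [DecidableEq Λ] [Fintype ι] [DecidableEq ι]

/-- Partial sums of the exponential series. -/
def expPart (K : ℕ) (s : ℝ) : ℝ := ∑ n ∈ Finset.range K, s ^ n / n.factorial

theorem expPart_le {s : ℝ} (hs : 0 ≤ s) (K : ℕ) : expPart K s ≤ Real.exp s :=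
  Real.sum_le_exp_of_nonneg hs K

theorem expPart_nonneg {s : ℝ} (hs : 0 ≤ s) (K : ℕ) : 0 ≤ expPart K s :=
  Finset.sum_nonneg fun _ _ => by positivity

theorem tendsto_expPart (s : ℝ) : Tendsto (fun K => expPart K s) atTop (𝓝 (Real.exp s)) := by
  have := (NormedSpace.expSeries_div_hasSum_exp (𝔸 := ℝ) s).tendsto_sum_nat
  rwa [← Real.exp_eq_exp_ℝ] at this

/-- Upper Berezin–Lieb bound. -/
theorem Xi_upper {h : Matrix Λ Λ ℂ} (hh : h.IsHermitian) {w : Λ → Λ → ℝ} {ω : ℝ}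
    (hw : ∀ x y, 0 ≤ w x y) (hr : ∀ x, ∑ y, w x y ≤ ω) (hc : ∀ y, ∑ x, w x y ≤ ω)
    (hi : Integrable fun φ : Λ → ℂ => Real.exp (-hup h w ω φ)) :
    (Summable fun n : ℕ => tau (Fin n) h w) ∧
    π ^ Fintype.card Λ * Xi h w ≤ ∫ φ : Λ → ℂ, Real.exp (-hup h w ω φ) := by
  have hcont : Continuous (hup h w ω) := by unfold hup; fun_prop
  have hle : ∀ (n : ℕ) (φ : Λ → ℂ), nrm φ ^ n / n.factorial * Real.exp (-nrm φ) ≤ 1 := by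
    intro n φ
    have h1 := expPart_le (nrm_nonneg φ) (n + 1)
    have h2 : nrm φ ^ n / n.factorial ≤ expPart (n + 1) (nrm φ) :=
      Finset.single_le_sum (f := fun n => nrm φ ^ n / n.factorial)
        (fun k _ => div_nonneg (pow_nonneg (nrm_nonneg φ) k) (by positivity)) (by simp)
    calc _ ≤ Real.exp (nrm φ) * Real.exp (-nrm φ) := by gcongr; exact h2.trans h1
      _ = 1 := by rw [← Real.exp_add]; simp
  have hin : ∀ n : ℕ, Integrable fun φ : Λ → ℂ =>
      Real.exp (-hup h w ω φ) * (nrm φ ^ n / n.factorial * Real.exp (-nrm φ)) := by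
    intro n
    refine hi.mono' (by fun_prop : Continuous _).aestronglyMeasurable
      (Eventually.of_forall fun φ => ?_)
    have hn := nrm_nonneg φ
    rw [Real.norm_of_nonneg (by positivity)]
    exact mul_le_of_le_one_right (Real.exp_pos _).le (hle n φ)
  have hτ : ∀ n : ℕ, π ^ Fintype.card Λ * tau (Fin n) h w ≤ ∫ φ : Λ → ℂ,
      Real.exp (-hup h w ω φ) * (nrm φ ^ n / n.factorial * Real.exp (-nrm φ)) := by
    intro n
    have hf : (0 : ℝ) < n.factorial := by positivity
    have e : ∀ φ : Λ → ℂ, Real.exp (-hup h w ω φ) * nrm φ ^ n * Real.exp (-nrm φ)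
        = n.factorial * (Real.exp (-hup h w ω φ) *
          (nrm φ ^ n / n.factorial * Real.exp (-nrm φ))) := by
      intro φ; field_simp
    have h1 := tau_upper (ι := Fin n) hh hw hr hc (by
      simp only [Fintype.card_fin, e]
      exact (hin n).const_mul _)
    simp only [Fintype.card_fin, e] at h1
    rw [integral_const_mul] at h1
    refine le_of_mul_le_mul_left ?_ hf
    linarith
  have hS : ∀ K : ℕ, ∑ n ∈ Finset.range K, tau (Fin n) h w ≤
      (π ^ Fintype.card Λ)⁻¹ * ∫ φ : Λ → ℂ, Real.exp (-hup h w ω φ) := by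
    intro K
    have hp : 0 < π ^ Fintype.card Λ := pow_pos Real.pi_pos _
    rw [inv_mul_eq_div, le_div_iff₀ hp, mul_comm, Finset.mul_sum]
    calc _ ≤ ∑ n ∈ Finset.range K, ∫ φ : Λ → ℂ,
          Real.exp (-hup h w ω φ) * (nrm φ ^ n / n.factorial * Real.exp (-nrm φ)) :=
          Finset.sum_le_sum fun n _ => hτ n
      _ = ∫ φ : Λ → ℂ, ∑ n ∈ Finset.range K,
          Real.exp (-hup h w ω φ) * (nrm φ ^ n / n.factorial * Real.exp (-nrm φ)) :=
          (integral_finsetSum _ fun n _ => hin n).symm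
      _ ≤ _ := by
          refine MeasureTheory.integral_mono (integrable_finsetSum _ fun n _ => hin n) hi
            fun φ => ?_
          simp only
          rw [← Finset.mul_sum, ← Finset.sum_mul]
          refine mul_le_of_le_one_right (Real.exp_pos _).le ?_
          calc _ ≤ Real.exp (nrm φ) * Real.exp (-nrm φ) := by
                gcongr; exact expPart_le (nrm_nonneg φ) K
            _ = 1 := by rw [← Real.exp_add]; simp
  have hp : 0 < π ^ Fintype.card Λ := pow_pos Real.pi_pos _
  refine ⟨summable_of_sum_range_le (fun n => tau_nonneg hh w) hS, ?_⟩
  have := Real.tsum_le_of_sum_range_le (fun n => tau_nonneg hh w) hS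
  rw [← Xi, inv_mul_eq_div, le_div_iff₀ hp] at this
  linarith

theorem Xi_scalar {θ : ℝ} (hθ : 0 < θ) :
    (Summable fun n : ℕ => tau (Fin n) ((θ : ℂ) • (1 : Matrix Λ Λ ℂ)) 0) ∧
    Xi ((θ : ℂ) • (1 : Matrix Λ Λ ℂ)) 0 ≤ (Real.exp θ / θ) ^ Fintype.card Λ := by
  have hh : ((θ : ℂ) • (1 : Matrix Λ Λ ℂ)).IsHermitian := by
    rw [Matrix.IsHermitian, Matrix.conjTranspose_smul]; simp
  have e : ∀ φ : Λ → ℂ, Real.exp (-hup ((θ : ℂ) • (1 : Matrix Λ Λ ℂ)) 0 0 φ)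
      = Real.exp (θ * Fintype.card Λ) * Real.exp (-(θ * nrm φ)) := by
    intro φ
    rw [hup, quadF_scalar, ← Real.exp_add]
    congr 1
    simp [quarF, Matrix.trace_smul]
    ring
  obtain ⟨i, hI⟩ := integral_exp_nrm (Λ := Λ) hθ
  have h1 := Xi_upper (ω := 0) (w := (0 : Λ → Λ → ℝ)) hh (fun _ _ => le_rfl) (by simp) (by simp)
    (by simp_rw [e]; exact i.const_mul _)
  refine ⟨h1.1, ?_⟩
  have h2 := h1.2
  simp_rw [e] at h2
  rw [integral_const_mul, hI] at h2
  have hp : 0 < π ^ Fintype.card Λ := pow_pos Real.pi_pos _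
  refine le_of_mul_le_mul_left (h2.trans_eq ?_) hp
  rw [div_pow, div_pow, ← Real.exp_nat_mul, mul_comm θ]
  ring

theorem scalar_isHermitian (θ : ℝ) : ((θ : ℂ) • (1 : Matrix Λ Λ ℂ)).IsHermitian := by
  rw [Matrix.IsHermitian, Matrix.conjTranspose_smul]; simp

theorem summable_tau {h : Matrix Λ Λ ℂ} (hh : h.IsHermitian) {w : Λ → Λ → ℝ} {θ : ℝ}
    (hθ : 0 < θ) (hle : (h - (θ : ℂ) • (1 : Matrix Λ Λ ℂ)).PosSemidef) (hw : ∀ x y, 0 ≤ w x y) :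
    Summable fun n : ℕ => tau (Fin n) h w :=
  Summable.of_nonneg_of_le (fun _ => tau_nonneg hh w)
    (fun _ => tau_mono hh (scalar_isHermitian θ) hle hw) (Xi_scalar hθ).1

/-! #### The lower bound -/

theorem br_dG (h : Matrix Λ Λ ℂ) (φ : Λ → ℂ) :
    br (dG (ι := ι) h) φ = Fintype.card ι * (nrm φ : ℂ) ^ (Fintype.card ι - 1)
      * ∑ x, ∑ y, h x y * (conj (φ x) * φ y) := by
  have h1 : ∀ i : ι, br (emb i h) φ = (nrm φ : ℂ) ^ (Fintype.card ι - 1)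
      * ∑ x, ∑ y, h x y * (conj (φ x) * φ y) := by
    intro i
    have e1 : br (emb i h) φ = ∑ X : ι → Λ, ∏ k, (if k = i then ∑ y, h (X k) y * (conj (φ (X k)) * φ y)
        else (Complex.normSq (φ (X k)) : ℂ)) := by
      rw [br]
      refine Finset.sum_congr rfl fun X _ => ?_
      simp_rw [mul_assoc]
      rw [← Finset.mul_sum, sum_emb i h X (mono φ), ← Finset.mul_prod_erase _ _ (Finset.mem_univ i),
        if_pos rfl, Finset.mul_sum, Finset.sum_mul]
      refine Finset.sum_congr rfl fun y _ => ?_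
      rw [mono, mono, map_prod, ← Finset.mul_prod_erase _ _ (Finset.mem_univ i),
        ← Finset.mul_prod_erase _ (fun k => φ (Function.update X i y k)) (Finset.mem_univ i),
        Function.update_self]
      have e2 : ∏ k ∈ Finset.univ.erase i, (if k = i then ∑ y, h (X k) y * (conj (φ (X k)) * φ y)
          else (Complex.normSq (φ (X k)) : ℂ)) = (∏ k ∈ Finset.univ.erase i, conj (φ (X k)))
            * ∏ k ∈ Finset.univ.erase i, φ (Function.update X i y k) := by
        rw [← Finset.prod_mul_distrib]
        refine Finset.prod_congr rfl fun k hk => ?_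
        have hk' := Finset.ne_of_mem_erase hk
        rw [if_neg hk', Function.update_of_ne hk', mul_comm, Complex.mul_conj]
      rw [e2]
      ring
    have e3 := Fintype.prod_sum fun (k : ι) (x : Λ) =>
      (if k = i then ∑ y, h x y * (conj (φ x) * φ y) else (Complex.normSq (φ x) : ℂ))
    rw [e1, ← e3, ← Finset.mul_prod_erase _ _ (Finset.mem_univ i), mul_comm]
    simp only [if_true]
    congr 1
    rw [Finset.prod_congr rfl (g := fun _ => (nrm φ : ℂ)), Finset.prod_const,
      Finset.card_erase_of_mem (Finset.mem_univ i), Finset.card_univ]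
    intro k hk
    simp only [if_neg (Finset.ne_of_mem_erase hk), nrm]
    push_cast
    rfl
  have h2 : br (dG (ι := ι) h) φ = ∑ i : ι, br (emb i h) φ := by
    simp only [br_eq_dot, dG, Matrix.sum_mulVec, dotProduct_sum]
  rw [h2, Finset.sum_congr rfl fun i _ => h1 i]
  simp [mul_assoc]

theorem sum_cons {n : ℕ} (F : (Fin (n + 1) → Λ) → ℝ) :
    ∑ X, F X = ∑ x, ∑ X : Fin n → Λ, F (Fin.cons x X) := by
  rw [← (Fin.consEquiv fun _ : Fin (n + 1) => Λ).sum_comp, Fintype.sum_prod_type]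
  rfl

theorem sum_one_body (a f : Λ → ℝ) (n : ℕ) :
    ∑ X : Fin n → Λ, (∏ i, a (X i)) * ∑ i, f (X i)
      = n * (∑ x, a x) ^ (n - 1) * ∑ x, a x * f x := by
  induction n with
  | zero => simp
  | succ n ih =>
    have e : ∀ x, ∑ X : Fin n → Λ, (∏ i, a ((Fin.cons x X : Fin (n + 1) → Λ) i))
        * ∑ i, f ((Fin.cons x X : Fin (n + 1) → Λ) i)
        = a x * f x * (∑ x, a x) ^ n + a x * (n * (∑ x, a x) ^ (n - 1) * ∑ x, a x * f x) := by
      intro x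
      have := sum_prod_const (ι := Fin n) a
      rw [Fintype.card_fin] at this
      rw [← ih, ← this, Finset.mul_sum, Finset.mul_sum, ← Finset.sum_add_distrib]
      refine Finset.sum_congr rfl fun X _ => ?_
      simp only [Fin.prod_univ_succ, Fin.sum_univ_succ, Fin.cons_zero, Fin.cons_succ]
      ring
    rw [sum_cons, Finset.sum_congr rfl fun x _ => e x, Finset.sum_add_distrib, ← Finset.sum_mul,
      ← Finset.sum_mul]
    rcases n with _ | n
    · simp
    · simp only [Nat.add_sub_cancel]
      push_cast
      ring

theorem sum_two_body (a : Λ → ℝ) (w : Λ → Λ → ℝ) (n : ℕ) :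
    ∑ X : Fin n → Λ, (∏ i, a (X i)) * ∑ i, ∑ j, w (X i) (X j)
      = n * (∑ x, a x) ^ (n - 1) * (∑ x, a x * w x x)
        + n * (n - 1) * (∑ x, a x) ^ (n - 2) * ∑ x, ∑ y, w x y * (a x * a y) := by
  induction n with
  | zero => simp
  | succ n ih =>
    have e : ∀ x, ∑ X : Fin n → Λ, (∏ i, a ((Fin.cons x X : Fin (n + 1) → Λ) i))
        * ∑ i, ∑ j, w ((Fin.cons x X : Fin (n + 1) → Λ) i) ((Fin.cons x X : Fin (n + 1) → Λ) j)
        = a x * w x x * (∑ x, a x) ^ n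
          + n * (∑ x, a x) ^ (n - 1) * (∑ y, w x y * (a x * a y) + ∑ y, w y x * (a y * a x))
          + a x * (∑ X : Fin n → Λ, (∏ i, a (X i)) * ∑ i, ∑ j, w (X i) (X j)) := by
      intro x
      have h0 := sum_prod_const (ι := Fin n) a
      rw [Fintype.card_fin] at h0
      have h1 := sum_one_body a (fun y => w x y + w y x) n
      have h2 : n * (∑ x, a x) ^ (n - 1) * (∑ y, w x y * (a x * a y) + ∑ y, w y x * (a y * a x))
          = a x * ∑ X : Fin n → Λ, (∏ i, a (X i)) * ∑ i, (w x (X i) + w (X i) x) := by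
        rw [h1, ← Finset.sum_add_distrib]
        have : ∑ y, (w x y * (a x * a y) + w y x * (a y * a x))
            = a x * ∑ y, a y * (w x y + w y x) := by
          rw [Finset.mul_sum]
          exact Finset.sum_congr rfl fun y _ => by ring
        rw [this]
        ring
      rw [h2, ← h0, Finset.mul_sum, Finset.mul_sum, Finset.mul_sum, ← Finset.sum_add_distrib,
        ← Finset.sum_add_distrib]
      refine Finset.sum_congr rfl fun X _ => ?_
      simp only [Fin.prod_univ_succ, Fin.sum_univ_succ, Fin.cons_zero, Fin.cons_succ,
        Finset.sum_add_distrib]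
      ring
    have hsw : ∑ x, ∑ y, w y x * (a y * a x) = ∑ x, ∑ y, w x y * (a x * a y) := Finset.sum_comm
    rw [sum_cons, Finset.sum_congr rfl fun x _ => e x, Finset.sum_add_distrib,
      Finset.sum_add_distrib, ← Finset.sum_mul, ← Finset.mul_sum, Finset.sum_add_distrib, hsw,
      ← Finset.sum_mul, ih]
    rcases n with _ | _ | n
    · simp
    · simp; ring
    · have e1 : n + 1 + 1 + 1 - 1 = n + 2 := by omega
      have e2 : n + 1 + 1 - 1 = n + 1 := by omega
      have e3 : n + 1 + 1 - 2 = n := by omega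
      have e4 : n + 1 + 1 + 1 - 2 = n + 1 := by omega
      rw [e1, e2, e3, e4]
      push_cast
      ring

theorem br_Hm {h : Matrix Λ Λ ℂ} (hh : h.IsHermitian) (w : Λ → Λ → ℝ) (φ : Λ → ℂ) (n : ℕ) :
    br (Hm (ι := Fin n) h w) φ = ((n * nrm φ ^ (n - 1) * (quadF h φ + diagF w φ)
      + n * (n - 1) * nrm φ ^ (n - 2) * quarF w φ : ℝ) : ℂ) := by
  have h1 : ∑ X : Fin n → Λ, (∏ i, Complex.normSq (φ (X i))) * pairE w X
      = n * nrm φ ^ (n - 1) * diagF w φ + n * (n - 1) * nrm φ ^ (n - 2) * quarF w φ := by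
    have e : ∀ X : Fin n → Λ, (∏ i, Complex.normSq (φ (X i))) * pairE w X
        = (1 / 2) * ((∏ i, Complex.normSq (φ (X i))) * ∑ i, ∑ j, w (X i) (X j)) := by
      intro X; rw [pairE]; ring
    rw [Finset.sum_congr rfl fun X _ => e X, ← Finset.mul_sum,
      sum_two_body (fun x => Complex.normSq (φ x)), diagF, quarF, nrm]
    simp_rw [mul_comm (w _ _) (Complex.normSq (φ _))]
    ring
  rw [Hm, br_add, br_dG, quadF_ofReal hh, br_diagonal, h1, Fintype.card_fin]
  push_cast
  ring

/-- The partial sums of the expected energy in coherent states are dominated by those of the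
exponential series. -/
theorem energy_partial {s A B : ℝ} (hs : 0 ≤ s) (hA : 0 ≤ A) (hB : 0 ≤ B) (K : ℕ) :
    ∑ n ∈ Finset.range K, (n * s ^ (n - 1) * A + n * (n - 1) * s ^ (n - 2) * B) / n.factorial
      ≤ (A + B) * expPart K s := by
  have step : ∀ K, ∑ n ∈ Finset.range (K + 1), (n * s ^ (n - 1) : ℝ) / n.factorial
      = expPart K s := by
    intro K
    rw [Finset.sum_range_succ', expPart]
    simp only [Nat.cast_zero, zero_mul, zero_div, add_zero]
    refine Finset.sum_congr rfl fun n _ => ?_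
    rw [Nat.add_sub_cancel, Nat.factorial_succ]
    push_cast
    field_simp
  have step2 : ∀ K, ∑ n ∈ Finset.range (K + 2), (n * (n - 1) * s ^ (n - 2) : ℝ) / n.factorial
      = expPart K s := by
    intro K
    rw [Finset.sum_range_succ', Finset.sum_range_succ', expPart]
    simp only [Nat.cast_zero, zero_mul, zero_div, add_zero]
    norm_num
    refine Finset.sum_congr rfl fun n _ => ?_
    rw [show n + 1 + 1 - 2 = n by omega, Nat.factorial_succ, Nat.factorial_succ]
    push_cast
    field_simp
  have mono1 : ∀ K, expPart K s ≤ expPart (K + 1) s := by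
    intro K
    rw [expPart, expPart, Finset.sum_range_succ]
    have : 0 ≤ s ^ K / K.factorial := by positivity
    linarith
  have b1 : ∑ n ∈ Finset.range K, (n * s ^ (n - 1) : ℝ) / n.factorial ≤ expPart K s := by
    rcases K with _ | K
    · simp [expPart]
    · rw [step]; exact mono1 K
  have b2 : ∑ n ∈ Finset.range K, (n * (n - 1) * s ^ (n - 2) : ℝ) / n.factorial
      ≤ expPart K s := by
    rcases K with _ | _ | K
    · simp [expPart]
    · simp [expPart]
    · rw [step2]; exact (mono1 K).trans (mono1 _)
  have e : ∀ n : ℕ, (n * s ^ (n - 1) * A + n * (n - 1) * s ^ (n - 2) * B) / n.factorial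
      = A * ((n * s ^ (n - 1) : ℝ) / n.factorial)
        + B * ((n * (n - 1) * s ^ (n - 2) : ℝ) / n.factorial) := by
    intro n; ring
  rw [Finset.sum_congr rfl fun n _ => e n, Finset.sum_add_distrib, ← Finset.mul_sum,
    ← Finset.mul_sum, add_mul]
  exact add_le_add (mul_le_mul_of_nonneg_left b1 hA) (mul_le_mul_of_nonneg_left b2 hB)

/-- Lower Berezin–Lieb bound. -/
theorem Xi_lower {h : Matrix Λ Λ ℂ} (hh : h.PosSemidef) {w : Λ → Λ → ℝ}
    (hw : ∀ x y, 0 ≤ w x y) (hs : Summable fun n : ℕ => tau (Fin n) h w)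
    (hi : Integrable fun φ : Λ → ℂ => Real.exp (-(quadF h φ + diagF w φ + quarF w φ))) :
    ∫ φ : Λ → ℂ, Real.exp (-(quadF h φ + diagF w φ + quarF w φ))
      ≤ π ^ Fintype.card Λ * Xi h w := by
  have hH := hh.isHermitian
  set E : (Λ → ℂ) → ℝ := fun φ => quadF h φ + diagF w φ + quarF w φ with hE
  have hcont : Continuous E := by simp only [hE]; fun_prop
  have hex : ∀ K : ℕ, Continuous fun φ : Λ → ℂ => expPart K (nrm φ) := by
    intro K; unfold expPart; fun_prop
  have hle1 : ∀ (K : ℕ) (φ : Λ → ℂ), ‖Real.exp (-E φ) * (expPart K (nrm φ) * Real.exp (-nrm φ))‖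
      ≤ Real.exp (-E φ) := by
    intro K φ
    have h1 := expPart_nonneg (nrm_nonneg φ) K
    rw [Real.norm_of_nonneg (by positivity)]
    refine mul_le_of_le_one_right (Real.exp_pos _).le ?_
    calc _ ≤ Real.exp (nrm φ) * Real.exp (-nrm φ) := by
          gcongr; exact expPart_le (nrm_nonneg φ) K
      _ = 1 := by rw [← Real.exp_add]; simp
  have hmeas : ∀ K : ℕ, AEStronglyMeasurable (fun φ : Λ → ℂ =>
      Real.exp (-E φ) * (expPart K (nrm φ) * Real.exp (-nrm φ))) volume := by
    intro K
    have := hex K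
    exact (by fun_prop : Continuous _).aestronglyMeasurable
  have hK : ∀ K : ℕ, ∫ φ : Λ → ℂ, Real.exp (-E φ) * (expPart K (nrm φ) * Real.exp (-nrm φ))
      ≤ π ^ Fintype.card Λ * Xi h w := by
    intro K
    have hbr : ∀ n : ℕ, (Integrable fun φ : Λ → ℂ =>
          (br (NormedSpace.exp (-(Hm (ι := Fin n) h w))) φ * gw φ).re / n.factorial) ∧
        ∫ φ : Λ → ℂ, (br (NormedSpace.exp (-(Hm (ι := Fin n) h w))) φ * gw φ).re / n.factorial
          = π ^ Fintype.card Λ * tau (Fin n) h w := by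
      intro n
      obtain ⟨i1, e1⟩ := integral_br (NormedSpace.exp (-(Hm (ι := Fin n) h w)))
      refine ⟨i1.re.div_const _, ?_⟩
      rw [integral_div]
      have := integral_re i1
      rw [e1, exp_mul_Wm_trace hH, Fintype.card_fin, ← Complex.ofReal_pow,
        ← Complex.ofReal_mul] at this
      have h2 : ∫ φ : Λ → ℂ, (br (NormedSpace.exp (-(Hm (ι := Fin n) h w))) φ * gw φ).re
          = π ^ Fintype.card Λ * (n.factorial * tau (Fin n) h w) := this
      rw [h2]
      field_simp
    calc _ ≤ ∫ φ : Λ → ℂ, ∑ n ∈ Finset.range K,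
          (br (NormedSpace.exp (-(Hm (ι := Fin n) h w))) φ * gw φ).re / n.factorial := by
          refine MeasureTheory.integral_mono (hi.mono' (hmeas K) (Eventually.of_forall (hle1 K)))
            (integrable_finsetSum _ fun n _ => (hbr n).1) fun φ => ?_
          simp only
          have hpt : ∀ n : ℕ, Real.exp (-E φ) * ((1 + E φ) * nrm φ ^ n
              - (n * nrm φ ^ (n - 1) * (quadF h φ + diagF w φ)
                + n * (n - 1) * nrm φ ^ (n - 2) * quarF w φ))
              ≤ (br (NormedSpace.exp (-(Hm (ι := Fin n) h w))) φ).re := by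
            intro n
            have hp := br_nonneg (exp_tangent (Hm_isHermitian (ι := Fin n) hH w).neg (-E φ)) φ
            rw [br_sub, br_smul, ← sub_eq_add_neg, br_sub, br_smul, br_one, br_Hm hH,
              Fintype.card_fin] at hp
            have h5 := (Complex.nonneg_iff.mp hp).1
            have h6 : (1 - ((-E φ : ℝ) : ℂ)) * ((nrm φ ^ n : ℝ) : ℂ)
                = (((1 + E φ) * nrm φ ^ n : ℝ) : ℂ) := by push_cast; ring
            rw [h6, ← Complex.ofReal_sub, ← Complex.ofReal_mul, Complex.sub_re,
              Complex.ofReal_re] at h5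
            linarith
          have h7 : ∀ n ∈ Finset.range K, Real.exp (-nrm φ) * (Real.exp (-E φ) *
              (((1 + E φ) * nrm φ ^ n
              - (n * nrm φ ^ (n - 1) * (quadF h φ + diagF w φ)
                + n * (n - 1) * nrm φ ^ (n - 2) * quarF w φ)) / n.factorial))
              ≤ (br (NormedSpace.exp (-(Hm (ι := Fin n) h w))) φ * gw φ).re / n.factorial := by
            intro n _
            rw [gw, Complex.re_mul_ofReal, ← mul_div_assoc, ← mul_div_assoc, mul_comm]
            gcongr
            exact hpt n
          refine le_trans ?_ (Finset.sum_le_sum h7)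
          rw [← Finset.mul_sum, ← Finset.mul_sum]
          have h8 := energy_partial (nrm_nonneg φ)
            (add_nonneg (quadF_nonneg hh φ) (diagF_nonneg hw φ)) (quarF_nonneg hw φ) K
          have h9 : ∑ n ∈ Finset.range K, ((1 + E φ) * nrm φ ^ n
              - (n * nrm φ ^ (n - 1) * (quadF h φ + diagF w φ)
                + n * (n - 1) * nrm φ ^ (n - 2) * quarF w φ)) / n.factorial
              = (1 + E φ) * expPart K (nrm φ) - ∑ n ∈ Finset.range K,
                (n * nrm φ ^ (n - 1) * (quadF h φ + diagF w φ)
                + n * (n - 1) * nrm φ ^ (n - 2) * quarF w φ) / n.factorial := by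
            rw [expPart, Finset.mul_sum, ← Finset.sum_sub_distrib]
            exact Finset.sum_congr rfl fun n _ => by ring
          rw [h9]
          have h10 : expPart K (nrm φ) ≤ (1 + E φ) * expPart K (nrm φ) - ∑ n ∈ Finset.range K,
                (n * nrm φ ^ (n - 1) * (quadF h φ + diagF w φ)
                + n * (n - 1) * nrm φ ^ (n - 2) * quarF w φ) / n.factorial := by
            simp only [hE] at *
            linarith
          calc _ = Real.exp (-nrm φ) * (Real.exp (-E φ) * expPart K (nrm φ)) := by ring
            _ ≤ _ := by gcongr
      _ = ∑ n ∈ Finset.range K, π ^ Fintype.card Λ * tau (Fin n) h w := by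
          rw [integral_finsetSum _ fun n _ => (hbr n).1]
          exact Finset.sum_congr rfl fun n _ => (hbr n).2
      _ ≤ _ := by
          rw [← Finset.mul_sum]
          refine mul_le_mul_of_nonneg_left ?_ (pow_pos Real.pi_pos _).le
          exact hs.sum_le_tsum _ fun n _ => tau_nonneg hH w
  refine le_of_tendsto (tendsto_integral_of_dominated_convergence _ hmeas hi
    (fun K => Eventually.of_forall (hle1 K)) (Eventually.of_forall fun φ => ?_))
    (Eventually.of_forall hK)
  have h1 := ((tendsto_expPart (nrm φ)).mul_const (Real.exp (-nrm φ))).const_mul (Real.exp (-E φ))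
  rwa [← Real.exp_add, add_neg_cancel, Real.exp_zero, mul_one] at h1

end BL2
end BoseGas

namespace BoseGas
open scoped ComplexOrder

section Step
variable {Λ : Type} [Fintype Λ] [DecidableEq Λ] [AddCommGroup Λ]

/-- Comparison of a translation-invariant system `(h, w)` with another system `(h', w')`. The
one-site moments of the first are controlled by `moments`, and are the same at all sites, so that
only the sum of the site weights `c x` enters. -/
theorem log_Xi_le {h h' : Matrix Λ Λ ℂ} (hh : h.IsHermitian) (hh' : h'.IsHermitian)
    {w w' : Λ → Λ → ℝ} {θ w₀ : ℝ}
    (hle : (h - ((2 * θ : ℝ) : ℂ) • (1 : Matrix Λ Λ ℂ)).PosSemidef)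
    (hw : ∀ x y, 0 ≤ w x y) (hθ : 0 < θ) (hw₀ : 0 ≤ w₀) (hwd : ∀ x, w₀ ≤ w x x)
    (hht : ∀ a x y, h (x + a) (y + a) = h x y) (hwt : ∀ a x y, w (x + a) (y + a) = w x y)
    (hs' : Summable fun n : ℕ => tau (Fin n) h' w')
    {δ c : Λ → ℝ} {G : Λ → Λ → ℝ}
    (hδ : (diagonal (fun x => (δ x : ℂ)) + h - h').PosSemidef)
    (hG : ∀ x y, w' x y ≤ w x y + G x y) (hG0 : ∀ x y, 0 ≤ G x y) (hc0 : ∀ x, 0 ≤ c x)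
    (hcδ : ∀ x, δ x ≤ c x * θ) (hcG : ∀ x, (1 / 2) * ∑ y, (G x y + G y x) ≤ c x * w₀) :
    Real.log (Xi h w) ≤ Real.log (Xi h' w') + (∑ x, c x) * Real.log (Real.exp θ / θ) := by
  obtain ⟨hs, S, hS, hSle⟩ := moments hh hle hw hθ hw₀ hwd (Xi_scalar hθ).1
  have hX1 := Xi_ge_one hh hs
  have hX1' := Xi_ge_one hh' hs'
  set m : ∀ n : ℕ, (Fin n → Λ) → Λ → ℝ :=
    fun n X x => θ * occ X x + w₀ / 2 * (occ X x : ℝ) ^ 2 with hm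
  set E : ℕ → Λ → ℝ := fun n x => ∑ X : Fin n → Λ, m n X x * rho h w X with hE
  -- the expectation of `m` does not depend on the site
  have hEt : ∀ n x, E n x = E n 0 := by
    intro n x
    simp only [hE]
    rw [← Equiv.sum_comp (cfgEquiv (Equiv.addRight x) (Equiv.refl (Fin n)))]
    refine Finset.sum_congr rfl fun X _ => ?_
    have h1 := rho_reindex (Equiv.addRight x) (Equiv.refl (Fin n)) (h := h) (h' := h) (w := w)
      (w' := w) (fun a b => hht x a b) (fun a b => hwt x a b) X
    have h2 := occ_reindex (Equiv.addRight x) (Equiv.refl (Fin n)) X 0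
    simp only [Equiv.coe_addRight, zero_add] at h2
    rw [h1, hm]
    simp only [h2]
  have hSE : ∀ n, ∑ X : Fin n → Λ, (∑ x, m n X x) * rho h w X = Fintype.card Λ * E n 0 := by
    intro n
    simp only [Finset.sum_mul]
    rw [Finset.sum_comm, Finset.sum_congr rfl (fun x _ => hEt n x)]
    simp
  have hcard : (0 : ℝ) < Fintype.card Λ := by exact_mod_cast Fintype.card_pos
  have hS1 : HasSum (fun n => E n 0) (S / Fintype.card Λ) := by
    have := hS.div_const (Fintype.card Λ : ℝ)
    refine this.congr_fun ?_
    intro n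
    have := hSE n
    simp only [hm] at this
    rw [this]
    field_simp
  have hD : ∀ n, (diagonal (fun X => ((∑ x, c x * m n X x : ℝ) : ℂ)) + Hm h w -
      Hm h' w').PosSemidef := by
    intro n
    have h1 := loewner (ι := Fin n) (h := h) (h' := h') (w := w) (w' := w') (δ := δ)
      (e := fun X => ∑ x, c x * m n X x - ∑ i, δ (X i)) hδ (fun X => by
        have h2 : pairE w' X ≤ pairE w X + pairE G X := by
          simp only [pairE, ← mul_add, ← Finset.sum_add_distrib]
          have := Finset.sum_le_sum fun i (_ : i ∈ Finset.univ) =>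
            Finset.sum_le_sum fun j (_ : j ∈ Finset.univ) => hG (X i) (X j)
          linarith
        have h3 : pairE G X ≤ ∑ x, c x * (w₀ / 2 * (occ X x : ℝ) ^ 2) := by
          rw [pairE_occ]
          have h4 : ∑ x, ∑ y, (occ X x : ℝ) * (occ X y : ℝ) * G x y ≤
              ∑ x, ∑ y, ((occ X x : ℝ) ^ 2 / 2 * G x y + (occ X y : ℝ) ^ 2 / 2 * G x y) := by
            refine Finset.sum_le_sum fun x _ => Finset.sum_le_sum fun y _ => ?_
            rw [← add_mul]
            refine mul_le_mul_of_nonneg_right ?_ (hG0 x y)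
            nlinarith [sq_nonneg ((occ X x : ℝ) - occ X y)]
          have h5 : ∑ x, ∑ y, ((occ X x : ℝ) ^ 2 / 2 * G x y + (occ X y : ℝ) ^ 2 / 2 * G x y)
              = ∑ x, (occ X x : ℝ) ^ 2 * ((1 / 2) * ∑ y, (G x y + G y x)) := by
            simp only [Finset.sum_add_distrib]
            rw [Finset.sum_comm (f := fun x y => (occ X y : ℝ) ^ 2 / 2 * G x y),
              ← Finset.sum_add_distrib]
            refine Finset.sum_congr rfl fun x _ => ?_
            rw [← Finset.mul_sum, ← Finset.mul_sum]
            ring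
          rw [h5] at h4
          have h6 : ∑ x, (occ X x : ℝ) ^ 2 * ((1 / 2) * ∑ y, (G x y + G y x)) ≤
              ∑ x, (occ X x : ℝ) ^ 2 * (c x * w₀) :=
            Finset.sum_le_sum fun x _ => mul_le_mul_of_nonneg_left (hcG x) (by positivity)
          have h7 : ∑ x, c x * (w₀ / 2 * (occ X x : ℝ) ^ 2) =
              (1 / 2) * ∑ x, (occ X x : ℝ) ^ 2 * (c x * w₀) := by
            rw [Finset.mul_sum]
            exact Finset.sum_congr rfl fun x _ => by ring
          rw [h7]
          linarith
        have h8 : ∑ i, δ (X i) ≤ ∑ x, c x * (θ * occ X x) := by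
          rw [sum_occ]
          refine Finset.sum_le_sum fun x _ => ?_
          have := mul_le_mul_of_nonneg_left (hcδ x) (Nat.cast_nonneg (α := ℝ) (occ X x))
          linarith
        have h9 : ∑ x, c x * m n X x =
            ∑ x, c x * (θ * occ X x) + ∑ x, c x * (w₀ / 2 * (occ X x : ℝ) ^ 2) := by
          rw [← Finset.sum_add_distrib]
          exact Finset.sum_congr rfl fun x _ => by simp only [hm]; ring
        show _ ≤ pairE w X + (∑ x, c x * m n X x - ∑ i, δ (X i))
        rw [h9]
        linarith)
    convert h1 using 5
    push_cast
    ring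
  have hSc : HasSum (fun n => ∑ X : Fin n → Λ, (∑ x, c x * m n X x) * rho h w X)
      ((∑ x, c x) * (S / Fintype.card Λ)) := by
    refine (hS1.mul_left (∑ x, c x)).congr_fun ?_
    intro n
    simp only [Finset.sum_mul]
    rw [Finset.sum_comm]
    refine Finset.sum_congr rfl fun x _ => ?_
    rw [← hEt n x, hE]
    simp only [Finset.mul_sum]
    exact Finset.sum_congr rfl fun X _ => by ring
  have h10 := peierls hh hh' hs hs' (fun n X => ∑ x, c x * m n X x) hD hSc
  have h11 := Real.log_le_log (by linarith) h10
  rw [Real.log_mul (Real.exp_pos _).ne' (by linarith), Real.log_exp] at h11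
  have h12 : S / Xi h w ≤ Fintype.card Λ * Real.log (Real.exp θ / θ) := by
    refine hSle.trans ?_
    rw [← Real.log_pow]
    exact Real.log_le_log (by linarith [Xi_ge_one (scalar_isHermitian (Λ := Λ) θ) (Xi_scalar hθ).1])
      (Xi_scalar hθ).2
  have h13 : (∑ x, c x) * (S / Fintype.card Λ) / Xi h w ≤
      (∑ x, c x) * Real.log (Real.exp θ / θ) := by
    rw [mul_div_assoc]
    refine mul_le_mul_of_nonneg_left ?_ (Finset.sum_nonneg fun x _ => hc0 x)
    rw [div_right_comm, div_le_iff₀ hcard]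
    linarith
  linarith

end Step

section Copies
variable {T : Type} [Fintype T] [DecidableEq T]

/-- Block-diagonal one-particle operator of independent copies of `a`, labelled by `β`. -/
def copyM (β : Type) [DecidableEq β] (a : Matrix T T ℂ) : Matrix (β × T) (β × T) ℂ :=
  fun p q => if p.1 = q.1 then a p.2 q.2 else 0

/-- Interaction of independent copies of `u`, labelled by `β`. -/
def copyW (β : Type) [DecidableEq β] (u : T → T → ℝ) : β × T → β × T → ℝ :=
  fun p q => if p.1 = q.1 then u p.2 q.2 else 0

theorem copyM_isHermitian (β : Type) [DecidableEq β] {a : Matrix T T ℂ} (ha : a.IsHermitian) :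
    (copyM β a).IsHermitian := by
  ext p q
  simp only [copyM, Matrix.conjTranspose_apply]
  by_cases h : p.1 = q.1
  · rw [if_pos h, if_pos h.symm]; exact ha.apply _ _
  · rw [if_neg h, if_neg (Ne.symm h)]; simp

theorem Xi_copies_fin {a : Matrix T T ℂ} (ha : a.IsHermitian) (u : T → T → ℝ)
    (hs : Summable fun n : ℕ => tau (Fin n) a u) (k : ℕ) :
    (Summable fun n : ℕ => tau (Fin n) (copyM (Fin k) a) (copyW (Fin k) u)) ∧
      Xi (copyM (Fin k) a) (copyW (Fin k) u) = Xi a u ^ k := by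
  induction k with
  | zero =>
    have h1 : ∀ n : ℕ, n ∉ ({0} : Finset ℕ) →
        tau (Fin n) (copyM (Fin 0) a) (copyW (Fin 0) u) = 0 := by
      intro n hn
      have : NeZero n := ⟨by simpa using hn⟩
      rw [tau_eq_sum]
      refine Finset.sum_eq_zero fun X _ => ?_
      exact (X 0).1.elim0
    refine ⟨summable_of_ne_finset_zero h1, ?_⟩
    rw [Xi, tsum_eq_sum h1]
    simp [tau_of_isEmpty]
  | succ k ih =>
    obtain ⟨ih1, ih2⟩ := ih
    obtain ⟨h1, h2⟩ := Xi_decouple (copyM_isHermitian (Fin k) ha) ha ih1 hs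
    let σ : (Fin k × T) ⊕ T ≃ Fin (k + 1) × T :=
      (Equiv.sumCongr (Equiv.refl _) (Equiv.uniqueProd T (Fin 1)).symm).trans
        ((Equiv.sumProdDistrib (Fin k) (Fin 1) T).symm.trans
          (Equiv.prodCongr finSumFinEquiv (Equiv.refl T)))
    have hσl : ∀ b t, σ (.inl (b, t)) = (Fin.castSucc b, t) := fun b t => rfl
    have hσr : ∀ t, σ (.inr t) = (Fin.last k, t) := fun t => rfl
    have e1 : ∀ x y, copyM (Fin (k + 1)) a (σ x) (σ y) =
        fromBlocks (copyM (Fin k) a) 0 0 a x y := by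
      rintro (⟨b, t⟩ | t) (⟨b', t'⟩ | t') <;>
        simp [hσl, hσr, copyM, Fin.castSucc_inj, Fin.castSucc_ne_last, Ne.symm (Fin.castSucc_ne_last _)]
    have e2 : ∀ x y, copyW (Fin (k + 1)) u (σ x) (σ y) = wSum (copyW (Fin k) u) u x y := by
      rintro (⟨b, t⟩ | t) (⟨b', t'⟩ | t') <;>
        simp [hσl, hσr, copyW, wSum, Fin.castSucc_inj, Fin.castSucc_ne_last,
          Ne.symm (Fin.castSucc_ne_last _)]
    rw [Xi_reindex σ e1 e2, h2, ih2, pow_succ]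
    refine ⟨?_, rfl⟩
    simpa only [tau_reindex σ (Equiv.refl (Fin _)) e1 e2] using h1

theorem Xi_copies (β : Type) [Fintype β] [DecidableEq β] {a : Matrix T T ℂ} (ha : a.IsHermitian)
    (u : T → T → ℝ) (hs : Summable fun n : ℕ => tau (Fin n) a u) :
    (Summable fun n : ℕ => tau (Fin n) (copyM β a) (copyW β u)) ∧
      Xi (copyM β a) (copyW β u) = Xi a u ^ Fintype.card β := by
  obtain ⟨h1, h2⟩ := Xi_copies_fin ha u hs (Fintype.card β)
  let σ : Fin (Fintype.card β) × T ≃ β × T :=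
    Equiv.prodCongr (Fintype.equivFin β).symm (Equiv.refl T)
  have e1 : ∀ x y, copyM β a (σ x) (σ y) = copyM (Fin (Fintype.card β)) a x y := by
    intro x y; simp [σ, copyM]
  have e2 : ∀ x y, copyW β u (σ x) (σ y) = copyW (Fin (Fintype.card β)) u x y := by
    intro x y; simp [σ, copyW]
  rw [Xi_reindex σ e1 e2, h2]
  refine ⟨?_, rfl⟩
  simpa only [tau_reindex σ (Equiv.refl (Fin _)) e1 e2] using h1

end Copies
end BoseGas

namespace BoseGas
open scoped ComplexOrder

section Edges
variable {Λ : Type} [Fintype Λ] [DecidableEq Λ]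

/-- The vector `δ_y - δ_x` of the oriented edge from `x` to `y`. -/
def edgeV (x y : Λ) : Λ → ℂ := fun z => (if z = y then 1 else 0) - (if z = x then 1 else 0)

/-- The matrix of the quadratic form `|f y - f x|²`. -/
def edgeM (x y : Λ) : Matrix Λ Λ ℂ := fun z z' => edgeV x y z * edgeV x y z'

theorem edgeM_posSemidef (x y : Λ) : (edgeM x y).PosSemidef := by
  have h := Matrix.posSemidef_vecMulVec_self_star (edgeV x y)
  convert h using 1
  ext z z'
  simp only [edgeM, Matrix.vecMulVec_apply, Pi.star_apply]
  congr 1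
  simp only [edgeV]
  split_ifs <;> simp

theorem edgeM_le (x y : Λ) : (diagonal (fun z => (2 * ((if z = x then 1 else 0) +
    (if z = y then 1 else 0)) : ℂ)) - edgeM x y).PosSemidef := by
  have h := Matrix.posSemidef_vecMulVec_self_star
    (fun z => (if z = x then 1 else 0) + (if z = y then 1 else 0) : Λ → ℂ)
  convert h using 1
  ext z z'
  simp only [edgeM, edgeV, Matrix.vecMulVec_apply, Pi.star_apply, Matrix.sub_apply,
    Matrix.diagonal_apply]
  by_cases h1 : z = x <;> by_cases h2 : z = y <;> by_cases h3 : z' = x <;> by_cases h4 : z' = y <;>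
    by_cases h5 : z = z' <;> simp_all <;> norm_num

/-- One-particle operator `2θ + (ν/2) ∑ |f (s x j) - f x|²`, the sum being over edges `(x, j)`. -/
def edgeH {J : Type} [Fintype J] (θ ν : ℝ) (s : Λ → J → Λ) : Matrix Λ Λ ℂ :=
  ((2 * θ : ℝ) : ℂ) • 1 + ((ν / 2 : ℝ) : ℂ) • ∑ x, ∑ j, edgeM x (s x j)

theorem smul_posSemidef {m : Type} [Fintype m] {A : Matrix m m ℂ} (hA : A.PosSemidef) {r : ℝ}
    (hr : 0 ≤ r) : ((r : ℂ) • A).PosSemidef :=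
  hA.smul (Complex.zero_le_real.mpr hr)

theorem edgeH_sub {J : Type} [Fintype J] (θ : ℝ) {ν : ℝ} (hν : 0 ≤ ν) (s : Λ → J → Λ) :
    (edgeH θ ν s - ((2 * θ : ℝ) : ℂ) • (1 : Matrix Λ Λ ℂ)).PosSemidef := by
  rw [edgeH, add_sub_cancel_left]
  exact smul_posSemidef (Matrix.posSemidef_sum _ fun x _ => Matrix.posSemidef_sum _ fun j _ =>
    edgeM_posSemidef _ _) (by positivity)

theorem edgeH_isHermitian {J : Type} [Fintype J] (θ : ℝ) {ν : ℝ} (hν : 0 ≤ ν) (s : Λ → J → Λ) :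
    (edgeH θ ν s).IsHermitian := by
  have h := (edgeH_sub θ hν s).isHermitian.add (scalar_isHermitian (Λ := Λ) (2 * θ))
  rwa [sub_add_cancel] at h

end Edges

section Packing
variable {Λ T β J : Type} [Fintype Λ] [DecidableEq Λ] [AddCommGroup Λ] [Fintype T] [DecidableEq T]
  [Fintype β] [DecidableEq β] [Fintype J]

/-- Packing bound. Copies of the system on `T`, labelled by `β`, are placed in `Λ` by the
injection `e`; every edge of `T` is respected except for those in `bad`. -/
theorem packing (e : β × T → Λ) (he : Function.Injective e) {θ ν : ℝ} (hθ : 0 < θ) (hν : 0 ≤ ν)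
    (s : T → J → T) (s' : Λ → J → Λ) (bad : Finset (T × J))
    (hgood : ∀ b t j, (t, j) ∉ bad → e (b, s t j) = s' (e (b, t)) j)
    (hst : ∀ a x y, edgeH θ ν s' (x + a) (y + a) = edgeH θ ν s' x y)
    {w : Λ → Λ → ℝ} {u D : T → T → ℝ} {w₀ : ℝ} (hw : ∀ x y, 0 ≤ w x y)
    (hu : ∀ x y, 0 ≤ u x y) (hw₀ : 0 ≤ w₀)
    (hwd : ∀ x, w₀ ≤ w x x) (hwt : ∀ a x y, w (x + a) (y + a) = w x y)
    (hD0 : ∀ t t', 0 ≤ D t t')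
    (hD : ∀ b t t', u t t' ≤ w (e (b, t)) (e (b, t')) + w₀ * D t t') :
    Real.log (Xi (edgeH θ ν s') w) ≤ Fintype.card β * Real.log (Xi (edgeH θ ν s) u)
      + (Fintype.card Λ - Fintype.card β * Fintype.card T)
          * Real.log (Real.exp (2 * θ) / (2 * θ))
      + Fintype.card β * (2 * ν * bad.card / θ + ∑ t, ∑ t', D t t')
          * Real.log (Real.exp θ / θ) := by
  let R := {x : Λ // x ∉ Set.range e}
  let σ : (β × T) ⊕ R ≃ Λ :=
    (Equiv.sumCongr (Equiv.ofInjective e he) (Equiv.refl R)).trans (Equiv.Set.sumCompl (Set.range e))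
  have hσl : ∀ p, σ (.inl p) = e p := fun p => rfl
  have hσr : ∀ r : R, σ (.inr r) = r.1 := fun r => rfl
  have hθ2 : 0 < 2 * θ := by positivity
  set a := edgeH θ ν s with ha_def
  have ha : a.IsHermitian := edgeH_isHermitian θ hν s
  have hsa : Summable fun n : ℕ => tau (Fin n) a u := summable_tau ha hθ2 (edgeH_sub θ hν s) hu
  obtain ⟨c1, c2⟩ := Xi_copies β ha u hsa
  obtain ⟨r1, r2⟩ := Xi_scalar (Λ := R) hθ2
  obtain ⟨d1, d2⟩ := Xi_decouple (copyM_isHermitian β ha) (scalar_isHermitian (Λ := R) (2 * θ)) c1 r1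
  set w' : Λ → Λ → ℝ := fun x y => wSum (copyW β u) (0 : R → R → ℝ) (σ.symm x) (σ.symm y) with hw'
  set G' : Λ → Λ → ℝ := fun x y => wSum (copyW β D) (0 : R → R → ℝ) (σ.symm x) (σ.symm y) with hG'
  set E : Matrix Λ Λ ℂ := ∑ b : β, ∑ t, ∑ j, edgeM (e (b, t)) (e (b, s t j)) with hE
  set h' : Matrix Λ Λ ℂ := ((2 * θ : ℝ) : ℂ) • 1 + ((ν / 2 : ℝ) : ℂ) • E with hh'_def
  have hh' : h'.IsHermitian := by
    have h1 : (((ν / 2 : ℝ) : ℂ) • E).PosSemidef :=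
      smul_posSemidef (Matrix.posSemidef_sum _ fun b _ => Matrix.posSemidef_sum _ fun t _ =>
        Matrix.posSemidef_sum _ fun j _ => edgeM_posSemidef _ _) (by positivity)
    exact (scalar_isHermitian (2 * θ)).add h1.isHermitian
  -- in the coordinates `σ`, the matrix `h'` is block diagonal
  have hEV : ∀ b t t' p, edgeV (e (b, t)) (e (b, t')) (e p) =
      if p.1 = b then edgeV t t' p.2 else 0 := by
    intro b t t' p
    simp only [edgeV, he.eq_iff, Prod.ext_iff]
    by_cases h : p.1 = b <;> simp [h]
  have hEV0 : ∀ p q (r : R), edgeV (e p) (e q) r.1 = 0 := by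
    intro p q r
    have h1 : ∀ p, r.1 ≠ e p := fun p hp => r.2 ⟨p, hp.symm⟩
    simp [edgeV, h1]
  have e1 : ∀ x y, h' (σ x) (σ y) =
      fromBlocks (copyM β a) 0 0 (((2 * θ : ℝ) : ℂ) • (1 : Matrix R R ℂ)) x y := by
    intro x y
    simp only [hh'_def, hE, Matrix.add_apply, Matrix.smul_apply, Matrix.sum_apply,
      Matrix.one_apply, σ.injective.eq_iff, edgeM]
    rcases x with p | r <;> rcases y with q | r'
    · simp only [hσl, hEV, fromBlocks_apply₁₁, copyM, ha_def, edgeH, Matrix.add_apply,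
        Matrix.smul_apply, Matrix.sum_apply, Matrix.one_apply, edgeM, Sum.inl.injEq, Prod.ext_iff]
      by_cases h : p.1 = q.1
      · simp only [h, true_and, if_true]
        congr 2
        rw [Finset.sum_eq_single q.1]
        · simp
        · intro b _ hb
          simp [hb.symm]
        · simp
      · simp only [h, false_and, if_false]
        rw [Finset.sum_eq_zero]
        · simp
        · intro b _
          refine Finset.sum_eq_zero fun t _ => Finset.sum_eq_zero fun j _ => ?_
          by_cases h2 : p.1 = b
          · have : q.1 ≠ b := fun h3 => h (h2.trans h3.symm)
            simp [this]
          · simp [h2]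
    · simp [hσr, hEV0]
    · simp [hσr, hEV0]
    · simp [hσr, hEV0, Matrix.one_apply]
  have e2 : ∀ x y, w' (σ x) (σ y) = wSum (copyW β u) (0 : R → R → ℝ) x y := by
    intro x y; simp [hw']
  have hs' : Summable fun n : ℕ => tau (Fin n) h' w' := by
    simpa only [tau_reindex σ (Equiv.refl (Fin _)) e1 e2] using d1
  have hXi' : Real.log (Xi h' w') ≤ Fintype.card β * Real.log (Xi a u)
      + (Fintype.card Λ - Fintype.card β * Fintype.card T)
          * Real.log (Real.exp (2 * θ) / (2 * θ)) := by
    have hR1 := Xi_ge_one (scalar_isHermitian (Λ := R) (2 * θ)) r1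
    have ha1 := Xi_ge_one ha hsa
    rw [Xi_reindex σ e1 e2, d2, c2, Real.log_mul (by positivity) (by linarith), Real.log_pow]
    have h1 : (Fintype.card Λ : ℝ) - Fintype.card β * Fintype.card T = Fintype.card R := by
      rw [← Fintype.card_congr σ, Fintype.card_sum, Fintype.card_prod]
      push_cast; ring
    have h2 := Real.log_le_log (by linarith) r2
    rw [Real.log_pow] at h2
    rw [h1]
    linarith
  set δ : Λ → ℝ := fun x => ν * ∑ b : β, ∑ q ∈ bad,
    ((if x = e (b, q.1) then 1 else 0) + (if x = e (b, s q.1 q.2) then 1 else 0)) with hδ_def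
  have hδ0 : ∀ x, 0 ≤ δ x := fun x => mul_nonneg hν (Finset.sum_nonneg fun b _ =>
    Finset.sum_nonneg fun q _ => by split_ifs <;> norm_num)
  have hδsum : ∑ x, δ x = Fintype.card β * (2 * ν * bad.card) := by
    simp only [hδ_def]
    rw [← Finset.mul_sum, Finset.sum_comm]
    have : ∀ b : β, ∑ x, ∑ q ∈ bad, (((if x = e (b, q.1) then 1 else 0) : ℝ) +
        (if x = e (b, s q.1 q.2) then 1 else 0)) = 2 * bad.card := by
      intro b
      rw [Finset.sum_comm]
      simp only [Finset.sum_add_distrib, Finset.sum_ite_eq', Finset.mem_univ,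
        if_true, Finset.sum_const]
      simp; ring
    rw [Finset.sum_congr rfl fun b _ => this b]
    simp; ring
  have hδ : (diagonal (fun x => (δ x : ℂ)) + edgeH θ ν s' - h').PosSemidef := by
    set good : Finset ((β × T) × J) := Finset.univ.filter fun k => (k.1.2, k.2) ∉ bad with hg
    let F : Λ × J → Matrix Λ Λ ℂ := fun k => edgeM k.1 (s' k.1 k.2)
    let ψ : (β × T) × J ↪ Λ × J := ⟨fun k => (e k.1, k.2), fun k k' hk => by
      simp only [Prod.mk.injEq] at hk
      exact Prod.ext (he hk.1) hk.2⟩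
    have h1 : E = ∑ k ∈ good.map ψ, F k +
        ∑ b : β, ∑ q ∈ bad, edgeM (e (b, q.1)) (e (b, s q.1 q.2)) := by
      have h2 : ∀ b : β, ∑ t, ∑ j, edgeM (e (b, t)) (e (b, s t j)) =
          ∑ q ∈ Finset.univ.filter (fun q : T × J => q ∉ bad), F (e (b, q.1), q.2) +
          ∑ q ∈ bad, edgeM (e (b, q.1)) (e (b, s q.1 q.2)) := by
        intro b
        rw [← Fintype.sum_prod_type' (f := fun t j => edgeM (e (b, t)) (e (b, s t j))),
          ← Finset.sum_filter_add_sum_filter_not (s := Finset.univ) (fun q : T × J => q ∉ bad)]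
        congr 1
        · refine Finset.sum_congr rfl fun q hq => ?_
          rw [hgood b q.1 q.2 (by simpa using hq)]
        · refine Finset.sum_congr ?_ fun q hq => rfl
          ext q; simp
      rw [hE, Finset.sum_congr rfl fun b _ => h2 b, Finset.sum_add_distrib]
      congr 1
      rw [Finset.sum_map, hg, Finset.sum_filter, Fintype.sum_prod_type, Fintype.sum_prod_type]
      refine Finset.sum_congr rfl fun b _ => ?_
      rw [Finset.sum_filter, Fintype.sum_prod_type]
      rfl
    have h3 : ∑ x, ∑ j, edgeM x (s' x j) = ∑ k ∈ Finset.univ \ good.map ψ, F k +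
        ∑ k ∈ good.map ψ, F k := by
      rw [Finset.sum_sdiff (Finset.subset_univ _), Fintype.sum_prod_type]
    have h4 : diagonal (fun x => (δ x : ℂ)) = ((ν / 2 : ℝ) : ℂ) • ∑ b : β, ∑ q ∈ bad,
        diagonal (fun z => (2 * ((if z = e (b, q.1) then 1 else 0) +
          (if z = e (b, s q.1 q.2) then 1 else 0)) : ℂ)) := by
      ext x y
      simp only [Matrix.smul_apply, Matrix.sum_apply, Matrix.diagonal_apply]
      by_cases h : x = y
      · simp only [h, if_true, hδ_def]
        push_cast
        simp only [← Finset.mul_sum, smul_eq_mul, apply_ite (fun r : ℝ => (r : ℂ)),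
          Complex.ofReal_one, Complex.ofReal_zero]
        ring
      · simp [h]
    have h5 : diagonal (fun x => (δ x : ℂ)) + edgeH θ ν s' - h' =
        ((ν / 2 : ℝ) : ℂ) • (∑ k ∈ Finset.univ \ good.map ψ, F k + ∑ b : β, ∑ q ∈ bad,
        (diagonal (fun z => (2 * ((if z = e (b, q.1) then 1 else 0) +
          (if z = e (b, s q.1 q.2) then 1 else 0)) : ℂ)) -
            edgeM (e (b, q.1)) (e (b, s q.1 q.2)))) := by
      rw [h4, hh'_def, edgeH, h3, h1]
      simp only [Finset.sum_sub_distrib, smul_add, smul_sub]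
      abel
    rw [h5]
    refine smul_posSemidef ((Matrix.posSemidef_sum _ fun k _ => edgeM_posSemidef _ _).add
      (Matrix.posSemidef_sum _ fun b _ => Matrix.posSemidef_sum _ fun q _ => edgeM_le _ _))
      (by positivity)
  have hG'0 : ∀ x y, 0 ≤ G' x y := by
    intro x y
    simp only [hG']
    rcases σ.symm x with p | r <;> rcases σ.symm y with q | r' <;> simp only [wSum, copyW]
    · split_ifs
      · exact hD0 _ _
      · exact le_rfl
    all_goals exact le_rfl
  have hG'sum : ∑ x, ∑ y, G' x y = Fintype.card β * ∑ t, ∑ t', D t t' := by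
    have h1 : ∀ x y, G' (σ x) (σ y) = wSum (copyW β D) (0 : R → R → ℝ) x y := by
      intro x y; simp [hG']
    rw [← Equiv.sum_comp σ, Finset.sum_congr rfl fun x _ =>
      (Equiv.sum_comp σ (fun y => G' (σ x) y)).symm]
    simp only [h1, Fintype.sum_sum_type]
    have h2 : ∀ p q, wSum (copyW β D) (0 : R → R → ℝ) (.inl p) (.inl q) = copyW β D p q :=
      fun _ _ => rfl
    have h3 : ∀ p q, wSum (copyW β D) (0 : R → R → ℝ) (.inl p) (.inr q) = 0 := fun _ _ => rfl
    have h4 : ∀ p q, wSum (copyW β D) (0 : R → R → ℝ) (.inr p) (.inl q) = 0 := fun _ _ => rfl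
    have h5 : ∀ p q, wSum (copyW β D) (0 : R → R → ℝ) (.inr p) (.inr q) = 0 := fun _ _ => rfl
    simp only [h2, h3, h4, h5, Finset.sum_const_zero, add_zero, Fintype.sum_prod_type, copyW]
    simp
  have hhs := edgeH_isHermitian θ hν s'
  have key := log_Xi_le (h := edgeH θ ν s') (h' := h') hhs hh' (w := w) (w' := w') (θ := θ)
    (w₀ := w₀) (edgeH_sub θ hν s') hw hθ hw₀ hwd hst hwt hs' (δ := δ)
    (c := fun x => δ x / θ + (1 / 2) * ∑ y, (G' x y + G' y x)) (G := fun x y => w₀ * G' x y)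
    hδ ?_ ?_ ?_ ?_ ?_
  · have hc : ∑ x, (δ x / θ + (1 / 2) * ∑ y, (G' x y + G' y x)) =
        Fintype.card β * (2 * ν * bad.card / θ + ∑ t, ∑ t', D t t') := by
      rw [Finset.sum_add_distrib, ← Finset.sum_div, hδsum, ← Finset.mul_sum]
      simp only [Finset.sum_add_distrib]
      rw [Finset.sum_comm (f := fun x y => G' y x), hG'sum]
      ring
    rw [hc] at key
    linarith
  · intro x y
    obtain ⟨x, rfl⟩ := σ.surjective x
    obtain ⟨y, rfl⟩ := σ.surjective y
    simp only [e2, hG', Equiv.symm_apply_apply]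
    have := hw (σ x) (σ y)
    rcases x with p | r <;> rcases y with q | r' <;> simp only [wSum, copyW]
    · split_ifs with h
      · obtain ⟨b, t⟩ := p
        obtain ⟨b', t'⟩ := q
        obtain rfl : b = b' := h
        exact hD b t t'
      · simpa using this
    · simpa using this
    · simpa using this
    · simpa using this
  · exact fun x y => mul_nonneg hw₀ (hG'0 x y)
  · exact fun x => add_nonneg (div_nonneg (hδ0 x) hθ.le) (mul_nonneg (by norm_num)
      (Finset.sum_nonneg fun y _ => add_nonneg (hG'0 _ _) (hG'0 _ _)))
  · intro x
    rw [add_mul, div_mul_cancel₀ _ hθ.ne']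
    have : 0 ≤ (1 / 2) * (∑ y, (G' x y + G' y x)) * θ := mul_nonneg (mul_nonneg (by norm_num)
      (Finset.sum_nonneg fun y _ => add_nonneg (hG'0 _ _) (hG'0 _ _))) hθ.le
    linarith
  · intro x
    rw [add_mul]
    have h1 : 0 ≤ δ x / θ * w₀ := mul_nonneg (div_nonneg (hδ0 x) hθ.le) hw₀
    have h2 : ∑ y, (w₀ * G' x y + w₀ * G' y x) = w₀ * ∑ y, (G' x y + G' y x) := by
      rw [Finset.mul_sum]; exact Finset.sum_congr rfl fun y _ => by ring
    rw [h2]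
    linarith

end Packing
end BoseGas

namespace BoseGas
open scoped ComplexOrder

section Periodized
variable {d : ℕ} {v : (Fin d → ℤ) → ℝ}

/-- A nonnegative function of positive type that vanishes at `0` vanishes identically. -/
theorem posType_eq_zero (hv : ∀ x, 0 ≤ v x) (hp : IsPosTypeZ d v) (h0 : v 0 = 0)
    (x : Fin d → ℤ) : v x = 0 := by
  by_cases hx : x = 0
  · rw [hx, h0]
  set f : (Fin d → ℤ) →₀ ℝ := Finsupp.single 0 1 - Finsupp.single x 1 with hf_def
  have hf := hp f
  have hfa : ∀ y, f y = (if 0 = y then 1 else 0) - (if x = y then 1 else 0) := by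
    intro y
    simp [hf_def, Finsupp.single_apply]
  have hsupp : f.support ⊆ {0, x} := by
    intro y hy
    rw [Finsupp.mem_support_iff, hfa] at hy
    by_contra hc
    simp only [Finset.mem_insert, Finset.mem_singleton, not_or] at hc
    simp [Ne.symm hc.1, Ne.symm hc.2] at hy
  have h1 : ∀ a, ∑ y ∈ f.support, f a * v (a - y) * f y =
      ∑ y ∈ {0, x}, f a * v (a - y) * f y := by
    intro a
    refine Finset.sum_subset hsupp ?_
    intro y _ hy
    rw [Finsupp.notMem_support_iff.mp hy, mul_zero]
  simp only [h1] at hf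
  rw [Finset.sum_subset hsupp] at hf
  · rw [Finset.sum_pair (Ne.symm hx), Finset.sum_pair (Ne.symm hx),
      Finset.sum_pair (Ne.symm hx)] at hf
    simp [hfa, hx, Ne.symm hx, h0] at hf
    linarith [hv x, hv (-x)]
  · intro y _ hy
    rw [Finsupp.notMem_support_iff.mp hy]
    simp

theorem shift_injective (L : ℕ) [NeZero L] (z : Fin d → ℤ) :
    Function.Injective fun (k : Fin d → ℤ) (j : Fin d) => z j + (L : ℤ) * k j := by
  intro k k' h
  funext j
  have h1 := congrFun h j
  have hL : (L : ℤ) ≠ 0 := by exact_mod_cast NeZero.ne L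
  exact mul_left_cancel₀ hL (add_left_cancel h1)

theorem perPot_nonneg (L : ℕ) [NeZero L] (hv : ∀ x, 0 ≤ v x) (x : Tor d L) :
    0 ≤ perPot d L v x := tsum_nonneg fun _ => hv _

/-- The periodization may be computed from any integer representative. -/
theorem perPot_cast (L : ℕ) [NeZero L] (z : Fin d → ℤ) :
    perPot d L v (fun j => (z j : ZMod L)) = ∑' k : Fin d → ℤ, v fun j => z j + (L : ℤ) * k j := by
  rw [perPot, ← Equiv.tsum_eq (Equiv.addRight (fun j => z j / (L : ℤ)))]
  refine tsum_congr fun k => ?_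
  congr 1
  funext j
  simp only [Equiv.coe_addRight, Pi.add_apply]
  rw [ZMod.val_intCast]
  have := Int.emod_add_mul_ediv (z j) L
  linarith

theorem le_perPot (L : ℕ) [NeZero L] (hv : ∀ x, 0 ≤ v x) (hs : Summable v) (z : Fin d → ℤ) :
    v z ≤ perPot d L v (fun j => (z j : ZMod L)) := by
  rw [perPot_cast]
  have h1 : Summable fun k : Fin d → ℤ => v fun j => z j + (L : ℤ) * k j :=
    hs.comp_injective (shift_injective L z)
  have := h1.le_tsum 0 (fun k _ => hv _)
  simpa using this

theorem sum_perPot_le (L : ℕ) [NeZero L] (hv : ∀ x, 0 ≤ v x) (hs : Summable v) :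
    ∑ x : Tor d L, perPot d L v x ≤ ∑' x, v x := by
  have hinj : Function.Injective fun p : Tor d L × (Fin d → ℤ) =>
      (fun j => ((p.1 j).val : ℤ) + (L : ℤ) * p.2 j : Fin d → ℤ) := by
    rintro ⟨x, k⟩ ⟨y, l⟩ h
    have h1 : ∀ j, ((x j).val : ℤ) + (L : ℤ) * k j = ((y j).val : ℤ) + (L : ℤ) * l j :=
      fun j => congrFun h j
    have h2 : x = y := by
      funext j
      have := congrArg (fun z : ℤ => (z : ZMod L)) (h1 j)
      simpa using this
    subst h2
    exact Prod.ext rfl (shift_injective L (fun j => ((x j).val : ℤ)) (funext h1))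
  have h1 := hs.comp_injective hinj
  have h2 := tsum_comp_le_tsum_of_inj hs hv hinj
  have h3 := h1.tsum_prod
  rw [tsum_fintype (L := SummationFilter.unconditional _) (fun b : Tor d L => _)] at h3
  exact h3.symm.trans_le h2

end Periodized

section Torus
variable (d L : ℕ) [NeZero L]

/-- One-particle operator `-(ν/2) Δ + κν` on the torus, as a sum over edges. -/
def hT (κ ν : ℝ) : Matrix (Tor d L) (Tor d L) ℂ :=
  edgeH (κ * ν / 2) ν fun (x : Tor d L) (j : Fin d) => x + unitVec d L j

/-- The two-body interaction on the torus. -/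
def wT (lam : ℝ) (v : (Fin d → ℤ) → ℝ) (x y : Tor d L) : ℝ := lam * perPot d L v (x - y)

theorem lap_eq : -lap d L = ∑ x : Tor d L, ∑ j : Fin d, edgeM x (x + unitVec d L j) := by
  ext a b
  simp only [Matrix.neg_apply, lap, Matrix.sum_apply, edgeM, edgeV]
  rw [Finset.sum_comm]
  have h1 : ∀ j : Fin d, ∑ x : Tor d L, ((if a = x + unitVec d L j then (1 : ℂ) else 0) -
      if a = x then 1 else 0) * ((if b = x + unitVec d L j then 1 else 0) - if b = x then 1 else 0)
      = 2 * (if b = a then 1 else 0) - ((if b = a + unitVec d L j then (1 : ℂ) else 0)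
        + (if b = a - unitVec d L j then (1 : ℂ) else 0)) := by
    intro j
    have h2 : ∀ x, (a = x + unitVec d L j) ↔ (x = a - unitVec d L j) := fun x => by
      rw [eq_sub_iff_add_eq]; exact eq_comm
    have h3 : ∀ x, (a = x) ↔ (x = a) := fun x => eq_comm
    simp only [sub_mul, h2 , h3, ite_mul, one_mul, zero_mul, Finset.sum_sub_distrib,
      Finset.sum_ite_eq', Finset.mem_univ, if_true, sub_add_cancel]
    ring
  rw [Finset.sum_congr rfl fun j _ => h1 j, Finset.sum_sub_distrib]
  simp only [Finset.sum_const, Finset.card_univ, Fintype.card_fin, nsmul_eq_mul]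
  split_ifs <;> ring

theorem hT_eq (κ ν : ℝ) : hT d L κ ν =
    ((-(ν / 2) : ℝ) : ℂ) • lap d L + ((κ * ν : ℝ) : ℂ) • 1 := by
  rw [hT, edgeH, ← lap_eq, show 2 * (κ * ν / 2) = κ * ν by ring]
  push_cast
  rw [smul_neg, neg_smul, add_comm]

theorem hT_translate (κ ν : ℝ) (a x y : Tor d L) :
    hT d L κ ν (x + a) (y + a) = hT d L κ ν x y := by
  simp only [hT_eq, Matrix.add_apply, Matrix.smul_apply, lap, Matrix.one_apply, add_left_inj]
  have h1 : ∀ u : Tor d L, (y + a = x + a + u) ↔ (y = x + u) := fun u => by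
    rw [add_right_comm, add_left_inj]
  have h2 : ∀ u : Tor d L, (y + a = x + a - u) ↔ (y = x - u) := fun u => by
    rw [add_sub_right_comm, add_left_inj]
  simp only [h1, h2]

theorem hT_isHermitian (κ : ℝ) {ν : ℝ} (hν : 0 ≤ ν) : (hT d L κ ν).IsHermitian :=
  edgeH_isHermitian _ hν _

theorem hT_sub (κ : ℝ) {ν : ℝ} (hν : 0 ≤ ν) :
    (hT d L κ ν - ((κ * ν : ℝ) : ℂ) • (1 : Matrix (Tor d L) (Tor d L) ℂ)).PosSemidef := by
  have := edgeH_sub (κ * ν / 2) hν fun (x : Tor d L) (j : Fin d) => x + unitVec d L j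
  rwa [show 2 * (κ * ν / 2) = κ * ν by ring] at this

/-- The grand canonical partition function on the torus. -/
def XiT (v : (Fin d → ℤ) → ℝ) (κ ν lam : ℝ) : ℝ := Xi (hT d L κ ν) (wT d L lam v)

theorem wT_nonneg {lam : ℝ} (hl : 0 ≤ lam) {v : (Fin d → ℤ) → ℝ} (hv : ∀ x, 0 ≤ v x) (x y) :
    0 ≤ wT d L lam v x y := mul_nonneg hl (perPot_nonneg L hv _)

theorem summable_T {κ ν lam : ℝ} (hκ : 0 < κ) (hν : 0 < ν) (hl : 0 ≤ lam) {v : (Fin d → ℤ) → ℝ}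
    (hv : ∀ x, 0 ≤ v x) : Summable fun n : ℕ => tau (Fin n) (hT d L κ ν) (wT d L lam v) :=
  summable_tau (hT_isHermitian d L κ hν.le) (mul_pos hκ hν) (hT_sub d L κ hν.le)
    (wT_nonneg d L hl hv)

theorem XiT_ge_one {κ ν lam : ℝ} (hκ : 0 < κ) (hν : 0 < ν) (hl : 0 ≤ lam) {v : (Fin d → ℤ) → ℝ}
    (hv : ∀ x, 0 ≤ v x) : 1 ≤ XiT d L v κ ν lam :=
  Xi_ge_one (hT_isHermitian d L κ hν.le) (summable_T d L hκ hν hl hv)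

/-- Excess of the periodized interaction on the torus of side `L` over the interaction of the box,
relative to `v 0`. -/
def excess (v : (Fin d → ℤ) → ℝ) (t t' : Tor d L) : ℝ :=
  (perPot d L v (t - t') - v fun j => ((t j).val : ℤ) - ((t' j).val : ℤ)) / v 0

theorem excess_nonneg {v : (Fin d → ℤ) → ℝ} (hv : ∀ x, 0 ≤ v x) (hs : Summable v) (t t') :
    0 ≤ excess d L v t t' := by
  refine div_nonneg ?_ (hv 0)
  have := le_perPot L hv hs fun j => ((t j).val : ℤ) - ((t' j).val : ℤ)
  have h2 : (fun j => ((((t j).val : ℤ) - ((t' j).val : ℤ) : ℤ) : ZMod L)) = t - t' := by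
    funext j
    simp
  rw [h2] at this
  exact sub_nonneg.mpr this

/-- Surface error per site in the subdivision into boxes of side `M`. -/
def errT (d M : ℕ) [NeZero M] (v : (Fin d → ℤ) → ℝ) (κ : ℝ) : ℝ :=
  4 * d / (κ * M) + ((M : ℝ) ^ d)⁻¹ * ∑ t, ∑ t', excess d M v t t'

/-- The wrap-around edges of the torus. -/
def wrap : Finset (Tor d L × Fin d) := Finset.univ.filter fun q => (q.1 q.2).val + 1 = L

theorem card_Tor : Fintype.card (Tor d L) = L ^ d := by simp [ZMod.card]

theorem card_wrap : (wrap d L).card * L ≤ d * L ^ d := by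
  have h1 : ∀ q ∈ (wrap d L), q.1 q.2 = -1 := by
    intro q hq
    simp only [wrap, Finset.mem_filter, Finset.mem_univ, true_and] at hq
    have := congrArg (fun n : ℕ => (n : ZMod L)) hq
    simp only [Nat.cast_add, ZMod.natCast_val, ZMod.cast_id', id, Nat.cast_one,
      ZMod.natCast_self] at this
    exact eq_neg_of_add_eq_zero_left this
  have h2 : ((wrap d L) ×ˢ (Finset.univ : Finset (ZMod L))).card ≤
      (Finset.univ : Finset (Tor d L × Fin d)).card := by
    refine Finset.card_le_card_of_injOn
      (fun p => (Function.update p.1.1 p.1.2 p.2, p.1.2)) (fun _ _ => by simp) ?_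
    rintro ⟨⟨t, j⟩, a⟩ hp ⟨⟨t', j'⟩, a'⟩ hp' h
    simp only [Finset.coe_product, Set.mem_prod, Finset.mem_coe] at hp hp'
    simp only [Prod.mk.injEq] at h
    obtain ⟨h3, rfl⟩ := h
    have h4 := h1 _ hp.1
    have h5 := h1 _ hp'.1
    simp only at h4 h5
    have h6 : a = a' := by simpa using congrFun h3 j
    have h7 : t = t' := by
      funext i
      by_cases hi : i = j
      · rw [hi, h4, h5]
      · simpa [hi] using congrFun h3 i
    rw [h6, h7]
  rw [Finset.card_product, Finset.card_univ, Finset.card_univ, ZMod.card, Fintype.card_prod,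
    card_Tor, Fintype.card_fin] at h2
  linarith

/-- Placement of boxes of side `M` in the torus of side `L`. -/
def place (M : ℕ) (p : (Fin d → Fin (L / M)) × Tor d M) : Tor d L :=
  fun j => (((p.1 j : ℕ) * M + (p.2 j).val : ℕ) : ZMod L)

theorem place_lt {M : ℕ} [NeZero M] (b : Fin (L / M)) (t : ZMod M) : (b : ℕ) * M + t.val < L := by
  have h1 := ZMod.val_lt t
  have h2 : ((b : ℕ) + 1) * M ≤ (L / M) * M := Nat.mul_le_mul_right _ b.2
  have h3 := Nat.div_mul_le_self L M
  rw [add_mul, one_mul] at h2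
  omega

theorem place_injective (M : ℕ) [NeZero M] : Function.Injective (place d L M) := by
  rintro ⟨b, t⟩ ⟨b', t'⟩ h
  have h1 : ∀ j, (b j : ℕ) * M + (t j).val = (b' j : ℕ) * M + (t' j).val := by
    intro j
    have h2 := congrFun h j
    simp only [place] at h2
    rw [ZMod.natCast_eq_natCast_iff'] at h2
    rwa [Nat.mod_eq_of_lt (place_lt L _ _), Nat.mod_eq_of_lt (place_lt L _ _)] at h2
  have hM : 0 < M := NeZero.pos M
  have h3 : ∀ j, t j = t' j := by
    intro j
    have := congrArg (· % M) (h1 j)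
    simp only [Nat.mul_add_mod_self_right, Nat.mod_eq_of_lt (ZMod.val_lt _)] at this
    exact ZMod.val_injective _ this
  have h4 : ∀ j, b j = b' j := by
    intro j
    have := h1 j
    rw [h3 j] at this
    exact Fin.ext (Nat.eq_of_mul_eq_mul_right hM (by omega))
  rw [funext h3, funext h4]

/-- Approximate subadditivity of the pressure: `(L / M)^d` boxes of side `M` fit into the torus of
side `L`; the first term is their contribution, the second that of the uncovered sites, and the
third the cost of periodizing the boxes. -/
theorem log_XiT_le (M : ℕ) [NeZero M] {κ ν lam : ℝ} (hκ : 0 < κ) (hν : 0 < ν) (hl : 0 ≤ lam)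
    {v : (Fin d → ℤ) → ℝ} (hv : ∀ x, 0 ≤ v x) (hp : IsPosTypeZ d v) (hs : Summable v) :
    Real.log (XiT d L v κ ν lam) ≤ ((L / M : ℕ) : ℝ) ^ d * Real.log (XiT d M v κ ν lam)
      + ((L : ℝ) ^ d - ((L / M : ℕ) : ℝ) ^ d * (M : ℝ) ^ d)
          * Real.log (Real.exp (κ * ν) / (κ * ν))
      + ((L / M : ℕ) : ℝ) ^ d * ((M : ℝ) ^ d * errT d M v κ)
          * Real.log (Real.exp (κ * ν / 2) / (κ * ν / 2)) := by
  have hθ : 0 < κ * ν / 2 := by positivity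
  have hM : (0 : ℝ) < M := by exact_mod_cast NeZero.pos M
  have key := packing (place d L M) (place_injective d L M) hθ hν.le
    (fun (x : Tor d M) (j : Fin d) => x + unitVec d M j)
    (fun (x : Tor d L) (j : Fin d) => x + unitVec d L j) (wrap d M) ?_
    (fun a x y => hT_translate d L κ ν a x y) (w := wT d L lam v) (u := wT d M lam v)
    (D := excess d M v) (w₀ := lam * v 0) (wT_nonneg d L hl hv) (wT_nonneg d M hl hv)
    (mul_nonneg hl (hv 0)) ?_ ?_ (excess_nonneg d M hv hs) ?_
  · simp only [Fintype.card_fun, Fintype.card_fin, ZMod.card, Nat.cast_pow,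
      show 2 * (κ * ν / 2) = κ * ν by ring] at key
    have hC : 0 ≤ Real.log (Real.exp (κ * ν / 2) / (κ * ν / 2)) := by
      refine Real.log_nonneg ?_
      rw [le_div_iff₀ hθ, one_mul]
      linarith [Real.add_one_le_exp (κ * ν / 2)]
    refine key.trans ?_
    refine add_le_add le_rfl (mul_le_mul_of_nonneg_right (mul_le_mul_of_nonneg_left ?_
      (by positivity)) hC)
    rw [errT, mul_add, ← mul_assoc, mul_inv_cancel₀ (by positivity), one_mul]
    refine add_le_add ?_ le_rfl
    have h1 : ((wrap d M).card : ℝ) * M ≤ d * (M : ℝ) ^ d := by exact_mod_cast card_wrap d M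
    rw [show 2 * ν * ((wrap d M).card : ℝ) / (κ * ν / 2) =
      4 / (κ * M) * ((wrap d M).card * M) by field_simp; ring,
      show (M : ℝ) ^ d * (4 * d / (κ * M)) = 4 / (κ * M) * (d * (M : ℝ) ^ d) by ring]
    exact mul_le_mul_of_nonneg_left h1 (by positivity)
  · intro b t j hj
    funext i
    simp only [wrap, Finset.mem_filter, Finset.mem_univ, true_and] at hj
    simp only [place, Pi.add_apply, unitVec]
    by_cases hi : i = j
    · subst hi
      have h1 : (t i + 1).val = (t i).val + 1 := by
        have h2 := ZMod.val_lt (t i)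
        rw [ZMod.val_add, ZMod.val_one_eq_one_mod, Nat.add_mod_mod, Nat.mod_eq_of_lt]
        omega
      simp only [if_true, h1]
      push_cast
      ring
    · simp [hi]
  · intro x
    refine mul_le_mul_of_nonneg_left ?_ hl
    have := le_perPot L hv hs 0
    have h2 : (fun j => (((0 : Fin d → ℤ) j : ℤ) : ZMod L)) = x - x := by
      funext j
      simp
    rwa [h2] at this
  · intro a x y
    simp only [wT, add_sub_add_right_eq_sub]
  · intro b t t'
    simp only [wT]
    rw [mul_assoc, ← mul_add]
    refine mul_le_mul_of_nonneg_left ?_ hl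
    have h1 := le_perPot L hv hs fun j => ((t j).val : ℤ) - ((t' j).val : ℤ)
    have h2 : (fun j => ((((t j).val : ℤ) - ((t' j).val : ℤ) : ℤ) : ZMod L)) =
        place d L M (b, t) - place d L M (b, t') := by
      funext j
      simp [place]
    rw [h2] at h1
    by_cases h0 : v 0 = 0
    · have h3 := posType_eq_zero hv hp h0
      have h4 : perPot d M v (t - t') = 0 := by simp [perPot, h3]
      rw [h4, h0, zero_mul, add_zero]
      exact perPot_nonneg L hv _
    · rw [excess, mul_div_cancel₀ _ h0]
      linarith

end Torus
end BoseGas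

namespace BoseGas
open scoped ComplexOrder

section Thermo

/-- A nonnegative sequence that is almost subadditive, in averaged form, converges. -/
theorem tendsto_of_almost_subadditive {p e : ℕ → ℝ} (hp : ∀ n, 0 ≤ p n) (he : ∀ n, 0 ≤ e n)
    (he0 : Tendsto e atTop (𝓝 0))
    (h : ∀ m, ∀ η > 0, ∀ᶠ n in atTop, p n ≤ p m + e m + η) : ∃ l, Tendsto p atTop (𝓝 l) := by
  have hb : BddBelow (Set.range fun m => p m + e m) :=
    ⟨0, by rintro _ ⟨m, rfl⟩; exact add_nonneg (hp m) (he m)⟩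
  refine ⟨⨅ m, (p m + e m), ?_⟩
  rw [Metric.tendsto_nhds]
  intro η hη
  obtain ⟨m, hm⟩ := exists_lt_of_ciInf_lt (lt_add_of_pos_right (⨅ m, (p m + e m)) (half_pos hη))
  have h2 := he0.eventually (gt_mem_nhds hη)
  filter_upwards [h m (η / 4) (by positivity), h2] with n h3 h4
  have h5 := ciInf_le hb n
  rw [Real.dist_eq, abs_lt]
  constructor <;> linarith

theorem tendsto_sub_div (c : ℕ) :
    Tendsto (fun n : ℕ => ((n + 1 - c : ℕ) : ℝ) / ((n : ℝ) + 1)) atTop (𝓝 1) := by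
  have h1 : Tendsto (fun n : ℕ => 1 - (c : ℝ) * (1 / ((n : ℝ) + 1))) atTop (𝓝 (1 - (c : ℝ) * 0)) :=
    tendsto_const_nhds.sub (tendsto_one_div_add_atTop_nhds_zero_nat.const_mul _)
  rw [mul_zero, sub_zero] at h1
  refine h1.congr' ?_
  filter_upwards [eventually_ge_atTop c] with n hn
  rw [Nat.cast_sub (by omega)]
  have : (n : ℝ) + 1 ≠ 0 := by positivity
  push_cast
  field_simp

theorem tendsto_div_mul (m : ℕ) :
    Tendsto (fun n : ℕ => (((n + 1) / (m + 1) : ℕ) : ℝ) * ((m : ℝ) + 1) / ((n : ℝ) + 1))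
      atTop (𝓝 1) := by
  refine tendsto_of_tendsto_of_tendsto_of_le_of_le (tendsto_sub_div (m + 1)) tendsto_const_nhds
    (fun n => ?_) (fun n => ?_)
  · have h1 : n + 1 - (m + 1) ≤ (n + 1) / (m + 1) * (m + 1) := by
      have := Nat.div_add_mod (n + 1) (m + 1)
      have h2 := Nat.mod_lt (n + 1) (Nat.succ_pos m)
      rw [Nat.mul_comm] at this
      rw [Nat.sub_le_iff_le_add]
      calc n + 1 = (n + 1) / (m + 1) * (m + 1) + (n + 1) % (m + 1) := this.symm
        _ ≤ _ := Nat.add_le_add_left h2.le _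
    have h2 : (0 : ℝ) < (n : ℝ) + 1 := by positivity
    refine div_le_div_of_nonneg_right ?_ h2.le
    have h3 : ((n + 1 - (m + 1) : ℕ) : ℝ) ≤ (((n + 1) / (m + 1) * (m + 1) : ℕ) : ℝ) :=
      Nat.cast_le.mpr h1
    rwa [Nat.cast_mul, Nat.cast_add m, Nat.cast_one] at h3
  · have h2 : (0 : ℝ) < (n : ℝ) + 1 := by positivity
    show _ ≤ (1 : ℝ)
    rw [div_le_one h2]
    exact_mod_cast Nat.div_mul_le_self (n + 1) (m + 1)

/-- A lower bound for the number of pairs of points of the box of side `M` whose difference in `ℤ^d`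
(not merely modulo `M`) is `z`. -/
theorem card_pairs (d M : ℕ) [NeZero M] (z : Fin d → ℤ) :
    ∏ j, (M - (z j).natAbs) ≤ (Finset.univ.filter fun p : Tor d M × Tor d M =>
      (fun j => ((p.1 j).val : ℤ) - ((p.2 j).val : ℤ)) = z).card := by
  have h1 : ∏ j, (M - (z j).natAbs) = (Finset.univ : Finset (∀ j, Fin (M - (z j).natAbs))).card := by
    rw [Finset.card_univ, Fintype.card_pi]; simp
  rw [h1]
  have hv1 : ∀ (s : ∀ j, Fin (M - (z j).natAbs)) j,
      (((s j + (z j).toNat : ℕ) : ZMod M)).val = s j + (z j).toNat := by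
    intro s j
    have := (s j).2
    exact ZMod.val_natCast_of_lt (by omega)
  have hv2 : ∀ (s : ∀ j, Fin (M - (z j).natAbs)) j,
      (((s j + (-z j).toNat : ℕ) : ZMod M)).val = s j + (-z j).toNat := by
    intro s j
    have := (s j).2
    exact ZMod.val_natCast_of_lt (by omega)
  refine Finset.card_le_card_of_injOn (fun s => (fun j => ((s j + (z j).toNat : ℕ) : ZMod M),
    fun j => ((s j + (-z j).toNat : ℕ) : ZMod M))) ?_ ?_
  · intro s _
    simp only [Finset.coe_filter, Finset.mem_univ, true_and, Set.mem_ofPred_eq]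
    funext j
    rw [hv1, hv2]
    push_cast
    omega
  · intro s _ s' _ h
    funext j
    have h2 := congrArg (fun p : Tor d M × Tor d M => (p.1 j).val) h
    simp only [hv1] at h2
    exact Fin.ext (by omega)

theorem errT_nonneg (d M : ℕ) [NeZero M] {v : (Fin d → ℤ) → ℝ} (hv : ∀ x, 0 ≤ v x)
    (hs : Summable v) {κ : ℝ} (hκ : 0 < κ) : 0 ≤ errT d M v κ :=
  add_nonneg (by positivity) (mul_nonneg (by positivity)
    (Finset.sum_nonneg fun t _ => Finset.sum_nonneg fun t' _ => excess_nonneg d M hv hs t t'))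

theorem sum_excess_le (d M : ℕ) [NeZero M] {v : (Fin d → ℤ) → ℝ} (hv : ∀ x, 0 ≤ v x)
    (hs : Summable v) (F : Finset (Fin d → ℤ)) :
    ((M : ℝ) ^ d)⁻¹ * ∑ t, ∑ t', excess d M v t t' ≤
      (∑' x, v x - ∑ z ∈ F, v z * ∏ j, (((M - (z j).natAbs : ℕ) : ℝ) / M)) / v 0 := by
  have hM : (0 : ℝ) < (M : ℝ) ^ d := by
    have : (0 : ℝ) < M := by exact_mod_cast NeZero.pos M
    positivity
  simp only [excess]
  simp only [← Finset.sum_div]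
  rw [← mul_div_assoc]
  refine div_le_div_of_nonneg_right ?_ (hv 0)
  simp only [Finset.sum_sub_distrib]
  have h1 : ∑ t : Tor d M, ∑ t' : Tor d M, perPot d M v (t - t') ≤ (M : ℝ) ^ d * ∑' x, v x := by
    have h2 : ∀ t : Tor d M, ∑ t' : Tor d M, perPot d M v (t - t') ≤ ∑' x, v x := by
      intro t
      refine (Equiv.sum_comp (Equiv.subLeft t) (perPot d M v)).trans_le ?_
      exact sum_perPot_le M hv hs
    refine (Finset.sum_le_sum fun t _ => h2 t).trans_eq ?_
    rw [Finset.sum_const, Finset.card_univ, card_Tor]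
    simp
  have h3 : ∑ z ∈ F, v z * ((∏ j, (M - (z j).natAbs) : ℕ) : ℝ) ≤
      ∑ t : Tor d M, ∑ t' : Tor d M, v fun j => ((t j).val : ℤ) - ((t' j).val : ℤ) := by
    have h4 : ∀ t t' : Tor d M, ∑ z ∈ F, (if (fun j => ((t j).val : ℤ) - ((t' j).val : ℤ)) = z
        then v z else 0) ≤ v fun j => ((t j).val : ℤ) - ((t' j).val : ℤ) := by
      intro t t'
      rw [Finset.sum_ite_eq]
      split_ifs
      · exact le_rfl
      · exact hv _
    refine le_trans ?_ (Finset.sum_le_sum fun t _ => Finset.sum_le_sum fun t' _ => h4 t t')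
    rw [← Fintype.sum_prod_type' (f := fun t t' : Tor d M => ∑ z ∈ F,
      (if (fun j => ((t j).val : ℤ) - ((t' j).val : ℤ)) = z then v z else 0)), Finset.sum_comm]
    refine Finset.sum_le_sum fun z _ => ?_
    rw [← Finset.sum_filter, Finset.sum_const, nsmul_eq_mul, mul_comm]
    refine mul_le_mul_of_nonneg_right ?_ (hv z)
    exact_mod_cast card_pairs d M z
  have h5 : ∑ z ∈ F, v z * ∏ j, (((M - (z j).natAbs : ℕ) : ℝ) / M) =
      ((M : ℝ) ^ d)⁻¹ * ∑ z ∈ F, v z * ((∏ j, (M - (z j).natAbs) : ℕ) : ℝ) := by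
    rw [Finset.mul_sum]
    refine Finset.sum_congr rfl fun z _ => ?_
    rw [Finset.prod_div_distrib]
    simp
    ring
  rw [h5, mul_sub]
  refine sub_le_sub ?_ (mul_le_mul_of_nonneg_left h3 (by positivity))
  rw [inv_mul_le_iff₀ hM]
  exact h1

theorem tendsto_errT (d : ℕ) {v : (Fin d → ℤ) → ℝ} (hv : ∀ x, 0 ≤ v x) (hs : Summable v)
    {κ : ℝ} (hκ : 0 < κ) : Tendsto (fun m : ℕ => errT d (m + 1) v κ) atTop (𝓝 0) := by
  rw [Metric.tendsto_nhds]
  intro η hη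
  have hη' : 0 < η / 3 * v 0 ∨ v 0 = 0 := by
    rcases (hv 0).eq_or_lt with h | h
    · exact Or.inr h.symm
    · exact Or.inl (by positivity)
  have h1 : Tendsto (fun m : ℕ => 4 * (d : ℝ) / (κ * ((m + 1 : ℕ) : ℝ))) atTop (𝓝 0) := by
    have := tendsto_one_div_add_atTop_nhds_zero_nat (𝕜 := ℝ) |>.const_mul (4 * d / κ)
    rw [mul_zero] at this
    refine this.congr fun m => ?_
    push_cast
    field_simp
  have h2 : ∀ᶠ m : ℕ in atTop, (((m + 1 : ℕ) : ℝ) ^ d)⁻¹ *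
      ∑ t, ∑ t', excess d (m + 1) v t t' ≤ η * (2 / 3) := by
    rcases hη' with hpos | h0
    · have hv0 : 0 < v 0 := by
        by_contra hc
        have := le_antisymm (not_lt.mp hc) (hv 0)
        rw [this, mul_zero] at hpos
        exact lt_irrefl _ hpos
      obtain ⟨F, hF⟩ := (hs.hasSum.eventually (lt_mem_nhds (show ∑' x, v x - η / 3 * v 0 <
        ∑' x, v x by linarith))).exists
      have h3 : Tendsto (fun m : ℕ => ∑ z ∈ F, v z *
          ∏ j, (((m + 1 - (z j).natAbs : ℕ) : ℝ) / ((m + 1 : ℕ) : ℝ))) atTop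
          (𝓝 (∑ z ∈ F, v z * ∏ _j : Fin d, (1 : ℝ))) := by
        refine tendsto_finsetSum _ fun z _ => Tendsto.const_mul _ (tendsto_finsetProd _ fun j _ => ?_)
        have := tendsto_sub_div (z j).natAbs
        refine this.congr fun m => ?_
        push_cast
        rfl
      simp only [Finset.prod_const_one, mul_one] at h3
      filter_upwards [h3.eventually (lt_mem_nhds (show ∑ z ∈ F, v z - η / 3 * v 0 <
        ∑ z ∈ F, v z by linarith))] with m hm
      refine (sum_excess_le d (m + 1) hv hs F).trans ?_
      rw [div_le_iff₀ hv0]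
      linarith
    · refine Eventually.of_forall fun m => ?_
      have := sum_excess_le d (m + 1) hv hs ∅
      rw [h0, div_zero] at this
      exact this.trans (by positivity)
  filter_upwards [h1.eventually (gt_mem_nhds (show (0 : ℝ) < η / 3 by positivity)), h2] with m h4 h5
  rw [Real.dist_eq, sub_zero, abs_of_nonneg (errT_nonneg d (m + 1) hv hs hκ), errT]
  linarith

/-- Existence of the thermodynamic limit of the pressure. -/
theorem exists_pressure (d : ℕ) {κ ν lam : ℝ} (hκ : 0 < κ) (hν : 0 < ν) (hl : 0 ≤ lam)
    {v : (Fin d → ℤ) → ℝ} (hv : ∀ x, 0 ≤ v x) (hp : IsPosTypeZ d v) (hs : Summable v) :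
    ∃ l, Tendsto (fun n : ℕ => (((n + 1 : ℕ) : ℝ) ^ d)⁻¹ * Real.log (XiT d (n + 1) v κ ν lam))
      atTop (𝓝 l) := by
  set C := Real.log (Real.exp (κ * ν / 2) / (κ * ν / 2)) with hC
  set C' := Real.log (Real.exp (κ * ν) / (κ * ν)) with hC'
  have hC0 : 0 ≤ C := by
    refine Real.log_nonneg ?_
    rw [le_div_iff₀ (by positivity), one_mul]
    linarith [Real.add_one_le_exp (κ * ν / 2)]
  refine tendsto_of_almost_subadditive (e := fun m => errT d (m + 1) v κ * C) ?_ ?_ ?_ ?_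
  · exact fun n => mul_nonneg (by positivity) (Real.log_nonneg (XiT_ge_one d _ hκ hν hl hv))
  · exact fun n => mul_nonneg (errT_nonneg d _ hv hs hκ) hC0
  · simpa using (tendsto_errT d hv hs hκ).mul_const C
  · intro m η hη
    set P := (((m + 1 : ℕ) : ℝ) ^ d)⁻¹ * Real.log (XiT d (m + 1) v κ ν lam) with hP
    set r : ℕ → ℝ := fun n =>
      ((((n + 1) / (m + 1) : ℕ) : ℝ) * ((m : ℝ) + 1) / ((n : ℝ) + 1)) ^ d with hr
    have hr1 : Tendsto r atTop (𝓝 1) := by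
      simpa using (tendsto_div_mul m).pow d
    have hlim : Tendsto (fun n => r n * P + (1 - r n) * C' + r n * (errT d (m + 1) v κ * C)) atTop
        (𝓝 (1 * P + (1 - 1) * C' + 1 * (errT d (m + 1) v κ * C))) :=
      ((hr1.mul_const _).add ((tendsto_const_nhds.sub hr1).mul_const _)).add (hr1.mul_const _)
    have hlt : 1 * P + (1 - 1) * C' + 1 * (errT d (m + 1) v κ * C) <
        P + errT d (m + 1) v κ * C + η := by linarith
    filter_upwards [hlim.eventually (gt_mem_nhds hlt)] with n hn
    refine le_trans ?_ hn.le
    have key := log_XiT_le d (n + 1) (m + 1) hκ hν hl hv hp hs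
    have hn0 : (0 : ℝ) < (((n + 1 : ℕ) : ℝ) ^ d) := by positivity
    have hm0 : (0 : ℝ) < (((m + 1 : ℕ) : ℝ) ^ d) := by positivity
    rw [inv_mul_le_iff₀ hn0]
    refine key.trans_eq ?_
    have hrn : (((n + 1 : ℕ) : ℝ) ^ d) * r n =
        (((n + 1) / (m + 1) : ℕ) : ℝ) ^ d * ((m + 1 : ℕ) : ℝ) ^ d := by
      simp only [hr]
      rw [div_pow, mul_pow]
      push_cast
      field_simp
    have hPm : Real.log (XiT d (m + 1) v κ ν lam) = ((m + 1 : ℕ) : ℝ) ^ d * P := by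
      rw [hP, ← mul_assoc, mul_inv_cancel₀ hm0.ne', one_mul]
    rw [hPm]
    linear_combination (C' - P - errT d (m + 1) v κ * C) * hrn

end Thermo
end BoseGas

namespace BoseGas
open scoped ComplexOrder

/-! ### Comparison of quantum and classical partition functions -/

section Classical
variable {Λ : Type} [Fintype Λ] [DecidableEq Λ]

/-- The classical partition function with one-body energy scaled by `s` and interaction scaled
by `t`. -/
def partF (h : Matrix Λ Λ ℂ) (u : Λ → Λ → ℝ) (s t : ℝ) : ℝ :=
  ∫ φ : Λ → ℂ, Real.exp (-(s * quadF h φ + t * quarF u φ))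

theorem exists_sqrt {h : Matrix Λ Λ ℂ} (hh : h.PosSemidef) : ∃ B : Matrix Λ Λ ℂ, h = Bᴴ * B := by
  open scoped MatrixOrder in
  have hn : 0 ≤ h := hh.nonneg
  open scoped MatrixOrder in
  obtain ⟨X, hX, -, hXX⟩ :=
    CFC.exists_sqrt_of_isSelfAdjoint_of_quasispectrumRestricts hh.isHermitian
      (QuasispectrumRestricts.nnreal_of_nonneg hn)
  exact ⟨X, by rw [← hXX]; congr 1; exact hX.star_eq.symm⟩

theorem nrm_eq_dot (φ : Λ → ℂ) : (nrm φ : ℂ) = star φ ⬝ᵥ φ := by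
  simp only [nrm, dotProduct, Complex.ofReal_sum, Pi.star_apply, RCLike.star_def]
  exact Finset.sum_congr rfl fun x _ => by rw [mul_comm, Complex.mul_conj]

theorem quadF_sq (B : Matrix Λ Λ ℂ) (φ : Λ → ℂ) : quadF (Bᴴ * B) φ = nrm (B *ᵥ φ) := by
  have : ((quadF (Bᴴ * B) φ : ℝ) : ℂ) = (nrm (B *ᵥ φ) : ℂ) := by
    rw [← quadF_ofReal (isHermitian_conjTranspose_mul_self B), quad_eq_dot, nrm_eq_dot,
      star_mulVec, ← Matrix.dotProduct_mulVec, Matrix.mulVec_mulVec]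
  exact_mod_cast this

theorem quadF_smul (r : ℝ) (h : Matrix Λ Λ ℂ) (φ : Λ → ℂ) :
    quadF ((r : ℂ) • h) φ = r * quadF h φ := by
  simp only [quadF, Matrix.smul_apply, smul_eq_mul, mul_assoc]
  simp_rw [← Finset.mul_sum]
  rw [Complex.re_ofReal_mul]

theorem le_quadF {h : Matrix Λ Λ ℂ} {θ : ℝ}
    (hle : (h - (θ : ℂ) • (1 : Matrix Λ Λ ℂ)).PosSemidef) (φ : Λ → ℂ) :
    θ * nrm φ ≤ quadF h φ := by
  have h1 := quadF_nonneg hle φ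
  have h2 := quadF_add (h - (θ : ℂ) • (1 : Matrix Λ Λ ℂ)) ((θ : ℂ) • (1 : Matrix Λ Λ ℂ)) φ
  rw [sub_add_cancel, quadF_scalar] at h2
  linarith

/-- The complex Gaussian integral, obtained by writing `h = B* B` and substituting `ψ = B φ`,
whose real Jacobian is `|det B|² = det h`. -/
theorem gaussian_integral {h : Matrix Λ Λ ℂ} (hh : h.PosSemidef) (hd : h.det ≠ 0) :
    ((∫ φ : Λ → ℂ, Real.exp (-quadF h φ) : ℝ) : ℂ) = π ^ Fintype.card Λ * h.det⁻¹ := by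
  obtain ⟨B, rfl⟩ := exists_sqrt hh
  have hdet : (Bᴴ * B).det = (Complex.normSq B.det : ℂ) := by
    rw [Matrix.det_mul, Matrix.det_conjTranspose, mul_comm, RCLike.star_def, Complex.mul_conj]
  have hne : Complex.normSq B.det ≠ 0 := by
    intro h0; apply hd; rw [hdet, h0]; simp
  set f : (Λ → ℂ) →ₗ[ℝ] (Λ → ℂ) := (Matrix.toLin' B).restrictScalars ℝ with hf
  have hfd : LinearMap.det f = Complex.normSq B.det := by
    rw [hf, LinearMap.det_restrictScalars, LinearMap.det_toLin', Algebra.norm_complex_apply]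
  have hmap := Measure.map_linearMap_addHaar_eq_smul_addHaar
    (μ := (volume : Measure (Λ → ℂ))) (f := f) (by rw [hfd]; exact hne)
  have hcf : Continuous f := LinearMap.continuous_of_finiteDimensional f
  have h1 : ∫ φ : Λ → ℂ, Real.exp (-quadF (Bᴴ * B) φ)
      = (Complex.normSq B.det)⁻¹ * π ^ Fintype.card Λ := by
    have h2 : ∫ φ : Λ → ℂ, Real.exp (-quadF (Bᴴ * B) φ)
        = ∫ φ : Λ → ℂ, Real.exp (-(1 * nrm φ)) ∂(Measure.map f volume) := by
      rw [integral_map hcf.aemeasurable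
        (by fun_prop : Continuous fun φ : Λ → ℂ => Real.exp (-(1 * nrm φ))).aestronglyMeasurable]
      refine integral_congr_ae (Eventually.of_forall fun φ => ?_)
      simp [quadF_sq, hf, Matrix.toLin'_apply]
    rw [h2, hmap, integral_smul_measure, (integral_exp_nrm one_pos).2, hfd, div_one,
      abs_of_nonneg (inv_nonneg.mpr (Complex.normSq_nonneg _)),
      ENNReal.toReal_ofReal (inv_nonneg.mpr (Complex.normSq_nonneg _)), smul_eq_mul]
  rw [h1, hdet]
  push_cast
  ring

variable {h : Matrix Λ Λ ℂ} {u : Λ → Λ → ℝ} {κ V : ℝ}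

theorem integrable_partF (hκ : 0 < κ) (hle : (h - (κ : ℂ) • (1 : Matrix Λ Λ ℂ)).PosSemidef)
    (hu : ∀ x y, 0 ≤ u x y) {s t : ℝ} (hs : 0 < s) (ht : 0 ≤ t) :
    Integrable fun φ : Λ → ℂ => Real.exp (-(s * quadF h φ + t * quarF u φ)) := by
  refine integrable_exp_of_le (by fun_prop) (mul_pos hs hκ) (c := 0) fun φ => ?_
  have h1 := mul_le_mul_of_nonneg_left (le_quadF hle φ) hs.le
  have h2 := mul_nonneg ht (quarF_nonneg hu φ)
  linarith

theorem partF_pos (hκ : 0 < κ) (hle : (h - (κ : ℂ) • (1 : Matrix Λ Λ ℂ)).PosSemidef)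
    (hu : ∀ x y, 0 ≤ u x y) {s t : ℝ} (hs : 0 < s) (ht : 0 ≤ t) : 0 < partF h u s t :=
  integral_exp_pos (integrable_partF hκ hle hu hs ht)

theorem partF_anti (hκ : 0 < κ) (hle : (h - (κ : ℂ) • (1 : Matrix Λ Λ ℂ)).PosSemidef)
    (hu : ∀ x y, 0 ≤ u x y) {s t t' : ℝ} (hs : 0 < s) (ht : 0 ≤ t) (htt : t ≤ t') :
    partF h u s t' ≤ partF h u s t := by
  refine MeasureTheory.integral_mono (integrable_partF hκ hle hu hs (ht.trans htt))
    (integrable_partF hκ hle hu hs ht) fun φ => Real.exp_le_exp.mpr ?_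
  have := mul_le_mul_of_nonneg_right htt (quarF_nonneg hu φ)
  linarith

/-- Substituting `φ ↦ √c φ` in the classical partition function. -/
theorem partF_scale (h : Matrix Λ Λ ℂ) (u : Λ → Λ → ℝ) {c : ℝ} (hc : 0 < c) (s t : ℝ) :
    partF h u (c * s) (c ^ 2 * t) = (c ^ Fintype.card Λ)⁻¹ * partF h u s t := by
  have hn : ∀ (φ : Λ → ℂ) x, Complex.normSq ((√c • φ) x) = c * Complex.normSq (φ x) := by
    intro φ x
    rw [Pi.smul_apply, Complex.real_smul, Complex.normSq_mul, Complex.normSq_ofReal,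
      Real.mul_self_sqrt hc.le]
  have hq : ∀ φ : Λ → ℂ, quadF h (√c • φ) = c * quadF h φ := by
    intro φ
    rw [← quadF_smul]
    simp only [quadF]
    congr 1
    refine Finset.sum_congr rfl fun x _ => Finset.sum_congr rfl fun y _ => ?_
    have : ((√c : ℝ) : ℂ) * ((√c : ℝ) : ℂ) = (c : ℂ) := by
      rw [← Complex.ofReal_mul, Real.mul_self_sqrt hc.le]
    simp only [Pi.smul_apply, Complex.real_smul, map_mul, Complex.conj_ofReal, Matrix.smul_apply,
      smul_eq_mul, ← this]
    ring
  have hw : ∀ φ : Λ → ℂ, quarF u (√c • φ) = c ^ 2 * quarF u φ := by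
    intro φ
    simp only [quarF, hn, Finset.mul_sum]
    refine Finset.sum_congr rfl fun x _ => Finset.sum_congr rfl fun y _ => ?_
    ring
  have hfr : Module.finrank ℝ (Λ → ℂ) = 2 * Fintype.card Λ := by
    rw [Module.finrank_pi_fintype]; simp [mul_comm]
  have := Measure.integral_comp_smul_of_nonneg (volume : Measure (Λ → ℂ))
    (fun φ => Real.exp (-(s * quadF h φ + t * quarF u φ))) (√c) (hR := Real.sqrt_nonneg c)
  rw [hfr, pow_mul, Real.sq_sqrt hc.le, smul_eq_mul] at this
  rw [partF, partF, ← this]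
  refine integral_congr_ae (Eventually.of_forall fun φ => ?_)
  simp only [hq, hw]
  congr 1; ring

theorem quarF_smul (r : ℝ) (u : Λ → Λ → ℝ) (φ : Λ → ℂ) :
    quarF (fun x y => r * u x y) φ = r * quarF u φ := by
  simp only [quarF, Finset.mul_sum]
  exact Finset.sum_congr rfl fun x _ => Finset.sum_congr rfl fun y _ => by ring

theorem smul_sub_posSemidef (hle : (h - (κ : ℂ) • (1 : Matrix Λ Λ ℂ)).PosSemidef) {ν : ℝ}
    (hν : 0 ≤ ν) : ((ν : ℂ) • h - ((ν * κ : ℝ) : ℂ) • (1 : Matrix Λ Λ ℂ)).PosSemidef := by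
  have := smul_posSemidef hle hν
  rwa [smul_sub, smul_smul, ← Complex.ofReal_mul] at this

theorem posSemidef_of_sub (hκ : 0 ≤ κ) (hle : (h - (κ : ℂ) • (1 : Matrix Λ Λ ℂ)).PosSemidef) :
    h.PosSemidef := by
  have := hle.add (smul_posSemidef (Matrix.PosSemidef.one (n := Λ) (R := ℂ)) hκ)
  rwa [sub_add_cancel] at this

/-- The Berezin–Lieb upper bound, with the normal ordering error absorbed into the mass. -/
theorem Xi_le_partF (hκ : 0 < κ) (hle : (h - (κ : ℂ) • (1 : Matrix Λ Λ ℂ)).PosSemidef)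
    (hu : ∀ x y, 0 ≤ u x y) (hV : 0 ≤ V) (hr : ∀ x, ∑ y, u x y ≤ V) (hc : ∀ y, ∑ x, u x y ≤ V)
    {ν r : ℝ} (hν : 0 < ν) (hr0 : 0 ≤ r) (ha : 3 / 2 * (r * V) < ν * κ) :
    π ^ Fintype.card Λ * Xi ((ν : ℂ) • h) (fun x y => r * u x y) ≤
      Real.exp (ν * h.trace.re) * partF h u (ν - 3 / 2 * (r * V) / κ) r := by
  have hH : ((ν : ℂ) • h).IsHermitian :=
    (smul_posSemidef (posSemidef_of_sub hκ.le hle) hν.le).isHermitian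
  have hpos : 0 < ν - 3 / 2 * (r * V) / κ := by
    rw [sub_pos, div_lt_iff₀ hκ]; exact ha
  have key : ∀ φ : Λ → ℂ, (ν - 3 / 2 * (r * V) / κ) * quadF h φ + r * quarF u φ - ν * h.trace.re
      ≤ hup ((ν : ℂ) • h) (fun x y => r * u x y) (r * V) φ := by
    intro φ
    have h1 := mul_le_mul_of_nonneg_left (le_quadF hle φ)
      (show 0 ≤ 3 / 2 * (r * V) / κ by positivity)
    have h2 : 3 / 2 * (r * V) / κ * (κ * nrm φ) = 3 / 2 * (r * V) * nrm φ := by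
      field_simp
    have h3 : ((ν : ℂ) • h).trace.re = ν * h.trace.re := by
      rw [Matrix.trace_smul, smul_eq_mul, Complex.re_ofReal_mul]
    rw [hup, quadF_smul, quarF_smul, h3]
    linarith
  have hcont : Continuous (hup ((ν : ℂ) • h) (fun x y => r * u x y) (r * V)) := by
    unfold hup; fun_prop
  have hi : Integrable fun φ : Λ → ℂ =>
      Real.exp (-hup ((ν : ℂ) • h) (fun x y => r * u x y) (r * V) φ) := by
    refine integrable_exp_of_le hcont (mul_pos hpos hκ) (c := ν * h.trace.re) fun φ => ?_
    have h1 := mul_le_mul_of_nonneg_left (le_quadF hle φ) hpos.le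
    have h2 := mul_nonneg hr0 (quarF_nonneg hu φ)
    linarith [key φ]
  refine (Xi_upper hH (fun x y => mul_nonneg hr0 (hu x y)) ?_ ?_ hi).2.trans ?_
  · intro x; rw [← Finset.mul_sum]; exact mul_le_mul_of_nonneg_left (hr x) hr0
  · intro x; rw [← Finset.mul_sum]; exact mul_le_mul_of_nonneg_left (hc x) hr0
  · rw [partF, ← integral_const_mul]
    refine MeasureTheory.integral_mono hi
      ((integrable_partF hκ hle hu hpos hr0).const_mul _) fun φ => ?_
    rw [← Real.exp_add, Real.exp_le_exp]
    linarith [key φ]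

/-- The Berezin–Lieb lower bound, with the self-energy absorbed into the mass. -/
theorem partF_le_Xi (hκ : 0 < κ) (hle : (h - (κ : ℂ) • (1 : Matrix Λ Λ ℂ)).PosSemidef)
    (hu : ∀ x y, 0 ≤ u x y) (hV : 0 ≤ V) (hr : ∀ x, ∑ y, u x y ≤ V)
    {ν r : ℝ} (hν : 0 < ν) (hr0 : 0 ≤ r) :
    partF h u (ν + r * V / 2 / κ) r ≤
      π ^ Fintype.card Λ * Xi ((ν : ℂ) • h) (fun x y => r * u x y) := by
  have hP := smul_posSemidef (posSemidef_of_sub hκ.le hle) hν.le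
  have hpos : 0 < ν + r * V / 2 / κ := by positivity
  have hw : ∀ x y, 0 ≤ r * u x y := fun x y => mul_nonneg hr0 (hu x y)
  have hs := summable_tau hP.isHermitian (mul_pos hν hκ) (smul_sub_posSemidef hle hν.le) hw
  have hd : ∀ φ : Λ → ℂ, diagF (fun x y => r * u x y) φ ≤ r * V / 2 * nrm φ := by
    intro φ
    rw [diagF, nrm, Finset.mul_sum, Finset.mul_sum]
    refine Finset.sum_le_sum fun x _ => ?_
    have h1 : u x x ≤ V :=
      (Finset.single_le_sum (f := fun y => u x y) (fun y _ => hu x y)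
        (Finset.mem_univ x)).trans (hr x)
    have h2 := mul_le_mul_of_nonneg_right (mul_le_mul_of_nonneg_left h1 hr0)
      (Complex.normSq_nonneg (φ x))
    linarith
  have key : ∀ φ : Λ → ℂ, quadF ((ν : ℂ) • h) φ + diagF (fun x y => r * u x y) φ
      + quarF (fun x y => r * u x y) φ ≤ (ν + r * V / 2 / κ) * quadF h φ + r * quarF u φ := by
    intro φ
    have h1 := mul_le_mul_of_nonneg_left (le_quadF hle φ)
      (show 0 ≤ r * V / 2 / κ by positivity)
    have h2 : r * V / 2 / κ * (κ * nrm φ) = r * V / 2 * nrm φ := by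
      field_simp
    rw [quadF_smul, quarF_smul]
    linarith [hd φ]
  have hi : Integrable fun φ : Λ → ℂ => Real.exp (-(quadF ((ν : ℂ) • h) φ
      + diagF (fun x y => r * u x y) φ + quarF (fun x y => r * u x y) φ)) := by
    refine integrable_exp_of_le (by fun_prop) (mul_pos hν hκ) (c := 0) fun φ => ?_
    have h1 := mul_le_mul_of_nonneg_left (le_quadF hle φ) hν.le
    have h2 := quarF_nonneg hw φ
    have h3 := diagF_nonneg hw φ
    rw [quadF_smul]
    linarith
  refine le_trans ?_ (Xi_lower hP hw hs hi)
  refine MeasureTheory.integral_mono (integrable_partF hκ hle hu hpos hr0) hi fun φ =>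
    Real.exp_le_exp.mpr ?_
  linarith [key φ]

/-- The mean-field error per site. -/
def mfErr (κ V T ν : ℝ) : ℝ :=
  ν * T + Real.log (1 + ν * V / 2 / κ) - Real.log (1 - 3 / 2 * (ν * V) / κ)

theorem mean_field_bound (hκ : 0 < κ) (hle : (h - (κ : ℂ) • (1 : Matrix Λ Λ ℂ)).PosSemidef)
    (hu : ∀ x y, 0 ≤ u x y) (hV : 0 ≤ V) (hr : ∀ x, ∑ y, u x y ≤ V) (hc : ∀ y, ∑ x, u x y ≤ V)
    {T : ℝ} (hT : h.trace.re ≤ Fintype.card Λ * T)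
    {ν : ℝ} (hν : 0 < ν) (ha : 3 / 2 * (ν * V) < κ) :
    |Real.log (Xi ((ν : ℂ) • h) (fun x y => ν ^ 2 * u x y))
      - Real.log (Xi ((ν : ℂ) • h) (fun x y => 0 * u x y))
      - (Real.log (partF h u 1 1) - Real.log (partF h u 1 0))|
      ≤ Fintype.card Λ * mfErr κ V T ν := by
  set N := Fintype.card Λ with hN
  have hH : ((ν : ℂ) • h).IsHermitian :=
    (smul_posSemidef (posSemidef_of_sub hκ.le hle) hν.le).isHermitian
  have hX : ∀ r : ℝ, 0 ≤ r → 0 < Xi ((ν : ℂ) • h) (fun x y => r * u x y) := fun r hr0 =>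
    lt_of_lt_of_le one_pos (Xi_ge_one hH (summable_tau hH (mul_pos hν hκ)
      (smul_sub_posSemidef hle hν.le) fun x y => mul_nonneg hr0 (hu x y)))
  have hpi : 0 < π ^ N := by positivity
  have hc1 : 0 < 1 - 3 / 2 * (ν * V) / κ := by rw [sub_pos, div_lt_one hκ]; exact ha
  have hc2 : 0 < 1 + ν * V / 2 / κ := by positivity
  have hA1 := partF_pos hκ hle hu one_pos zero_le_one
  have hA0 := partF_pos hκ hle hu one_pos le_rfl
  have hνT : ν * h.trace.re ≤ N * (ν * T) := by
    have := mul_le_mul_of_nonneg_left hT hν.le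
    linarith
  -- scaling `partF (ν c) (ν² c²)` for the two values of `c`
  have hsc : ∀ c : ℝ, 0 < c → ∀ t, partF h u (ν * c) (ν ^ 2 * (c ^ 2 * t))
      = (ν ^ N)⁻¹ * ((c ^ N)⁻¹ * partF h u 1 t) := by
    intro c hc t
    rw [partF_scale h u hν, ← partF_scale h u hc, mul_one]
  have hsq : 3 / 2 * (ν ^ 2 * V) < ν * κ := by nlinarith
  have up1 := Xi_le_partF hκ hle hu hV hr hc hν (sq_nonneg ν) hsq
  have up0 := Xi_le_partF hκ hle hu hV hr hc hν le_rfl (by simp; positivity)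
  have lo1 := partF_le_Xi hκ hle hu hV hr hν (sq_nonneg ν)
  have lo0 := partF_le_Xi hκ hle hu hV hr hν (le_refl (0 : ℝ))
  have e1 : ν - 3 / 2 * (ν ^ 2 * V) / κ = ν * (1 - 3 / 2 * (ν * V) / κ) := by ring
  have e2 : ν + ν ^ 2 * V / 2 / κ = ν * (1 + ν * V / 2 / κ) := by ring
  have e3 : ν - 3 / 2 * (0 * V) / κ = ν * 1 := by ring
  have e4 : ν + 0 * V / 2 / κ = ν * 1 := by ring
  have m1 : partF h u (ν * (1 - 3 / 2 * (ν * V) / κ)) (ν ^ 2)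
      ≤ (ν ^ N)⁻¹ * (((1 - 3 / 2 * (ν * V) / κ) ^ N)⁻¹ * partF h u 1 1) := by
    rw [← hsc _ hc1 1]
    refine partF_anti hκ hle hu (mul_pos hν hc1) (by positivity) ?_
    rw [mul_one]
    refine mul_le_of_le_one_right (sq_nonneg ν) (pow_le_one₀ hc1.le ?_)
    have : 0 ≤ 3 / 2 * (ν * V) / κ := by positivity
    linarith
  have m2 : (ν ^ N)⁻¹ * (((1 + ν * V / 2 / κ) ^ N)⁻¹ * partF h u 1 1)
      ≤ partF h u (ν * (1 + ν * V / 2 / κ)) (ν ^ 2) := by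
    rw [← hsc _ hc2 1]
    refine partF_anti hκ hle hu (mul_pos hν hc2) (by positivity) ?_
    rw [mul_one]
    refine le_mul_of_one_le_right (sq_nonneg ν) (one_le_pow₀ ?_)
    have : 0 ≤ ν * V / 2 / κ := by positivity
    linarith
  have m3 : partF h u (ν * 1) 0 = (ν ^ N)⁻¹ * partF h u 1 0 := by
    have := hsc 1 one_pos 0
    simpa using this
  rw [e1] at up1
  rw [e2] at lo1
  rw [e3, m3] at up0
  rw [e4, m3] at lo0
  have up1' := up1.trans (mul_le_mul_of_nonneg_left m1 (Real.exp_pos _).le)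
  have lo1' := m2.trans lo1
  clear up1 lo1 m1 m2 m3
  have X1 := hX _ (sq_nonneg ν)
  have X0 := hX 0 le_rfl
  have hlog : ∀ c : ℝ, Real.log ((c ^ N)⁻¹) = -(N * Real.log c) := fun c => by
    rw [Real.log_inv, Real.log_pow]
  have hνN : 0 < (ν ^ N)⁻¹ := by positivity
  have hcN1 : 0 < ((1 - 3 / 2 * (ν * V) / κ) ^ N)⁻¹ := by positivity
  have hcN2 : 0 < ((1 + ν * V / 2 / κ) ^ N)⁻¹ := by positivity
  have L1 := Real.log_le_log (mul_pos hpi X1) up1'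
  have L2 := Real.log_le_log (by positivity) lo1'
  have L3 := Real.log_le_log (mul_pos hpi X0) up0
  have L4 := Real.log_le_log (by positivity) lo0
  rw [Real.log_mul hpi.ne' X1.ne', Real.log_mul (by positivity) (by positivity),
    Real.log_mul (by positivity) (by positivity), Real.log_mul (by positivity) (by positivity),
    Real.log_exp, hlog, hlog] at L1
  rw [Real.log_mul hpi.ne' X1.ne', Real.log_mul (by positivity) (by positivity),
    Real.log_mul (by positivity) (by positivity), hlog, hlog] at L2
  rw [Real.log_mul hpi.ne' X0.ne', Real.log_mul (by positivity) (by positivity),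
    Real.log_mul (by positivity) (by positivity), Real.log_exp, hlog] at L3
  rw [Real.log_mul hpi.ne' X0.ne', Real.log_mul (by positivity) (by positivity), hlog] at L4
  have hl1 : 0 ≤ N * Real.log (1 + ν * V / 2 / κ) :=
    mul_nonneg (Nat.cast_nonneg _) (Real.log_nonneg (by
      have : 0 ≤ ν * V / 2 / κ := by positivity
      linarith))
  have hl2 : N * Real.log (1 - 3 / 2 * (ν * V) / κ) ≤ 0 :=
    mul_nonpos_of_nonneg_of_nonpos (Nat.cast_nonneg _) (Real.log_nonpos hc1.le (by
      have : 0 ≤ 3 / 2 * (ν * V) / κ := by positivity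
      linarith))
  have hexp : (N : ℝ) * mfErr κ V T ν = N * (ν * T) + N * Real.log (1 + ν * V / 2 / κ)
      - N * Real.log (1 - 3 / 2 * (ν * V) / κ) := by rw [mfErr]; ring
  rw [hexp, abs_le]
  constructor <;> linarith

theorem tendsto_mfErr (κ V T : ℝ) : Tendsto (mfErr κ V T) (𝓝[>] 0) (𝓝 0) := by
  have : ContinuousAt (mfErr κ V T) 0 := by
    unfold mfErr
    refine ((continuousAt_id.mul continuousAt_const).add (ContinuousAt.log ?_ ?_)).sub
      (ContinuousAt.log ?_ ?_)
    · fun_prop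
    · simp
    · fun_prop
    · simp
  have h0 : mfErr κ V T 0 = 0 := by simp [mfErr]
  have h1 := this.tendsto
  rw [h0] at h1
  exact h1.mono_left nhdsWithin_le_nhds

end Classical
end BoseGas

namespace BoseGas
open scoped ComplexOrder

/-! ### The torus partition functions and their thermodynamic limits -/

section Bridge
variable (d L : ℕ) [NeZero L]

theorem kin_eq (n : ℕ) : kin d L n = dG (ι := Fin n) (lap d L) := by
  ext X Y
  rw [kin, dG, Matrix.sum_apply]
  refine Finset.sum_congr rfl fun i _ => ?_
  simp only [emb]
  congr

theorem symProj_eq (n : ℕ) : symProj d L n = Pm (Tor d L) (Fin n) := by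
  ext X Y
  simp only [symProj, Pm, Wm, Matrix.smul_apply, smul_eq_mul, Fintype.card_fin]

theorem ham_eq (v : (Fin d → ℤ) → ℝ) (ν κ lam : ℝ) (n : ℕ) :
    ham d L (perPot d L v) ν lam n
      + ((κ * ν * n : ℝ) : ℂ) • (1 : Matrix (Cfg d L n) (Cfg d L n) ℂ)
      = Hm (hT d L κ ν) (wT d L lam v) := by
  have h1 : dG (ι := Fin n) (1 : Matrix (Tor d L) (Tor d L) ℂ)
      = (n : ℂ) • (1 : Matrix (Cfg d L n) (Cfg d L n) ℂ) := by
    rw [← Matrix.diagonal_one, dG_diagonal]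
    ext X Y
    by_cases hXY : X = Y
    · subst hXY; simp
    · simp [hXY]
  have h2 : ∀ X : Cfg d L n, (lam / 2) * ∑ i : Fin n, ∑ j : Fin n, perPot d L v (X i - X j)
      = pairE (wT d L lam v) X := by
    intro X
    simp only [pairE, wT, Finset.mul_sum]
    exact Finset.sum_congr rfl fun i _ => Finset.sum_congr rfl fun j _ => by ring
  rw [Hm, hT_eq, dG_add, dG_smul, dG_smul, h1, ham, kin_eq, smul_smul]
  simp only [h2]
  push_cast
  abel

theorem grandXi_eq {v : (Fin d → ℤ) → ℝ} {ν κ lam : ℝ} (hν : 0 ≤ ν) :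
    grandXi d L (perPot d L v) ν κ lam = (XiT d L v κ ν lam : ℂ) := by
  rw [grandXi, XiT, Xi, Complex.ofReal_tsum]
  refine tsum_congr fun n => ?_
  rw [ham_eq, symProj_eq, matExp_eq, ← trace_rhoM (hT_isHermitian d L κ hν), rhoM]

theorem relZ_log {v : (Fin d → ℤ) → ℝ} {ν κ lam : ℝ} (hκ : 0 < κ) (hν : 0 < ν) (hl : 0 ≤ lam)
    (hv : ∀ x, 0 ≤ v x) :
    Complex.log (relZ d L (perPot d L v) ν κ lam)
      = ((Real.log (XiT d L v κ ν lam) - Real.log (XiT d L v κ ν 0) : ℝ) : ℂ) := by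
  have h1 : 0 < XiT d L v κ ν lam := one_pos.trans_le (XiT_ge_one d L hκ hν hl hv)
  have h0 : 0 < XiT d L v κ ν 0 := one_pos.trans_le (XiT_ge_one d L hκ hν le_rfl hv)
  rw [relZ, grandXi_eq d L hν.le, grandXi_eq d L hν.le, ← Complex.ofReal_div,
    ← Complex.ofReal_log (div_pos h1 h0).le, Real.log_div h1.ne' h0.ne']

theorem hT_one_sub (κ : ℝ) :
    (hT d L κ 1 - (κ : ℂ) • (1 : Matrix (Tor d L) (Tor d L) ℂ)).PosSemidef := by
  have := hT_sub d L κ zero_le_one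
  rwa [mul_one] at this

theorem hT_smul (κ ν : ℝ) : hT d L κ ν = (ν : ℂ) • hT d L κ 1 := by
  rw [hT_eq, hT_eq, smul_add, smul_smul, smul_smul]
  congr 2
  · push_cast; ring
  · push_cast; ring

theorem det_hT {κ : ℝ} (hκ : 0 < κ) : (hT d L κ 1).det ≠ 0 := by
  have h1 : ((κ : ℂ) • (1 : Matrix (Tor d L) (Tor d L) ℂ)).PosDef :=
    Matrix.PosDef.one.smul (by exact_mod_cast hκ)
  have h2 := h1.add_posSemidef (hT_one_sub d L κ)
  rw [add_sub_cancel] at h2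
  exact h2.det_pos.ne'

theorem Zcl_eq {v : (Fin d → ℤ) → ℝ} {κ : ℝ} (hκ : 0 < κ) :
    Zcl d L (perPot d L v) κ =
      ((partF (hT d L κ 1) (wT d L 1 v) 1 1 / partF (hT d L κ 1) (wT d L 1 v) 1 0 : ℝ) : ℂ) := by
  have hM : (-(1 / 2 : ℂ)) • lap d L + (κ : ℂ) • 1 = hT d L κ 1 := by
    rw [hT_eq]; push_cast; rw [mul_one]
  have hM' : (1 / 2 : ℂ) • lap d L - (κ : ℂ) • 1 = -hT d L κ 1 := by
    rw [← hM, neg_add, neg_smul, neg_neg, sub_eq_add_neg]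
  have hG : ((partF (hT d L κ 1) (wT d L 1 v) 1 0 : ℝ) : ℂ)
      = π ^ Fintype.card (Tor d L) * (hT d L κ 1).det⁻¹ := by
    rw [← gaussian_integral (posSemidef_of_sub hκ.le (hT_one_sub d L κ)) (det_hT d L hκ), partF]
    simp
  have hi : ∀ φ : Tor d L → ℂ, gaussWeight d L κ φ * intWeight d L (perPot d L v) φ
      = ((partF (hT d L κ 1) (wT d L 1 v) 1 0)⁻¹ *
        Real.exp (-(1 * quadF (hT d L κ 1) φ + 1 * quarF (wT d L 1 v) φ)) : ℝ) := by
    intro φ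
    have e1 : ∑ x : Tor d L, (starRingEnd ℂ) (φ x) *
        (((1 / 2 : ℂ) • lap d L - (κ : ℂ) • 1).mulVec φ x) = ((-quadF (hT d L κ 1) φ : ℝ) : ℂ) := by
      rw [hM', Complex.ofReal_neg, ← quadF_ofReal (hT_isHermitian d L κ zero_le_one), quad_eq_dot]
      simp [Matrix.neg_mulVec, dotProduct]
    have e2 : -(1 / 2 : ℂ) * ∑ x : Tor d L, ∑ y : Tor d L,
        (Complex.normSq (φ x) : ℂ) * ((perPot d L v (x - y) : ℝ) : ℂ) * (Complex.normSq (φ y) : ℂ)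
        = ((-quarF (wT d L 1 v) φ : ℝ) : ℂ) := by
      simp only [quarF, wT]
      push_cast
      rw [neg_mul]
      congr 2
      exact Finset.sum_congr rfl fun i _ => Finset.sum_congr rfl fun j _ => by ring
    rw [gaussWeight, intWeight, e1, e2, hM, Matrix.det_nonsing_inv, Ring.inverse_eq_inv, ← hG,
      mul_assoc, ← Complex.exp_add, one_mul, one_mul, Complex.ofReal_mul, Complex.ofReal_inv,
      Complex.ofReal_exp, ← Complex.ofReal_add, neg_add]
  rw [Zcl]
  simp_rw [hi]
  rw [integral_complex_ofReal, integral_const_mul, ← partF, mul_comm, ← div_eq_mul_inv]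

theorem Zcl_log {v : (Fin d → ℤ) → ℝ} {κ : ℝ} (hκ : 0 < κ) (hv : ∀ x, 0 ≤ v x) :
    Complex.log (Zcl d L (perPot d L v) κ) =
      ((Real.log (partF (hT d L κ 1) (wT d L 1 v) 1 1)
        - Real.log (partF (hT d L κ 1) (wT d L 1 v) 1 0) : ℝ) : ℂ) := by
  have h1 := partF_pos hκ (hT_one_sub d L κ) (wT_nonneg d L zero_le_one hv) one_pos zero_le_one
  have h0 := partF_pos hκ (hT_one_sub d L κ) (wT_nonneg d L zero_le_one hv) one_pos le_rfl
  rw [Zcl_eq d L hκ, ← Complex.ofReal_log (div_pos h1 h0).le, Real.log_div h1.ne' h0.ne']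

theorem trace_hT (κ : ℝ) : (hT d L κ 1).trace.re ≤ Fintype.card (Tor d L) * (d + κ) := by
  rw [Matrix.trace, Complex.re_sum, ← nsmul_eq_mul, ← Finset.card_univ]
  refine Finset.sum_le_card_nsmul _ _ _ fun x _ => ?_
  rw [Matrix.diag_apply, hT_eq, Matrix.add_apply, Matrix.smul_apply, Matrix.smul_apply,
    Matrix.one_apply_eq, Complex.add_re, smul_eq_mul, smul_eq_mul, Complex.re_ofReal_mul,
    Complex.re_ofReal_mul, Complex.one_re, mul_one, mul_one]
  have h1 : -(2 * (d : ℝ)) ≤ (lap d L x x).re := by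
    have h2 : ∀ p : Prop, 0 ≤ (if p then (1 : ℂ) else 0).re := by
      intro p; split_ifs <;> simp
    simp only [lap, Complex.sub_re, Complex.re_sum, Complex.add_re, if_true]
    have h3 : 0 ≤ ∑ j : Fin d, ((if x = x + unitVec d L j then (1 : ℂ) else 0).re
        + (if x = x - unitVec d L j then (1 : ℂ) else 0).re) :=
      Finset.sum_nonneg fun j _ => by
        refine add_nonneg ?_ ?_ <;> split_ifs <;> simp
    have h4 : (2 * (d : ℂ)).re = 2 * d := by simp
    rw [h4]
    linarith
  linarith

/-- The mean-field approximation is uniform in the size of the torus. -/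
theorem mean_field_torus {v : (Fin d → ℤ) → ℝ} {κ : ℝ} (hκ : 0 < κ) (hv : ∀ x, 0 ≤ v x)
    (hs : Summable v) {ν : ℝ} (hν : 0 < ν) (ha : 3 / 2 * (ν * ∑' x, v x) < κ) :
    |(Real.log (XiT d L v κ ν (ν ^ 2)) - Real.log (XiT d L v κ ν 0))
      - (Real.log (partF (hT d L κ 1) (wT d L 1 v) 1 1)
        - Real.log (partF (hT d L κ 1) (wT d L 1 v) 1 0))|
      ≤ (L : ℝ) ^ d * mfErr κ (∑' x, v x) (d + κ) ν := by
  have hsum := sum_perPot_le L hv hs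
  have hw : ∀ lam : ℝ, wT d L lam v = fun x y => lam * wT d L 1 v x y := by
    intro lam; funext x y; simp [wT]
  have := mean_field_bound hκ (hT_one_sub d L κ) (wT_nonneg d L zero_le_one hv)
    (tsum_nonneg hv) (fun x => ?_) (fun y => ?_) (trace_hT d L κ) hν ha
  · rw [card_Tor, ← hT_smul, ← hw, ← hw] at this
    exact_mod_cast this
  · refine le_trans (le_of_eq ?_) hsum
    simp only [wT, one_mul]
    exact (Equiv.subLeft x).sum_comp (perPot d L v)
  · refine le_trans (le_of_eq ?_) hsum
    simp only [wT, one_mul]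
    exact (Equiv.subRight y).sum_comp (perPot d L v)

end Bridge

section Limits

/-- The quantum specific relative Gibbs potential on the torus of side `n + 1`. -/
def gQ (d : ℕ) (v : (Fin d → ℤ) → ℝ) (κ ν : ℝ) (n : ℕ) : ℝ :=
  (((n + 1 : ℕ) : ℝ) ^ d)⁻¹ *
    (Real.log (XiT d (n + 1) v κ ν (ν ^ 2)) - Real.log (XiT d (n + 1) v κ ν 0))

/-- The classical specific relative Gibbs potential on the torus of side `n + 1`. -/
def gC (d : ℕ) (v : (Fin d → ℤ) → ℝ) (κ : ℝ) (n : ℕ) : ℝ :=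
  (((n + 1 : ℕ) : ℝ) ^ d)⁻¹ *
    (Real.log (partF (hT d (n + 1) κ 1) (wT d (n + 1) 1 v) 1 1)
      - Real.log (partF (hT d (n + 1) κ 1) (wT d (n + 1) 1 v) 1 0))

variable {d : ℕ} {v : (Fin d → ℤ) → ℝ} {κ : ℝ}

theorem gibbsPotSeq_succ (hκ : 0 < κ) (hv : ∀ x, 0 ≤ v x) {ν : ℝ} (hν : 0 < ν) (n : ℕ) :
    gibbsPotSeq d v ν κ (ν ^ 2) (n + 1) = (gQ d v κ ν n : ℂ) := by
  rw [gibbsPotSeq, dif_neg (Nat.succ_ne_zero n), relZ_log d (n + 1) hκ hν (sq_nonneg ν) hv, gQ]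
  push_cast
  rfl

theorem gibbsPotClSeq_succ (hκ : 0 < κ) (hv : ∀ x, 0 ≤ v x) (n : ℕ) :
    gibbsPotClSeq d v κ (n + 1) = (gC d v κ n : ℂ) := by
  rw [gibbsPotClSeq, dif_neg (Nat.succ_ne_zero n), Zcl_log d (n + 1) hκ hv, gC]
  push_cast
  rfl

theorem abs_gQ_sub_gC (hκ : 0 < κ) (hv : ∀ x, 0 ≤ v x) (hs : Summable v) {ν : ℝ} (hν : 0 < ν)
    (ha : 3 / 2 * (ν * ∑' x, v x) < κ) (n : ℕ) :
    |gQ d v κ ν n - gC d v κ n| ≤ mfErr κ (∑' x, v x) (d + κ) ν := by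
  have h := mean_field_torus d (n + 1) hκ hv hs hν ha
  have hp : 0 < (((n + 1 : ℕ) : ℝ) ^ d) := by positivity
  rw [gQ, gC, ← mul_sub, abs_mul, abs_of_pos (inv_pos.mpr hp), inv_mul_le_iff₀ hp]
  exact h

theorem exists_gQ_limit (hκ : 0 < κ) (hv : ∀ x, 0 ≤ v x) (hp : IsPosTypeZ d v) (hs : Summable v)
    {ν : ℝ} (hν : 0 < ν) : ∃ l, Tendsto (gQ d v κ ν) atTop (𝓝 l) := by
  obtain ⟨l1, h1⟩ := exists_pressure d hκ hν (sq_nonneg ν) hv hp hs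
  obtain ⟨l0, h0⟩ := exists_pressure d hκ hν le_rfl hv hp hs
  refine ⟨l1 - l0, (h1.sub h0).congr fun n => ?_⟩
  rw [gQ, mul_sub]

/-- If `a ν` converges for every small `ν > 0`, and `a ν` is uniformly `δ ν`-close to `b` with
`δ ν → 0`, then `b` converges and its limit is that of the limits of `a ν`. -/
theorem exchange_limits {a : ℝ → ℕ → ℝ} {b : ℕ → ℝ} {l δ : ℝ → ℝ}
    (ha : ∀ ν, 0 < ν → Tendsto (a ν) atTop (𝓝 (l ν)))
    (hab : ∀ᶠ ν in 𝓝[>] (0 : ℝ), ∀ n, |a ν n - b n| ≤ δ ν) (hδ : Tendsto δ (𝓝[>] 0) (𝓝 0)) :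
    ∃ m, Tendsto b atTop (𝓝 m) ∧ Tendsto l (𝓝[>] 0) (𝓝 m) := by
  have hpos : ∀ᶠ ν in 𝓝[>] (0 : ℝ), 0 < ν := eventually_mem_nhdsWithin
  have hc : CauchySeq b := by
    rw [Metric.cauchySeq_iff]
    intro ε hε
    obtain ⟨ν, hν, h1, h2⟩ :=
      (hpos.and (hab.and (hδ.eventually_lt_const (show (0 : ℝ) < ε / 3 by positivity)))).exists
    obtain ⟨N, hN⟩ := Metric.cauchySeq_iff.mp (ha ν hν).cauchySeq (ε / 3) (by positivity)
    refine ⟨N, fun m hm n hn => ?_⟩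
    have h3 := hN m hm n hn
    have h4 := h1 m
    have h5 := h1 n
    rw [Real.dist_eq] at h3 ⊢
    rw [abs_le] at h4 h5
    rw [abs_lt] at h3 ⊢
    constructor <;> linarith
  obtain ⟨m, hm⟩ := cauchySeq_tendsto_of_complete hc
  refine ⟨m, hm, ?_⟩
  rw [tendsto_iff_dist_tendsto_zero]
  refine squeeze_zero' (Eventually.of_forall fun _ => dist_nonneg) ?_ hδ
  filter_upwards [hpos, hab] with ν hν h
  rw [Real.dist_eq]
  exact le_of_tendsto ((ha ν hν).sub hm).abs (Eventually.of_forall h)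

end Limits
end BoseGas

/-- **Infinite-volume mean-field limit of the Gibbs potential** (Theorem 1.6 (i)):
for `v ≥ 0` of positive type with `‖v‖_{ℓ¹}` sufficiently small depending on `κ`,
the limits `g^{ν,κ,ν²,∞} = lim_{L→∞} g^{ν,κ,ν²,L}` (for each `ν ∈ (0,1/κ]`) and
`lim_{L→∞} g^{cl,L}` exist and `lim_{ν→0⁺} lim_{L→∞} g^{ν,κ,ν²,L} = lim_{L→∞} g^{cl,L}`. -/
theorem infinite_volume_mean_field_gibbs_potential
    (d : ℕ) (hd : 1 ≤ d) (κ : ℝ) (hκ : 0 < κ) :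
    ∃ ε : ℝ, 0 < ε ∧
      ∀ v : (Fin d → ℤ) → ℝ, (∀ x, 0 ≤ v x) → IsPosTypeZ d v →
        Summable (fun x : Fin d → ℤ => |v x|) → (∑' (x : Fin d → ℤ), |v x|) ≤ ε →
        ∃ ginf : ℝ → ℂ, ∃ gclinf : ℂ,
          (∀ ν : ℝ, 0 < ν → ν ≤ 1 / κ →
            Tendsto (gibbsPotSeq d v ν κ (ν ^ 2)) atTop (𝓝 (ginf ν))) ∧
          Tendsto (gibbsPotClSeq d v κ) atTop (𝓝 gclinf) ∧
          Tendsto ginf (𝓝[>] (0 : ℝ)) (𝓝 gclinf) := by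
  refine ⟨1, one_pos, fun v hv hp hs' _ => ?_⟩
  have hs : Summable v := by simpa only [abs_of_nonneg (hv _)] using hs'
  choose l hl using fun (ν : ℝ) (hν : 0 < ν) => BoseGas.exists_gQ_limit hκ hv hp hs hν
  have hl' : ∀ ν (hν : 0 < ν), Tendsto (BoseGas.gQ d v κ ν) atTop
      (𝓝 ((fun ν => if h : 0 < ν then l ν h else 0) ν)) := by
    intro ν hν
    simp only [hν, dif_pos]
    exact hl ν hν
  -- the comparison with the classical system holds once `ν` is small
  have hsmall : ∀ᶠ ν in 𝓝[>] (0 : ℝ), 3 / 2 * (ν * ∑' x, v x) < κ := by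
    have hcont : Continuous fun ν : ℝ => 3 / 2 * (ν * ∑' x, v x) := by fun_prop
    have ht := hcont.tendsto 0
    rw [zero_mul, mul_zero] at ht
    exact (ht.mono_left nhdsWithin_le_nhds).eventually_lt_const hκ
  obtain ⟨m, hm, hlm⟩ := BoseGas.exchange_limits hl'
    (b := BoseGas.gC d v κ) (δ := BoseGas.mfErr κ (∑' x, v x) (d + κ))
    (by
      filter_upwards [hsmall, eventually_mem_nhdsWithin] with ν h1 h2 n
      exact BoseGas.abs_gQ_sub_gC hκ hv hs h2 h1 n)
    (BoseGas.tendsto_mfErr _ _ _)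
  refine ⟨fun ν => (((fun ν => if h : 0 < ν then l ν h else 0) ν : ℝ) : ℂ), m,
    fun ν hν _ => ?_, ?_, ?_⟩
  · rw [← tendsto_add_atTop_iff_nat 1]
    simp only [BoseGas.gibbsPotSeq_succ hκ hv hν]
    exact (Complex.continuous_ofReal.tendsto _).comp (hl' ν hν)
  · rw [← tendsto_add_atTop_iff_nat 1]
    simp only [BoseGas.gibbsPotClSeq_succ hκ hv]
    exact (Complex.continuous_ofReal.tendsto _).comp hm
  · exact (Complex.continuous_ofReal.tendsto _).comp hlm
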